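/- Let Ω ⊂ ℝ^d be a bounded open set with Lipschitz boundary, let W : Ω×ℝ^{m×d} → [0,+∞] satisfy Assumption 1, and let g ∈ C_c^1(ℝ^d)^m. If ∫_Ω W(x, s Dg(x)) dx < +∞ for some s > 1, then for any u ∈ g + W^{1,p}_0(Ω)^m there exists a sequence u_n ∈ g + C_c^∞(Ω)^m such that u_n → u strongly in W^{1,p}(Ω)^m and ∫_Ω W(x, Du_n(x)) dx → ∫_Ω W(x, Du(x)) dx. -/

import Mathlib

open MeasureTheory Metric Set Filter
open scoped ENNReal Topology NNReal RealInnerProductSpace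

noncomputable section

/-- `ℝ^d` as a Euclidean space. -/
abbrev Euc (d : ℕ) := EuclideanSpace ℝ (Fin d)

/-- The space `ℝ^{m×d}` of `m×d` matrices. -/
abbrev Mat (m d : ℕ) := Fin m → Fin d → ℝ

/-- Frobenius (Euclidean) norm of an `m×d` matrix. -/
def frobNorm {m d : ℕ} (ξ : Mat m d) : ℝ :=
  Real.sqrt (∑ i, ∑ j, ξ i j ^ 2)

/-- `φ ∈ C_c^∞(Ω)^m`: a smooth function with compact support contained in `Ω`. -/
def IsCcSmooth {d m : ℕ} (Ω : Set (Euc d)) (φ : Euc d → Euc m) : Prop :=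
  ContDiff ℝ (⊤ : ℕ∞) φ ∧ HasCompactSupport φ ∧ tsupport φ ⊆ Ω

/-- The (classical) Jacobian matrix of a differentiable map. -/
def smoothJac {d m : ℕ} (φ : Euc d → Euc m) (x : Euc d) : Mat m d :=
  fun i j => fderiv ℝ φ x (EuclideanSpace.single j 1) i

/-- `Du` is the weak Jacobian of `u` on `Ω` (integration by parts against test functions). -/
def IsWeakJacobianOn {d m : ℕ} (Ω : Set (Euc d)) (u : Euc d → Euc m)
    (Du : Euc d → Mat m d) : Prop :=
  ∀ φ : Euc d → ℝ, ContDiff ℝ (⊤ : ℕ∞) φ → HasCompactSupport φ → tsupport φ ⊆ Ω →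
    ∀ (i : Fin m) (j : Fin d),
      ∫ x in Ω, u x i * fderiv ℝ φ x (EuclideanSpace.single j 1) =
        - ∫ x in Ω, Du x i j * φ x

/-- `u ∈ W^{1,p}(Ω)^m` with weak Jacobian `Du`. -/
def MemW1p {d m : ℕ} (Ω : Set (Euc d)) (p : ℝ≥0∞) (u : Euc d → Euc m)
    (Du : Euc d → Mat m d) : Prop :=
  MemLp u p (volume.restrict Ω) ∧ MemLp Du p (volume.restrict Ω) ∧ IsWeakJacobianOn Ω u Du

/-- Strong convergence `uₙ → v` in `W^{1,p}(Ω)^m` (together with the Jacobians). -/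
def TendstoW1p {d m : ℕ} (Ω : Set (Euc d)) (p : ℝ≥0∞)
    (u : ℕ → Euc d → Euc m) (Du : ℕ → Euc d → Mat m d)
    (v : Euc d → Euc m) (Dv : Euc d → Mat m d) : Prop :=
  Tendsto (fun n => eLpNorm (u n - v) p (volume.restrict Ω)) atTop (𝓝 0) ∧
  Tendsto (fun n => eLpNorm (Du n - Dv) p (volume.restrict Ω)) atTop (𝓝 0)

/-- `v ∈ W_0^{1,p}(Ω)^m`, i.e. `v ∈ W^{1,p}` and `v` is a `W^{1,p}`-limit of functions in
`C_c^∞(Ω)^m`. -/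
def MemW1p0 {d m : ℕ} (Ω : Set (Euc d)) (p : ℝ≥0∞) (v : Euc d → Euc m)
    (Dv : Euc d → Mat m d) : Prop :=
  MemW1p Ω p v Dv ∧
  ∃ w : ℕ → Euc d → Euc m, (∀ n, IsCcSmooth Ω (w n)) ∧
    TendstoW1p Ω p w (fun n => smoothJac (w n)) v Dv

/-- `Ω` has Lipschitz boundary: near each boundary point, `Ω` is the subgraph of a Lipschitz
function over a hyperplane. -/
def HasLipschitzBoundary {d : ℕ} (Ω : Set (Euc d)) : Prop :=
  ∀ x ∈ frontier Ω, ∃ (ν : Euc d) (r L : ℝ) (ψ : Euc d → ℝ),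
    ‖ν‖ = 1 ∧ 0 < r ∧ 0 ≤ L ∧ LipschitzWith (Real.toNNReal L) ψ ∧
    ∀ y ∈ ball x r, (y ∈ Ω ↔ ⟪y, ν⟫ < ψ (y - ⟪y, ν⟫ • ν))

/-- Convexity of a `[0,+∞]`-valued function. -/
def ConvexENNReal {m d : ℕ} (f : Mat m d → ℝ≥0∞) : Prop :=
  ∀ ξ η : Mat m d, ∀ t : ℝ, 0 ≤ t → t ≤ 1 →
    f (t • ξ + (1 - t) • η) ≤ ENNReal.ofReal t * f ξ + ENNReal.ofReal (1 - t) * f η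

/-- The convex biconjugate `f**` of a `[0,+∞]`-valued function: the supremum of all affine
minorants of `f`. -/
def biconj {m d : ℕ} (f : Mat m d → ℝ≥0∞) (ξ : Mat m d) : ℝ≥0∞ :=
  ⨆ (L : Mat m d →ₗ[ℝ] ℝ) (c : ℝ) (_ : ∀ η, ENNReal.ofReal (L η + c) ≤ f η),
    ENNReal.ofReal (L ξ + c)

/-- Assumption (a4): the local stability estimate
`W(x,ξ) ≤ C_M (ess inf_{y ∈ B̄_δ(x) ∩ Ω} W(y,·))**(ξ) + α_M(x)` for `|ξ| ≤ M δ^{-d/p}`. -/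
def StabilityEstimate {d m : ℕ} (Ω : Set (Euc d)) (p : ℝ)
    (W : Euc d → Mat m d → ℝ≥0∞) : Prop :=
  ∀ M : ℝ, 1 < M → ∃ (CM δ₀ : ℝ) (αM : Euc d → ℝ≥0∞),
    0 < CM ∧ 0 < δ₀ ∧ (∫⁻ x in Ω, αM x) < ⊤ ∧
    ∀ δ : ℝ, 0 < δ → δ < δ₀ → ∀ x ∈ Ω, ∀ ξ : Mat m d,
      frobNorm ξ ≤ M * δ ^ (-(d : ℝ) / p) →
      W x ξ ≤ ENNReal.ofReal CM *
          biconj (fun η => essInf (fun y => W y η) (volume.restrict (closedBall x δ ∩ Ω))) ξ +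
        αM x

/-- Assumption 1 of the paper (items (a1)–(a4)) for the integrand `W` on `Ω`, with lower
growth exponent `p`. -/
def Assumption1 {d m : ℕ} (Ω : Set (Euc d)) (p : ℝ) (W : Euc d → Mat m d → ℝ≥0∞) : Prop :=
  Measurable (Function.uncurry W) ∧
  (∀ᵐ x ∂volume.restrict Ω, ConvexENNReal (W x) ∧ LowerSemicontinuous (W x)) ∧
  (∀ᵐ x ∂volume.restrict Ω, ∀ ξ, ENNReal.ofReal (frobNorm ξ ^ p) ≤ W x ξ) ∧
  ((p ≤ (d : ℝ) - 1 →
      ∃ (C q : ℝ) (α : Euc d → ℝ≥0∞), 0 < C ∧ p < q ∧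
        (p < (d : ℝ) - 1 → q ≤ ((d : ℝ) - 1) * p / ((d : ℝ) - 1 - p)) ∧
        (∫⁻ x in Ω, α x) < ⊤ ∧
        ∀ᵐ x ∂volume.restrict Ω, ∀ ξ,
          W x ξ ≤ ENNReal.ofReal (C * frobNorm ξ ^ q) + α x) ∧
    ((d : ℝ) - 1 < p →
      ∃ θ : ℝ, 0 < θ ∧
        (∫⁻ x in Ω, ⨆ ξ ∈ {ξ : Mat m d | frobNorm ξ ≤ θ}, W x ξ) < ⊤)) ∧
  StabilityEstimate Ω p W

/-!
Write `u = g + v`. The approximants are `g + t • U` with `t < 1`, where `U` is obtained from `v` by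
an inward transport at a small scale `ε`, which creates compact support in `Ω`, followed by
mollification. The transport freezes all coordinates except on thin slabs chosen so that they carry
little of the energy of `v`. Off the slabs `DU` differs from a mean of `Dv` over a ball of radius
`ε` by a uniformly small error; on the slabs, which have codimension one, the error is governed by
the `(d - 1)`-dimensional growth condition (a3). Jensen's inequality for the biconjugate of the
local essential infimum, combined with (a4), bounds `W` at the mean of `Du` by the mean of
`W(·, Du)`. Convexity, with room left by `t < 1` and `s > 1`, combines these bounds into an almost
equiintegrable majorant of `W(·, Dg + t DU)`. The upper bound on the energies follows from the
reverse Fatou inequality, the lower bound from Fatou's lemma and lower semicontinuity; finally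
`t → 1`.
-/

/-! ### Convex integrands -/

theorem frobNorm_le_mul_norm {m d : ℕ} (ξ : Mat m d) : frobNorm ξ ≤ (m * d + 1) * ‖ξ‖ := by
  have entry_sq_le (i : Fin m) (j : Fin d) : ξ i j ^ 2 ≤ ‖ξ‖ ^ 2 :=
    sq_le_sq' (neg_le_of_abs_le ((norm_le_pi_norm (ξ i) j).trans (norm_le_pi_norm ξ i)))
      (le_of_abs_le ((norm_le_pi_norm (ξ i) j).trans (norm_le_pi_norm ξ i)))
  refine Real.sqrt_le_iff.2 ⟨by positivity, ?_⟩
  calc ∑ i, ∑ j, ξ i j ^ 2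
      ≤ ∑ _i : Fin m, ∑ _j : Fin d, ‖ξ‖ ^ 2 :=
        Finset.sum_le_sum fun i _ => Finset.sum_le_sum fun j _ => entry_sq_le i j
    _ = m * d * ‖ξ‖ ^ 2 := by simp [mul_assoc]
    _ ≤ (m * d + 1) ^ 2 * ‖ξ‖ ^ 2 := by
        gcongr
        nlinarith [show (0 : ℝ) ≤ m * d by positivity]
    _ = ((m * d + 1) * ‖ξ‖) ^ 2 := (mul_pow _ _ 2).symm

theorem continuous_frobNorm {m d : ℕ} : Continuous (frobNorm : Mat m d → ℝ) := by
  unfold frobNorm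
  fun_prop

namespace ConvexENNReal

variable {m d : ℕ} {f : Mat m d → ℝ≥0∞}

theorem le_add (hf : ConvexENNReal f) (ξ η : Mat m d) {t : ℝ} (ht0 : 0 ≤ t) (ht1 : t ≤ 1) :
    f (t • ξ + (1 - t) • η) ≤ f ξ + f η :=
  (hf ξ η t ht0 ht1).trans <| add_le_add
    (mul_le_of_le_one_left zero_le (ENNReal.ofReal_le_one.2 ht1))
    (mul_le_of_le_one_left zero_le (ENNReal.ofReal_le_one.2 (by linarith)))

theorem le_add_add (hf : ConvexENNReal f) (ξ η ζ : Mat m d) {t r : ℝ} (ht0 : 0 ≤ t) (ht1 : t ≤ 1)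
    (hr0 : 0 ≤ r) (hr1 : r ≤ 1) :
    f (t • ξ + (1 - t) • (r • η + (1 - r) • ζ)) ≤ f ξ + f η + f ζ := by
  rw [add_assoc]
  exact (hf.le_add _ _ ht0 ht1).trans (by gcongr; exact hf.le_add _ _ hr0 hr1)

theorem eventually_le_add (hf : ConvexENNReal f) {t : ℝ} (ht0 : 0 ≤ t) (ht1 : t < 1)
    {η : Mat m d} {B : ℝ≥0∞} (hB : ∀ᶠ ζ in 𝓝 η, f ζ ≤ B) (ξ : Mat m d) :
    ∀ᶠ ζ in 𝓝 (t • ξ + (1 - t) • η), f ζ ≤ f ξ + B := by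
  have h1t : (1 - t) ≠ 0 := by linarith
  have hlim : Tendsto (fun ζ => (1 - t)⁻¹ • (ζ - t • ξ)) (𝓝 (t • ξ + (1 - t) • η)) (𝓝 η) := by
    have hcont : Continuous fun ζ : Mat m d => (1 - t)⁻¹ • (ζ - t • ξ) := by fun_prop
    simpa [smul_smul, h1t] using hcont.tendsto (t • ξ + (1 - t) • η)
  filter_upwards [hlim.eventually hB] with ζ hζ
  have hζ_eq : ζ = t • ξ + (1 - t) • (1 - t)⁻¹ • (ζ - t • ξ) := by
    rw [smul_inv_smul₀ h1t]; abel
  rw [hζ_eq]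
  exact (hf.le_add _ _ ht0 ht1.le).trans (by gcongr)

theorem upperSemicontinuousAt (hf : ConvexENNReal f) {ξ : Mat m d} {B : ℝ≥0∞} (hB : B ≠ ⊤)
    (h : ∀ᶠ η in 𝓝 ξ, f η ≤ B) : UpperSemicontinuousAt f ξ := by
  intro c hc
  have hlim : Tendsto (fun t : ℝ => f ξ + ENNReal.ofReal t * B) (𝓝[>] 0) (𝓝 (f ξ)) := by
    have hmul : Tendsto (fun t : ℝ => ENNReal.ofReal t * B) (𝓝 0) (𝓝 0) := by
      simpa using ENNReal.Tendsto.mul_const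
        (ENNReal.tendsto_ofReal (tendsto_id (x := 𝓝 (0 : ℝ)))) (.inr hB)
    simpa using tendsto_const_nhds.add (hmul.mono_left nhdsWithin_le_nhds)
  obtain ⟨t, htc, ht0, ht1⟩ :=
    ((hlim.eventually_lt_const hc).and (Ioo_mem_nhdsGT one_pos)).exists
  have hdil : Tendsto (fun η => ξ + t⁻¹ • (η - ξ)) (𝓝 ξ) (𝓝 ξ) := by
    have hcont : Continuous fun η : Mat m d => ξ + t⁻¹ • (η - ξ) := by fun_prop
    simpa using hcont.tendsto ξ
  filter_upwards [hdil.eventually h] with η hη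
  have hη_eq : η = (1 - t) • ξ + (1 - (1 - t)) • (ξ + t⁻¹ • (η - ξ)) := by
    rw [sub_sub_cancel, smul_add, smul_inv_smul₀ ht0.ne', sub_smul, one_smul]; abel
  rw [hη_eq]
  refine (hf _ _ _ (by linarith) (by linarith)).trans_lt (lt_of_le_of_lt ?_ htc)
  rw [sub_sub_cancel]
  gcongr
  exact mul_le_of_le_one_left zero_le (ENNReal.ofReal_le_one.2 (by linarith))

theorem ofReal_affine_le_of_dense (hf : ConvexENNReal f) {B : ℝ≥0} (hB : ∀ᶠ ξ in 𝓝 0, f ξ ≤ B)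
    {D : Set (Mat m d)} (hD : Dense D) (L : Mat m d →ₗ[ℝ] ℝ) (c : ℝ)
    (h : ∀ η ∈ D, ENNReal.ofReal (L η + c) ≤ f η) (η : Mat m d) :
    ENNReal.ofReal (L η + c) ≤ f η := by
  rcases eq_or_ne (f η) ⊤ with hη | hη
  · simp [hη]
  have hL : Continuous fun ζ => ENNReal.ofReal (L ζ + c) :=
    ENNReal.continuous_ofReal.comp (L.continuous_of_finiteDimensional.add continuous_const)
  -- Shrinking `η` towards `0` lands in the region where `f` is upper semicontinuous.
  have hshrink : ∀ t ∈ Ioo (0 : ℝ) 1, ENNReal.ofReal (L (t • η) + c) ≤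
      ENNReal.ofReal t * f η + ENNReal.ofReal (1 - t) * f 0 := by
    rintro t ⟨ht0, ht1⟩
    have hbdd : ∀ᶠ ζ in 𝓝 (t • η), f ζ ≤ f η + B := by
      simpa using hf.eventually_le_add ht0.le ht1 hB η
    have husc := hf.upperSemicontinuousAt (ENNReal.add_ne_top.2 ⟨hη, ENNReal.coe_ne_top⟩) hbdd
    have hle : ENNReal.ofReal (L (t • η) + c) ≤ f (t • η) := by
      by_contra! hlt
      obtain ⟨b, hfb, hbL⟩ := exists_between hlt
      obtain ⟨ζ, ⟨hζ, hζ'⟩, hζD⟩ := mem_closure_iff_nhds.1 (hD (t • η)) _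
        ((husc b hfb).and (hL.continuousAt.eventually_const_lt hbL))
      exact ((hζ.trans hζ').trans_le (h ζ hζD)).false
    exact hle.trans (by simpa using hf η 0 t ht0.le ht1.le)
  have hlhs : Tendsto (fun t : ℝ => ENNReal.ofReal (L (t • η) + c)) (𝓝 1)
      (𝓝 (ENNReal.ofReal (L η + c))) := by
    simpa [Function.comp_def] using
      (hL.comp (continuous_id.smul (continuous_const (y := η)))).tendsto (1 : ℝ)
  have hrhs : Tendsto (fun t : ℝ => ENNReal.ofReal t * f η + ENNReal.ofReal (1 - t) * f 0) (𝓝 1)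
      (𝓝 (f η)) := by
    have hf0 : f 0 ≠ ⊤ := (hB.self_of_nhds.trans_lt ENNReal.coe_lt_top).ne
    have h1 : Tendsto (fun t : ℝ => 1 - t) (𝓝 1) (𝓝 0) := by
      simpa using (continuous_sub_left (1 : ℝ)).tendsto 1
    simpa using (ENNReal.Tendsto.mul_const (ENNReal.tendsto_ofReal tendsto_id) (.inr hη)).add
      (ENNReal.Tendsto.mul_const (ENNReal.tendsto_ofReal h1) (.inr hf0))
  exact le_of_tendsto_of_tendsto (hlhs.mono_left nhdsWithin_le_nhds)
    (hrhs.mono_left nhdsWithin_le_nhds)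
    (eventually_of_mem (Ioo_mem_nhdsLT one_pos) hshrink)

theorem le_smul_add (hf : ConvexENNReal f) (b : Mat m d) {s : ℝ} (hs : 1 < s) :
    f b ≤ f (s • b) + f 0 := by
  have hs0 : 0 < s := one_pos.trans hs
  simpa [smul_smul, hs0.ne'] using
    hf.le_add (s • b) 0 (inv_nonneg.2 hs0.le) (inv_le_one_of_one_le₀ hs.le)

theorem apply_add_smul_le (hf : ConvexENNReal f) {s t : ℝ} (hs : 1 < s) (ht0 : 0 ≤ t) (ht1 : t < 1)
    (b ξ ζ : Mat m d) :
    f (b + t • ξ) ≤ f ζ + f (s • b) + f ((t / ((1 - t) * (1 - s⁻¹))) • (b + ξ - ζ)) := by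
  have hs0 : 0 < s := one_pos.trans hs
  have hs1 : s⁻¹ < 1 := inv_lt_one_of_one_lt₀ hs
  have hne : 1 - s⁻¹ ≠ 0 := by linarith
  have hne' : 1 - t ≠ 0 := by linarith
  have hdecomp : b + t • ξ = t • ζ + (1 - t) • (s⁻¹ • s • b +
      (1 - s⁻¹) • (t / ((1 - t) * (1 - s⁻¹))) • (b + ξ - ζ)) := by
    have hmul : (1 - t) * ((1 - s⁻¹) * (t / ((1 - t) * (1 - s⁻¹)))) = t := by
      rw [← mul_assoc, mul_div_cancel₀ _ (mul_ne_zero hne' hne)]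
    rw [inv_smul_smul₀ hs0.ne', smul_add, smul_smul (1 - s⁻¹), smul_smul (1 - t), hmul]
    module
  rw [hdecomp]
  exact hf.le_add_add _ _ _ ht0 ht1.le (inv_nonneg.2 hs0.le) hs1.le

theorem upperSemicontinuousAt_add_smul (hf : ConvexENNReal f) {s t : ℝ} (hs : 1 < s) (ht0 : 0 ≤ t)
    (ht1 : t < 1) {B : ℝ≥0∞} (hB : B ≠ ⊤) (h0 : ∀ᶠ ξ in 𝓝 0, f ξ ≤ B) {b ξ : Mat m d}
    (hb : f (s • b) ≠ ⊤) (hbξ : f (b + ξ) ≠ ⊤) : UpperSemicontinuousAt f (b + t • ξ) := by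
  have hnear : ∀ᶠ ζ in 𝓝 b, f ζ ≤ f (s • b) + B := by
    have hs0 : 0 < s := one_pos.trans hs
    simpa [smul_smul, hs0.ne'] using
      hf.eventually_le_add (inv_nonneg.2 hs0.le) (inv_lt_one_of_one_lt₀ hs) h0 (s • b)
  have hdecomp : t • (b + ξ) + (1 - t) • b = b + t • ξ := by module
  exact hf.upperSemicontinuousAt (ENNReal.add_ne_top.2 ⟨hbξ, ENNReal.add_ne_top.2 ⟨hb, hB⟩⟩)
    (hdecomp ▸ hf.eventually_le_add ht0 ht1 hnear (b + ξ))

end ConvexENNReal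

theorem ae_essInf_restrict_closedBall_le {X : Type*} [PseudoMetricSpace X]
    [TopologicalSpace.SeparableSpace X] [MeasurableSpace X] [OpensMeasurableSpace X]
    (μ : Measure X) (f : X → ℝ≥0∞) {δ : ℝ} (hδ : 0 < δ) :
    ∀ᵐ x ∂μ, essInf f (μ.restrict (closedBall x δ)) ≤ f x := by
  obtain ⟨D, hDc, hD⟩ := TopologicalSpace.exists_countable_dense X
  have hsmall : ∀ᵐ x ∂μ, ∀ y ∈ D, x ∈ ball y (δ / 2) →
      essInf f (μ.restrict (ball y (δ / 2))) ≤ f x :=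
    (ae_ball_iff hDc).2 fun y _ =>
      (ae_restrict_iff' measurableSet_ball).1 (ae_essInf_le (μ := μ.restrict (ball y (δ / 2))))
  filter_upwards [hsmall] with x hx
  obtain ⟨y, hyD, hxy⟩ := hD.exists_dist_lt x (half_pos hδ)
  have hsub : ball y (δ / 2) ⊆ closedBall x δ :=
    (ball_subset_ball' (by rw [dist_comm]; linarith)).trans ball_subset_closedBall
  exact (essInf_antitone_measure
    (Measure.absolutelyContinuous_of_le (Measure.restrict_mono_set μ hsub))).trans (hx y hyD hxy)

/-- The function `η ↦ ess inf_{y ∈ B̄_δ(x) ∩ Ω} W(y, η)` whose biconjugate enters (a4). -/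
def localEssInf {d m : ℕ} (Ω : Set (Euc d)) (W : Euc d → Mat m d → ℝ≥0∞) (x : Euc d) (δ : ℝ)
    (η : Mat m d) : ℝ≥0∞ :=
  essInf (fun y => W y η) (volume.restrict (closedBall x δ ∩ Ω))

/-- The integral of `V` against a sub-probability density `k` on `Ω`, the missing mass being put
at the value `ζ`. In the proof `V` is a gradient extended by the constant `ζ` outside `Ω`. -/
def kernelMean {d m : ℕ} (Ω : Set (Euc d)) (k : Euc d → ℝ) (V : Euc d → Mat m d) (ζ : Mat m d) :
    Mat m d :=
  (∫ z in Ω, k z • V z) + (1 - ∫ z in Ω, k z) • ζ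

section Jensen

variable {d m : ℕ} {Ω : Set (Euc d)} {W : Euc d → Mat m d → ℝ≥0∞}

theorem ae_localEssInf_le {D : Set (Mat m d)} (hD : D.Countable) {δ : ℝ} (hδ : 0 < δ) :
    ∀ᵐ x ∂volume.restrict Ω, ∀ η ∈ D, localEssInf Ω W x δ η ≤ W x η := by
  refine (ae_ball_iff hD).2 fun η _ => ?_
  filter_upwards [ae_essInf_restrict_closedBall_le (volume.restrict Ω) (W · η) hδ] with x hx
  rwa [Measure.restrict_restrict measurableSet_closedBall] at hx

theorem ae_mem_closedBall_localEssInf_le {D : Set (Mat m d)} (hD : D.Countable) (x : Euc d)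
    (δ : ℝ) :
    ∀ᵐ y ∂volume.restrict Ω, y ∈ closedBall x δ → ∀ η ∈ D, localEssInf Ω W x δ η ≤ W y η := by
  rw [← ae_restrict_iff' measurableSet_closedBall,
    Measure.restrict_restrict measurableSet_closedBall]
  exact (ae_ball_iff hD).2 fun η _ => ae_essInf_le

theorem ofReal_integral_le_lintegral_ofReal {X : Type*} [MeasurableSpace X] {μ : Measure X}
    {f : X → ℝ} (hf : Integrable f μ) :
    ENNReal.ofReal (∫ x, f x ∂μ) ≤ ∫⁻ x, ENNReal.ofReal (f x) ∂μ := by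
  rw [integral_eq_lintegral_pos_part_sub_lintegral_neg_part hf]
  exact (ENNReal.ofReal_le_ofReal (sub_le_self _ ENNReal.toReal_nonneg)).trans
    ENNReal.ofReal_toReal_le

theorem affine_kernelMean {k : Euc d → ℝ} {V : Euc d → Mat m d} (hk : IntegrableOn k Ω)
    (hkV : IntegrableOn (fun z => k z • V z) Ω) (L : Mat m d →ₗ[ℝ] ℝ) (c : ℝ) (ζ : Mat m d) :
    IntegrableOn (fun z => k z * (L (V z) + c)) Ω ∧
      L (kernelMean Ω k V ζ) + c =
        (∫ z in Ω, k z * (L (V z) + c)) + (1 - ∫ z in Ω, k z) * (L ζ + c) := by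
  let L' : Mat m d →L[ℝ] ℝ := L.toContinuousLinearMap
  have hsplit : (fun z => k z * (L (V z) + c)) = fun z => L' (k z • V z) + k z * c := by
    ext z
    simp only [map_smul, smul_eq_mul, L', LinearMap.coe_toContinuousLinearMap']
    ring
  have hL : L (∫ z in Ω, k z • V z) = ∫ z in Ω, L' (k z • V z) := (L'.integral_comp_comm hkV).symm
  rw [hsplit, integral_add (L'.integrable_comp hkV) (hk.mul_const c), integral_mul_const, ← hL]
  refine ⟨(L'.integrable_comp hkV).add (hk.mul_const c), ?_⟩
  simp only [kernelMean, map_add, map_smul, smul_eq_mul]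
  ring

/-- Jensen's inequality for `biconj (localEssInf …)`. The exceptional set of points `x` does not
depend on the kernel: `W(x, ·)` dominates every affine minorant of `localEssInf Ω W x δ` on a
countable dense set, hence everywhere by convexity. -/
theorem ae_biconj_kernelMean_le (hconv : ∀ᵐ x ∂volume.restrict Ω, ConvexENNReal (W x))
    (hbdd : ∀ᵐ x ∂volume.restrict Ω, ∃ B : ℝ≥0, ∀ᶠ ξ in 𝓝 0, W x ξ ≤ B) {δ : ℝ} (hδ : 0 < δ) :
    ∀ᵐ x ∂volume.restrict Ω, ∀ (k : Euc d → ℝ) (V : Euc d → Mat m d), (∀ z, 0 ≤ k z) →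
      (∀ z ∉ closedBall x δ, k z = 0) → IntegrableOn k Ω → ∫ z in Ω, k z ≤ 1 →
      IntegrableOn (fun z => k z • V z) Ω → ∀ ζ,
      biconj (localEssInf Ω W x δ) (kernelMean Ω k V ζ) ≤
        (∫⁻ z in Ω, ENNReal.ofReal (k z) * W z (V z)) + W x ζ := by
  obtain ⟨D, hDc, hDd⟩ := TopologicalSpace.exists_countable_dense (Mat m d)
  filter_upwards [ae_localEssInf_le hDc hδ, hconv, hbdd]
    with x hx hcx ⟨_, hbx⟩ k V hk0 hk_supp hk hk1 hkV ζ
  refine iSup_le fun L => iSup_le fun c => iSup_le fun hLc => ?_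
  have hxζ : ENNReal.ofReal (L ζ + c) ≤ W x ζ :=
    hcx.ofReal_affine_le_of_dense hbx hDd L c (fun η hη => (hLc η).trans (hx η hη)) ζ
  have hball : ∀ᵐ y ∂volume.restrict Ω, y ∈ closedBall x δ →
      ∀ η, ENNReal.ofReal (L η + c) ≤ W y η := by
    filter_upwards [ae_mem_closedBall_localEssInf_le hDc x δ, hconv, hbdd]
      with y hy hcy ⟨_, hby⟩ hyx
    exact hcy.ofReal_affine_le_of_dense hby hDd L c fun η hη => (hLc η).trans (hy hyx η hη)
  obtain ⟨hint, haffine⟩ := affine_kernelMean hk hkV L c ζ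
  rw [haffine]
  refine ENNReal.ofReal_add_le.trans (add_le_add ?_ ?_)
  · refine (ofReal_integral_le_lintegral_ofReal hint).trans (lintegral_mono_ae ?_)
    filter_upwards [hball] with z hz
    by_cases hzx : z ∈ closedBall x δ
    · rw [ENNReal.ofReal_mul (hk0 z)]
      gcongr
      exact hz hzx _
    · simp [hk_supp z hzx]
  · have hmass : 0 ≤ ∫ z in Ω, k z := integral_nonneg hk0
    rw [ENNReal.ofReal_mul (by linarith)]
    exact (mul_le_of_le_one_left zero_le (ENNReal.ofReal_le_one.2 (by linarith))).trans hxζ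

end Jensen

/-! ### Upper growth -/

/-- The upper growth condition (a3). -/
def UpperGrowth {d m : ℕ} (Ω : Set (Euc d)) (p : ℝ) (W : Euc d → Mat m d → ℝ≥0∞) : Prop :=
  (p ≤ (d : ℝ) - 1 →
    ∃ (C q : ℝ) (α : Euc d → ℝ≥0∞), 0 < C ∧ p < q ∧
      (p < (d : ℝ) - 1 → q ≤ ((d : ℝ) - 1) * p / ((d : ℝ) - 1 - p)) ∧
      (∫⁻ x in Ω, α x) < ⊤ ∧
      ∀ᵐ x ∂volume.restrict Ω, ∀ ξ,
        W x ξ ≤ ENNReal.ofReal (C * frobNorm ξ ^ q) + α x) ∧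
  ((d : ℝ) - 1 < p →
    ∃ θ : ℝ, 0 < θ ∧
      (∫⁻ x in Ω, ⨆ ξ ∈ {ξ : Mat m d | frobNorm ξ ≤ θ}, W x ξ) < ⊤)

theorem exists_measurable_le_add {X E : Type*} [MeasurableSpace X] [TopologicalSpace E]
    [TopologicalSpace.SeparableSpace E] {μ : Measure X} {W : X → E → ℝ≥0∞}
    (hWm : ∀ ξ, Measurable (W · ξ)) (hlsc : ∀ᵐ x ∂μ, LowerSemicontinuous (W x)) {U : Set E}
    (hU : IsOpen U) {h : E → ℝ≥0∞} (hh : Continuous h) {α : X → ℝ≥0∞} (hα : ∫⁻ x, α x ∂μ < ⊤)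
    (hWα : ∀ᵐ x ∂μ, ∀ ξ ∈ U, W x ξ ≤ h ξ + α x) :
    ∃ S : X → ℝ≥0∞, Measurable S ∧ ∫⁻ x, S x ∂μ < ⊤ ∧ ∀ᵐ x ∂μ, ∀ ξ ∈ U, W x ξ ≤ h ξ + S x := by
  obtain ⟨D, hDc, hD⟩ := TopologicalSpace.exists_countable_dense E
  refine ⟨fun x => ⨆ ξ ∈ U ∩ D, (W x ξ - h ξ), ?_, ?_, ?_⟩
  · exact Measurable.biSup _ (hDc.mono inter_subset_right) fun ξ _ => (hWm ξ).sub measurable_const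
  · refine lt_of_le_of_lt (lintegral_mono_ae ?_) hα
    filter_upwards [hWα] with x hx
    exact iSup₂_le fun ξ hξ => tsub_le_iff_left.2 (hx ξ hξ.1)
  · filter_upwards [hlsc] with x hx ξ hξ
    set S := ⨆ ξ ∈ U ∩ D, (W x ξ - h ξ)
    have hclosed : IsClosed {ξ | W x ξ ≤ h ξ + S} :=
      hx.isClosed_epigraph.preimage (continuous_id.prodMk (hh.add continuous_const))
    have hdense : U ∩ D ⊆ {ξ | W x ξ ≤ h ξ + S} := fun η hη =>
      tsub_le_iff_left.1 (le_iSup₂ (f := fun ξ (_ : ξ ∈ U ∩ D) => W x ξ - h ξ) η hη)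
    exact (hclosed.closure_subset_iff.2 hdense) (hD.open_subset_closure_inter hU hξ)

/-- A bound on the error made by an approximation at length scale `ε` and amplitude `τ`. The
estimates are those of `ε` times a gradient of `L^p`-size `τ`, averaged over balls of radius `ε`
on slabs whose energy is controlled: this is what produces the exponent `1 - (d - 1) / p`. -/
structure IsSlabError {d : ℕ} (p : ℝ) (C : ℝ≥0) (ε τ : ℝ) (Y : Euc d → ℝ≥0∞) : Prop where
  measurable : Measurable Y
  le : ∀ x, Y x ≤ C * ENNReal.ofReal (ε ^ (1 - ((d : ℝ) - 1) / p) * τ)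
  lintegral_rpow_le : ∫⁻ x, Y x ^ p ≤ C * ENNReal.ofReal (ε ^ p * τ ^ p)

section Growth

variable {d m : ℕ} {Ω : Set (Euc d)} {p : ℝ} {W : Euc d → Mat m d → ℝ≥0∞}

theorem UpperGrowth.exists_ball_bound (hW : UpperGrowth Ω p W)
    (hWm : Measurable (Function.uncurry W))
    (hlsc : ∀ᵐ x ∂volume.restrict Ω, LowerSemicontinuous (W x)) (hp : (d : ℝ) - 1 < p) :
    ∃ θ > 0, ∃ S : Euc d → ℝ≥0∞, Measurable S ∧ ∫⁻ x in Ω, S x < ⊤ ∧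
      ∀ᵐ x ∂volume.restrict Ω, ∀ ξ ∈ ball (0 : Mat m d) θ, W x ξ ≤ S x := by
  obtain ⟨θ, hθ, hfin⟩ := hW.2 hp
  have hmd : (0 : ℝ) < m * d + 1 := by positivity
  refine ⟨θ / (m * d + 1), by positivity, ?_⟩
  have hsup : ∀ᵐ x ∂volume.restrict Ω, ∀ ξ ∈ ball (0 : Mat m d) (θ / (m * d + 1)),
      W x ξ ≤ 0 + ⨆ ξ ∈ {ξ : Mat m d | frobNorm ξ ≤ θ}, W x ξ := by
    refine .of_forall fun x ξ hξ => ?_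
    rw [mem_ball_zero_iff, lt_div_iff₀' hmd] at hξ
    rw [zero_add]
    exact le_iSup₂ (f := fun ξ (_ : ξ ∈ {ξ : Mat m d | frobNorm ξ ≤ θ}) => W x ξ) ξ
      ((frobNorm_le_mul_norm ξ).trans hξ.le)
  simpa only [zero_add] using exists_measurable_le_add (fun ξ => hWm.of_uncurry_right) hlsc
    isOpen_ball (continuous_const (y := (0 : ℝ≥0∞))) hfin hsup

-- `q ≤ (d - 1) p / (d - 1 - p)` says exactly that `0 ≤ (1 - (d - 1) / p) * (q - p) + p`, which
-- is the exponent of `ε` in `tendsto_lintegral_slabError_rpow`.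
theorem UpperGrowth.exists_power_bound (hW : UpperGrowth Ω p W) (hp0 : 0 < p)
    (hWm : Measurable (Function.uncurry W))
    (hlsc : ∀ᵐ x ∂volume.restrict Ω, LowerSemicontinuous (W x)) (hp : p ≤ (d : ℝ) - 1) :
    ∃ (C : ℝ≥0) (q : ℝ), p < q ∧ 0 ≤ (1 - ((d : ℝ) - 1) / p) * (q - p) + p ∧
      ∃ S : Euc d → ℝ≥0∞, Measurable S ∧ ∫⁻ x in Ω, S x < ⊤ ∧
        ∀ᵐ x ∂volume.restrict Ω, ∀ ξ, W x ξ ≤ C * ‖ξ‖ₑ ^ q + S x := by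
  obtain ⟨C, q, α, hC, hpq, hq, hα_fin, hα⟩ := hW.1 hp
  have hq0 : 0 < q := hp0.trans hpq
  refine ⟨(C * (m * d + 1) ^ q).toNNReal, q, hpq, ?_, ?_⟩
  · have hexp : (1 - ((d : ℝ) - 1) / p) * (q - p) + p
        = (((d : ℝ) - 1) * p - q * ((d : ℝ) - 1 - p)) / p := by
      field_simp
      ring
    rw [hexp]
    refine div_nonneg ?_ hp0.le
    rcases hp.lt_or_eq with hlt | heq
    · linarith [(le_div_iff₀ (by linarith)).1 (hq hlt)]
    · rw [← heq, sub_self, mul_zero, sub_zero]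
      positivity
  · have hcont : Continuous fun ξ : Mat m d => ENNReal.ofReal (C * frobNorm ξ ^ q) :=
      ENNReal.continuous_ofReal.comp (continuous_const.mul
        (continuous_frobNorm.rpow_const fun _ => .inr hq0.le))
    obtain ⟨S, hS, hS_fin, hWS⟩ := exists_measurable_le_add (fun ξ => hWm.of_uncurry_right) hlsc
      isOpen_univ hcont hα_fin (hα.mono fun x hx ξ _ => hx ξ)
    refine ⟨S, hS, hS_fin, hWS.mono fun x hx ξ => (hx ξ (mem_univ ξ)).trans ?_⟩
    gcongr
    change _ ≤ ENNReal.ofReal (C * (m * d + 1) ^ q) * _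
    rw [← ofReal_norm, ENNReal.ofReal_rpow_of_nonneg (norm_nonneg ξ) hq0.le,
      ← ENNReal.ofReal_mul (by positivity), mul_assoc,
      ← Real.mul_rpow (by positivity) (norm_nonneg ξ)]
    have hfrob := frobNorm_le_mul_norm ξ
    have hfrob0 : 0 ≤ frobNorm ξ := Real.sqrt_nonneg _
    gcongr

theorem UpperGrowth.exists_near_zero_bound (hW : UpperGrowth Ω p W) (hp0 : 0 < p)
    (hΩ : volume Ω < ⊤) (hWm : Measurable (Function.uncurry W))
    (hlsc : ∀ᵐ x ∂volume.restrict Ω, LowerSemicontinuous (W x)) :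
    ∃ θ > 0, ∃ S : Euc d → ℝ≥0∞, Measurable S ∧ ∫⁻ x in Ω, S x < ⊤ ∧
      ∀ᵐ x ∂volume.restrict Ω, ∀ ξ ∈ ball (0 : Mat m d) θ, W x ξ ≤ S x := by
  rcases lt_or_ge ((d : ℝ) - 1) p with hp | hp
  · exact hW.exists_ball_bound hWm hlsc hp
  obtain ⟨C, q, hpq, -, S, hS, hS_fin, hWS⟩ := hW.exists_power_bound hp0 hWm hlsc hp
  refine ⟨1, one_pos, fun x => C + S x, measurable_const.add hS, ?_, ?_⟩
  · rw [lintegral_add_left measurable_const, setLIntegral_const]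
    finiteness
  · filter_upwards [hWS] with x hx ξ hξ
    refine (hx ξ).trans ?_
    gcongr
    refine mul_le_of_le_one_right zero_le (ENNReal.rpow_le_one ?_ (hp0.trans hpq).le)
    rw [← ofReal_norm, ENNReal.ofReal_le_one]
    exact (mem_ball_zero_iff.1 hξ).le

variable {C₀ C₁ : ℝ≥0} {ε τ : ℕ → ℝ} {Y : ℕ → Euc d → ℝ≥0∞}

theorem eventually_slabError_mem_ball (hp0 : 0 < p) (hp : (d : ℝ) - 1 < p)
    (hε : ∀ n, ε n ∈ Ioc 0 1) (hτ0 : ∀ n, 0 ≤ τ n) (hτ : Tendsto τ atTop (𝓝 0))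
    (hY : ∀ n, IsSlabError p C₁ (ε n) (τ n) (Y n)) {θ : ℝ} (hθ : 0 < θ) :
    ∀ᶠ n in atTop, ∀ x, ∀ ζ : Mat m d, ‖ζ‖ₑ ≤ C₀ * (ENNReal.ofReal (τ n) + Y n x) →
      ζ ∈ ball 0 θ := by
  have hlim : Tendsto (fun n => C₀ * (ENNReal.ofReal (τ n) + C₁ * ENNReal.ofReal (τ n)))
      atTop (𝓝 0) := by
    have hτ' : Tendsto (fun n => ENNReal.ofReal (τ n)) atTop (𝓝 0) := by
      simpa using ENNReal.tendsto_ofReal hτ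
    simpa using ENNReal.Tendsto.const_mul (hτ'.add (ENNReal.Tendsto.const_mul hτ'
      (.inr ENNReal.coe_ne_top))) (.inr ENNReal.coe_ne_top)
  have hexp : 0 ≤ 1 - ((d : ℝ) - 1) / p := by
    rw [sub_nonneg, div_le_one hp0]
    exact hp.le
  filter_upwards [hlim.eventually_lt_const (ENNReal.ofReal_pos.2 hθ)] with n hn x ζ hζ
  rw [mem_ball_zero_iff, ← ENNReal.ofReal_lt_ofReal_iff hθ, ofReal_norm]
  refine (hζ.trans ?_).trans_lt hn
  gcongr
  refine ((hY n).le x).trans ?_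
  gcongr
  exact mul_le_of_le_one_left (hτ0 n) (Real.rpow_le_one (hε n).1.le (hε n).2 hexp)

theorem IsSlabError.lintegral_rpow_le_of_le {Y : Euc d → ℝ≥0∞} {ε τ q : ℝ} (hp0 : 0 < p)
    (hpq : p ≤ q) (hexp : 0 ≤ (1 - ((d : ℝ) - 1) / p) * (q - p) + p) (hε : ε ∈ Ioc 0 1)
    (hτ : 0 < τ) (hY : IsSlabError p C₁ ε τ Y) :
    ∫⁻ x, Y x ^ q ≤ C₁ ^ (q - p) * C₁ * ENNReal.ofReal τ ^ q := by
  set A : ℝ := ε ^ (1 - ((d : ℝ) - 1) / p) * τ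
  have hqp : 0 ≤ q - p := sub_nonneg.2 hpq
  have hA : 0 ≤ A := mul_nonneg (Real.rpow_nonneg hε.1.le _) hτ.le
  have hscale : A ^ (q - p) * (ε ^ p * τ ^ p) ≤ τ ^ q := by
    have hA_pow : A ^ (q - p) = ε ^ ((1 - ((d : ℝ) - 1) / p) * (q - p)) * τ ^ (q - p) := by
      rw [Real.mul_rpow (Real.rpow_nonneg hε.1.le _) hτ.le, Real.rpow_mul hε.1.le]
    rw [hA_pow, mul_mul_mul_comm, ← Real.rpow_add hε.1, ← Real.rpow_add hτ, sub_add_cancel]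
    exact mul_le_of_le_one_left (Real.rpow_nonneg hτ.le q) (Real.rpow_le_one hε.1.le hε.2 hexp)
  calc ∫⁻ x, Y x ^ q
      ≤ ∫⁻ x, (C₁ * ENNReal.ofReal A) ^ (q - p) * Y x ^ p := by
        refine lintegral_mono fun x => ?_
        rw [show q = (q - p) + p by ring, ENNReal.rpow_add_of_nonneg _ _ hqp hp0.le,
          add_sub_cancel_right]
        gcongr
        exact hY.le x
    _ = (C₁ * ENNReal.ofReal A) ^ (q - p) * ∫⁻ x, Y x ^ p :=
        lintegral_const_mul _ (hY.measurable.pow_const p)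
    _ ≤ (C₁ * ENNReal.ofReal A) ^ (q - p) * (C₁ * ENNReal.ofReal (ε ^ p * τ ^ p)) := by
        gcongr
        exact hY.lintegral_rpow_le
    _ = C₁ ^ (q - p) * C₁ * ENNReal.ofReal (A ^ (q - p) * (ε ^ p * τ ^ p)) := by
        rw [ENNReal.mul_rpow_of_nonneg _ _ hqp, ENNReal.ofReal_rpow_of_nonneg hA hqp,
          mul_mul_mul_comm, ← ENNReal.ofReal_mul (Real.rpow_nonneg hA _)]
    _ ≤ C₁ ^ (q - p) * C₁ * ENNReal.ofReal τ ^ q := by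
        rw [ENNReal.ofReal_rpow_of_nonneg hτ.le (hp0.trans_le hpq).le]
        gcongr

theorem tendsto_lintegral_slabError_rpow {q : ℝ} (hp1 : 1 ≤ p) (hpq : p ≤ q) (hΩ : volume Ω ≠ ⊤)
    (hexp : 0 ≤ (1 - ((d : ℝ) - 1) / p) * (q - p) + p)
    (hε : ∀ n, ε n ∈ Ioc 0 1) (hτ0 : ∀ n, 0 < τ n) (hτ : Tendsto τ atTop (𝓝 0))
    (hY : ∀ n, IsSlabError p C₁ (ε n) (τ n) (Y n)) :
    Tendsto (fun n => ∫⁻ x in Ω, (ENNReal.ofReal (τ n) + Y n x) ^ q) atTop (𝓝 0) := by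
  have hp0 : 0 < p := by linarith
  have hq0 : 0 < q := by linarith
  set K : ℝ≥0∞ := 2 ^ (q - 1) * (volume Ω + C₁ ^ (q - p) * C₁)
  have hK : K ≠ ⊤ := by
    have h2 : (2 : ℝ≥0∞) ^ (q - 1) ≠ ⊤ := ENNReal.rpow_ne_top_of_nonneg (by linarith) (by simp)
    have hC₁ : (C₁ : ℝ≥0∞) ^ (q - p) ≠ ⊤ :=
      ENNReal.rpow_ne_top_of_nonneg (by linarith) ENNReal.coe_ne_top
    finiteness
  have hbound (n : ℕ) :
      ∫⁻ x in Ω, (ENNReal.ofReal (τ n) + Y n x) ^ q ≤ K * ENNReal.ofReal (τ n) ^ q := by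
    have hYm : Measurable (Y n) := (hY n).measurable
    calc ∫⁻ x in Ω, (ENNReal.ofReal (τ n) + Y n x) ^ q
        ≤ ∫⁻ x in Ω, 2 ^ (q - 1) * (ENNReal.ofReal (τ n) ^ q + Y n x ^ q) :=
          lintegral_mono fun x => ENNReal.rpow_add_le_mul_rpow_add_rpow _ _ (by linarith)
      _ = 2 ^ (q - 1) * (ENNReal.ofReal (τ n) ^ q * volume Ω + ∫⁻ x in Ω, Y n x ^ q) := by
          rw [lintegral_const_mul _ (by fun_prop), lintegral_add_left measurable_const,
            setLIntegral_const]
      _ ≤ 2 ^ (q - 1) * (ENNReal.ofReal (τ n) ^ q * volume Ω +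
            C₁ ^ (q - p) * C₁ * ENNReal.ofReal (τ n) ^ q) := by
          gcongr
          exact (setLIntegral_le_lintegral _ _).trans
            ((hY n).lintegral_rpow_le_of_le hp0 hpq hexp (hε n) (hτ0 n))
      _ = K * ENNReal.ofReal (τ n) ^ q := by ring
  have hlim : Tendsto (fun n => K * ENNReal.ofReal (τ n) ^ q) atTop (𝓝 0) := by
    have hτq : Tendsto (fun n => ENNReal.ofReal (τ n) ^ q) atTop (𝓝 0) := by
      simpa [ENNReal.zero_rpow_of_pos hq0] using (ENNReal.tendsto_ofReal hτ).ennrpow_const q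
    simpa using ENNReal.Tendsto.const_mul hτq (.inr hK)
  exact tendsto_of_tendsto_of_tendsto_of_le_of_le tendsto_const_nhds hlim (fun _ => zero_le) hbound

theorem UpperGrowth.exists_slabError_bound (hW : UpperGrowth Ω p W) (hp1 : 1 ≤ p)
    (hΩ : volume Ω ≠ ⊤) (hWm : Measurable (Function.uncurry W))
    (hlsc : ∀ᵐ x ∂volume.restrict Ω, LowerSemicontinuous (W x)) (C₀ : ℝ≥0)
    (hε : ∀ n, ε n ∈ Ioc 0 1) (hτ0 : ∀ n, 0 < τ n) (hτ : Tendsto τ atTop (𝓝 0))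
    (hY : ∀ n, IsSlabError p C₁ (ε n) (τ n) (Y n)) :
    ∃ S : Euc d → ℝ≥0∞, Measurable S ∧ ∫⁻ x in Ω, S x < ⊤ ∧
      ∃ R : ℕ → Euc d → ℝ≥0∞, (∀ n, Measurable (R n)) ∧
        Tendsto (fun n => ∫⁻ x in Ω, R n x) atTop (𝓝 0) ∧
        ∀ᶠ n in atTop, ∀ᵐ x ∂volume.restrict Ω, ∀ ζ : Mat m d,
          ‖ζ‖ₑ ≤ C₀ * (ENNReal.ofReal (τ n) + Y n x) → W x ζ ≤ S x + R n x := by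
  have hp0 : 0 < p := by linarith
  rcases lt_or_ge ((d : ℝ) - 1) p with hp | hp
  · obtain ⟨θ, hθ, S, hS, hS_fin, hWS⟩ := hW.exists_ball_bound hWm hlsc hp
    refine ⟨S, hS, hS_fin, fun _ _ => 0, fun _ => measurable_const, by simp, ?_⟩
    filter_upwards [eventually_slabError_mem_ball hp0 hp hε (fun n => (hτ0 n).le) hτ hY hθ]
      with n hn
    filter_upwards [hWS] with x hx ζ hζ
    simpa using hx ζ (hn x ζ hζ)
  · obtain ⟨C, q, hpq, hexp, S, hS, hS_fin, hWS⟩ := hW.exists_power_bound hp0 hWm hlsc hp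
    have hq0 : 0 < q := hp0.trans hpq
    have hRm (n : ℕ) : Measurable fun x => (ENNReal.ofReal (τ n) + Y n x) ^ q :=
      (measurable_const.add (hY n).measurable).pow_const q
    refine ⟨S, hS, hS_fin, fun n x => C * C₀ ^ q * (ENNReal.ofReal (τ n) + Y n x) ^ q,
      fun n => (hRm n).const_mul _, ?_, .of_forall fun n => ?_⟩
    · simp_rw [lintegral_const_mul _ (hRm _)]
      have hC : (C : ℝ≥0∞) * C₀ ^ q ≠ ⊤ :=
        ENNReal.mul_ne_top ENNReal.coe_ne_top
          (ENNReal.rpow_ne_top_of_nonneg hq0.le ENNReal.coe_ne_top)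
      simpa using ENNReal.Tendsto.const_mul
        (tendsto_lintegral_slabError_rpow hp1 hpq.le hΩ hexp hε hτ0 hτ hY) (.inr hC)
    · filter_upwards [hWS] with x hx ζ hζ
      refine (hx ζ).trans ?_
      rw [add_comm, mul_assoc, ← ENNReal.mul_rpow_of_nonneg _ _ hq0.le]
      gcongr

end Growth

/-! ### Inward fields -/

/-- The direction `e` points strictly into `Ω` at `x`, locally uniformly in the base point and
in the direction. -/
def IsInward {d : ℕ} (Ω : Set (Euc d)) (x e : Euc d) : Prop :=
  ∀ᶠ q : Euc d × ℝ × Euc d in 𝓝 (x, 0, e), q.1 ∈ closure Ω → 0 < q.2.1 → q.1 + q.2.1 • q.2.2 ∈ Ω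

section InwardField

variable {d : ℕ} {Ω : Set (Euc d)}

theorem IsInward.eventually_nhds {x e : Euc d} (h : IsInward Ω x e) :
    ∀ᶠ x' in 𝓝 x, IsInward Ω x' e :=
  (Continuous.tendsto (f := fun x' : Euc d => (x', (0 : ℝ), e)) (by fun_prop) x).eventually
    (Filter.Eventually.eventually_nhds h)

theorem IsInward.smul {x e : Euc d} {c : ℝ} (hc : 0 < c) (h : IsInward Ω x e) :
    IsInward Ω x (c • e) := by
  have hlim : Tendsto (fun q : Euc d × ℝ × Euc d => (q.1, q.2.1 * c, c⁻¹ • q.2.2))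
      (𝓝 (x, 0, c • e)) (𝓝 (x, 0, e)) := by
    have hcont : Continuous fun q : Euc d × ℝ × Euc d => (q.1, q.2.1 * c, c⁻¹ • q.2.2) := by
      fun_prop
    simpa [smul_smul, hc.ne'] using hcont.tendsto (x, 0, c • e)
  filter_upwards [hlim.eventually h] with q hq hqΩ hq0
  simpa [smul_smul, mul_assoc, hc.ne'] using hq hqΩ (by positivity)

theorem convex_setOf_isInward (x : Euc d) : Convex ℝ {e | IsInward Ω x e} := by
  refine convex_iff_forall_pos.2 fun e₁ h₁ e₂ h₂ a b ha hb hab => ?_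
  set e := a • e₁ + b • e₂
  let step₁ : Euc d × ℝ × Euc d → Euc d × ℝ × Euc d := fun q =>
    (q.1, q.2.1 * a, e₁ + (q.2.2 - e))
  let step₂ : Euc d × ℝ × Euc d → Euc d × ℝ × Euc d := fun q =>
    (q.1 + (q.2.1 * a) • (e₁ + (q.2.2 - e)), q.2.1 * b, e₂ + (q.2.2 - e))
  have hstep₁ : Tendsto step₁ (𝓝 (x, 0, e)) (𝓝 (x, 0, e₁)) := by
    have hcont : Continuous step₁ := by fun_prop
    simpa [step₁] using hcont.tendsto (x, 0, e)
  have hstep₂ : Tendsto step₂ (𝓝 (x, 0, e)) (𝓝 (x, 0, e₂)) := by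
    have hcont : Continuous step₂ := by fun_prop
    simpa [step₂] using hcont.tendsto (x, 0, e)
  filter_upwards [hstep₁.eventually h₁, hstep₂.eventually h₂] with ⟨z, ε, y⟩ hq₁ hq₂ hz hε
  have hmid : z + (ε * a) • (e₁ + (y - e)) ∈ Ω := hq₁ hz (mul_pos hε ha)
  have hend := hq₂ (subset_closure hmid) (mul_pos hε hb)
  convert hend using 1
  have hy : y = a • (e₁ + (y - e)) + b • (e₂ + (y - e)) := by
    have hsplit : a • (e₁ + (y - e)) + b • (e₂ + (y - e)) = e + (a + b) • (y - e) := by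
      simp only [e]; module
    rw [hsplit, hab, one_smul, add_sub_cancel]
  simp only [step₂]
  conv_lhs => rw [hy, smul_add, smul_smul, smul_smul, ← add_assoc]

theorem inner_lt_of_inner_le_lipschitz {ν z y : Euc d} {L : ℝ≥0} {ψ : Euc d → ℝ} {ε : ℝ}
    (hν : ‖ν‖ = 1) (hψ : LipschitzWith L ψ) (hz : ⟪z, ν⟫ ≤ ψ (z - ⟪z, ν⟫ • ν)) (hε : 0 < ε)
    (hy : ‖y + ν‖ * (1 + 2 * L) < 1) :
    ⟪z + ε • y, ν⟫ < ψ (z + ε • y - ⟪z + ε • y, ν⟫ • ν) := by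
  set w := y + ν
  have hνν : ⟪ν, ν⟫ = 1 := by rw [real_inner_self_eq_norm_sq, hν, one_pow]
  have hwν : |⟪w, ν⟫| ≤ ‖w‖ := by simpa [hν] using abs_real_inner_le_norm w ν
  have hy_eq : y = w - ν := (add_sub_cancel_right y ν).symm
  have hinner : ⟪z + ε • y, ν⟫ = ⟪z, ν⟫ + ε * (⟪w, ν⟫ - 1) := by
    rw [hy_eq, inner_add_left, real_inner_smul_left, inner_sub_left, hνν]
  have hproj : z + ε • y - ⟪z + ε • y, ν⟫ • ν = z - ⟪z, ν⟫ • ν + ε • (w - ⟪w, ν⟫ • ν) := by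
    rw [hinner, hy_eq]
    module
  have hnorm : ‖w - ⟪w, ν⟫ • ν‖ ≤ 2 * ‖w‖ := by
    refine (norm_sub_le _ _).trans ?_
    rw [norm_smul, hν, Real.norm_eq_abs]
    linarith
  have hdist : |ψ (z - ⟪z, ν⟫ • ν) - ψ (z - ⟪z, ν⟫ • ν + ε • (w - ⟪w, ν⟫ • ν))| ≤
      L * (ε * (2 * ‖w‖)) := by
    rw [← Real.dist_eq]
    refine (hψ.dist_le_mul _ _).trans ?_
    rw [dist_self_add_right, norm_smul, Real.norm_of_nonneg hε.le]
    gcongr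
  rw [hproj, hinner]
  have hmain : ε * (⟪w, ν⟫ + 2 * L * ‖w‖) < ε * 1 := by
    gcongr
    linarith [le_of_abs_le hwν]
  linarith [le_of_abs_le hdist]

theorem IsInward.neg_of_lipschitzGraph {x ν : Euc d} {r : ℝ} {L : ℝ≥0} {ψ : Euc d → ℝ}
    (hν : ‖ν‖ = 1) (hr : 0 < r) (hψ : LipschitzWith L ψ)
    (hchart : ∀ y ∈ ball x r, (y ∈ Ω ↔ ⟪y, ν⟫ < ψ (y - ⟪y, ν⟫ • ν))) : IsInward Ω x (-ν) := by
  have hψc : Continuous ψ := hψ.continuous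
  have hclosure : ∀ z ∈ ball x r, z ∈ closure Ω → ⟪z, ν⟫ ≤ ψ (z - ⟪z, ν⟫ • ν) := by
    intro z hzr hz
    have hclosed : IsClosed {w : Euc d | ⟪w, ν⟫ ≤ ψ (w - ⟪w, ν⟫ • ν)} :=
      isClosed_le (by fun_prop) (by fun_prop)
    have hsub : ball x r ∩ Ω ⊆ {w : Euc d | ⟪w, ν⟫ ≤ ψ (w - ⟪w, ν⟫ • ν)} :=
      fun w hw => ((hchart w hw.1).1 hw.2).le
    exact (hclosed.closure_subset_iff.2 hsub) (isOpen_ball.inter_closure ⟨hzr, hz⟩)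
  have hstart : ∀ᶠ q : Euc d × ℝ × Euc d in 𝓝 (x, 0, -ν), q.1 ∈ ball x r :=
    continuous_fst.continuousAt.eventually (ball_mem_nhds x hr)
  have hend : ∀ᶠ q : Euc d × ℝ × Euc d in 𝓝 (x, 0, -ν), q.1 + q.2.1 • q.2.2 ∈ ball x r := by
    refine ContinuousAt.eventually_mem (by fun_prop) ?_
    simpa using ball_mem_nhds x hr
  have hdir : ∀ᶠ q : Euc d × ℝ × Euc d in 𝓝 (x, 0, -ν), ‖q.2.2 + ν‖ * (1 + 2 * L) < 1 :=
    ContinuousAt.eventually_lt (by fun_prop) continuousAt_const (by simp)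
  filter_upwards [hstart, hend, hdir] with q hq₁ hq₂ hq₃ hqΩ hq0
  exact (hchart _ hq₂).2 (inner_lt_of_inner_le_lipschitz hν hψ (hclosure _ hq₁ hqΩ) hq0 hq₃)

theorem HasLipschitzBoundary.exists_isInward (hΩ : IsOpen Ω) (hΩl : HasLipschitzBoundary Ω)
    (x : Euc d) : ∃ e, IsInward Ω x e := by
  by_cases hxc : x ∈ closure Ω
  · by_cases hx : x ∈ Ω
    · refine ⟨0, ?_⟩
      have hmem : ∀ᶠ q : Euc d × ℝ × Euc d in 𝓝 (x, 0, 0), q.1 + q.2.1 • q.2.2 ∈ Ω := by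
        refine ContinuousAt.eventually_mem (by fun_prop) ?_
        simpa using hΩ.mem_nhds hx
      exact hmem.mono fun q hq _ _ => hq
    · obtain ⟨ν, r, L, ψ, hν, hr, -, hψ, hchart⟩ := hΩl x ⟨hxc, by rwa [hΩ.interior_eq]⟩
      exact ⟨-ν, .neg_of_lipschitzGraph hν hr hψ hchart⟩
  · refine ⟨0, ?_⟩
    have hnhds : (closure Ω)ᶜ ∈ 𝓝 x := isClosed_closure.isOpen_compl.mem_nhds hxc
    have hout : ∀ᶠ q : Euc d × ℝ × Euc d in 𝓝 (x, 0, 0), q.1 ∈ (closure Ω)ᶜ :=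
      continuous_fst.continuousAt.eventually_mem hnhds
    exact hout.mono fun q hq hqΩ => absurd hqΩ hq

theorem exists_contDiff_isInward (hΩ : IsOpen Ω) (hΩb : Bornology.IsBounded Ω)
    (hΩl : HasLipschitzBoundary Ω) :
    ∃ X : Euc d → Euc d, ContDiff ℝ (⊤ : ℕ∞) X ∧ HasCompactSupport X ∧ (∀ x, ‖X x‖ ≤ 1 / 2) ∧
      ∀ x ∈ closure Ω, IsInward Ω x (X x) := by
  obtain ⟨X, hX⟩ := exists_contMDiffMap_forall_mem_convex_of_local_const (n := (⊤ : ℕ∞))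
    (modelWithCornersSelf ℝ (Euc d)) (convex_setOf_isInward (Ω := Ω)) fun x =>
      (hΩl.exists_isInward hΩ x).imp fun _ he => he.eventually_nhds
  obtain ⟨R, hR0, hR⟩ := hΩb.closure.subset_closedBall_lt 0 0
  let χ : ContDiffBump (0 : Euc d) := ⟨R, R + 1, hR0, by linarith⟩
  have hsmooth : ContDiff ℝ (⊤ : ℕ∞) fun x => χ x • X x := χ.contDiff.smul X.contMDiff.contDiff
  have hcompact : HasCompactSupport fun x => χ x • X x := χ.hasCompactSupport.smul_right
  obtain ⟨B, hB⟩ := hcompact.exists_bound_of_continuous hsmooth.continuous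
  have hB0 : 0 ≤ B := (norm_nonneg _).trans (hB 0)
  set c : ℝ := (2 * (B + 1))⁻¹
  have hc : 0 < c := by positivity
  refine ⟨fun x => c • χ x • X x, hsmooth.const_smul c, hcompact.smul_left (f := fun _ => c),
    fun x => ?_, fun x hx => ?_⟩
  · rw [norm_smul, Real.norm_of_nonneg hc.le, inv_mul_le_iff₀ (by positivity)]
    linarith [hB x]
  · change IsInward Ω x (c • χ x • X x)
    rw [χ.one_of_mem_closedBall (hR hx), one_smul]
    exact .smul hc (hX x)

/-- A vector field points into `Ω` up to scale `r`: short steps from `closure Ω` along values of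
`X` taken within distance `r`, perturbed by less than `r`, end in `Ω`. -/
def IsUniformlyInward (Ω : Set (Euc d)) (r : ℝ) (X : Euc d → Euc d) : Prop :=
  ∀ z ∈ closure Ω, ∀ x, dist x z < r → ∀ ε : ℝ, 0 < ε → ε < r → ∀ y : Euc d, ‖y‖ < r →
    z + ε • (X x + y) ∈ Ω

theorem exists_isUniformlyInward (hΩb : Bornology.IsBounded Ω) {X : Euc d → Euc d}
    (hX : Continuous X) (hXΩ : ∀ x ∈ closure Ω, IsInward Ω x (X x)) :
    ∃ r > 0, IsUniformlyInward Ω r X := by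
  have hunif : ∀ᶠ q : Euc d × ℝ × Euc d in 𝓝 (0, 0, 0), ∀ z ∈ closure Ω,
      z ∈ closure Ω → 0 < q.2.1 → z + q.2.1 • (X (z + q.1) + q.2.2) ∈ Ω := by
    refine hΩb.isCompact_closure.eventually_forall_of_forall_eventually fun z hz => ?_
    have hlim : Tendsto (fun a : (Euc d × ℝ × Euc d) × Euc d =>
        (a.2, a.1.2.1, X (a.2 + a.1.1) + a.1.2.2)) (𝓝 ((0, 0, 0), z)) (𝓝 (z, 0, X z)) := by
      have hcont : Continuous fun a : (Euc d × ℝ × Euc d) × Euc d =>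
          (a.2, a.1.2.1, X (a.2 + a.1.1) + a.1.2.2) := by fun_prop
      simpa using hcont.tendsto ((0, 0, 0), z)
    exact hlim.eventually (hXΩ z hz)
  obtain ⟨r, hr, h⟩ := Metric.eventually_nhds_iff_ball.1 hunif
  refine ⟨r, hr, fun z hz x hx ε hε hεr y hy => ?_⟩
  have hmem : ((x - z, ε, y) : Euc d × ℝ × Euc d) ∈ ball (0, 0, 0) r := by
    simp [Prod.dist_eq, abs_of_pos hε, hεr, hy, ← dist_eq_norm, hx]
  simpa using h _ hmem z hz hz hε

end InwardField

/-! ### Freezing maps -/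

section FreezingMap

theorem lintegral_measure_closedBall (μ : Measure ℝ) [IsFiniteMeasure μ] (r : ℝ) :
    ∫⁻ s, μ (closedBall s r) = ENNReal.ofReal (2 * r) * μ univ := by
  have hS : MeasurableSet {q : ℝ × ℝ | dist q.2 q.1 ≤ r} :=
    (isClosed_le (by fun_prop) continuous_const).measurableSet
  have hleft (s : ℝ) : Prod.mk s ⁻¹' {q : ℝ × ℝ | dist q.2 q.1 ≤ r} = closedBall s r := rfl
  have hright (t : ℝ) : (fun s => (s, t)) ⁻¹' {q : ℝ × ℝ | dist q.2 q.1 ≤ r} = closedBall t r := by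
    ext s
    simp [dist_comm]
  have hswap := (Measure.prod_apply (μ := volume) (ν := μ) hS).symm.trans
    (Measure.prod_apply_symm hS)
  simpa only [hleft, hright, Real.volume_closedBall, lintegral_const] using hswap

theorem volume_setOf_le_measure_closedBall_lt (μ : Measure ℝ) {r ε c : ℝ} (hr : 0 < r)
    (hε : 0 < ε) (hc : 0 < c) (hμ : μ univ ≤ ENNReal.ofReal c) :
    volume {s | ENNReal.ofReal (8 / r * ε * c) ≤ μ (closedBall s (2 * ε))} <
      ENNReal.ofReal r := by
  have : IsFiniteMeasure μ := ⟨hμ.trans_lt ENNReal.ofReal_lt_top⟩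
  have hmeas : Measurable fun s => μ (closedBall s (2 * ε)) :=
    measurable_measure_prodMk_left (s := {q : ℝ × ℝ | dist q.2 q.1 ≤ 2 * ε})
      (isClosed_le (by fun_prop) continuous_const).measurableSet
  set bad : Set ℝ := {s | ENNReal.ofReal (8 / r * ε * c) ≤ μ (closedBall s (2 * ε))}
  have hmarkov : ENNReal.ofReal (8 / r * ε * c) * volume bad ≤
      ENNReal.ofReal (8 / r * ε * c) * ENNReal.ofReal (r / 2) :=
    calc ENNReal.ofReal (8 / r * ε * c) * volume bad
        ≤ ∫⁻ s, μ (closedBall s (2 * ε)) := mul_meas_ge_le_lintegral hmeas _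
      _ = ENNReal.ofReal (2 * (2 * ε)) * μ univ := lintegral_measure_closedBall μ _
      _ ≤ ENNReal.ofReal (2 * (2 * ε)) * ENNReal.ofReal c := by gcongr
      _ = ENNReal.ofReal (8 / r * ε * c) * ENNReal.ofReal (r / 2) := by
        rw [← ENNReal.ofReal_mul (by positivity), ← ENNReal.ofReal_mul (by positivity)]
        congr 1
        field_simp
        norm_num
  rw [ENNReal.mul_le_mul_iff_right (ENNReal.ofReal_pos.2 (by positivity)).ne'
    ENNReal.ofReal_ne_top] at hmarkov
  exact hmarkov.trans_lt ((ENNReal.ofReal_lt_ofReal_iff hr).2 (by linarith))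

theorem abs_intervalIntegral_le_of_volume_lt {f : ℝ → ℝ} (hf : Continuous f) {V : Set ℝ}
    (hV : MeasurableSet V) (hf01 : ∀ s, f s ∈ Icc 0 1) (hfV : ∀ s ∉ V, f s = 0) {r : ℝ}
    (hr : 0 ≤ r) (hVr : volume V < ENNReal.ofReal r) (a b : ℝ) : |∫ s in a..b, f s| ≤ r := by
  have hle : ∀ s, ‖f s‖ ≤ V.indicator 1 s := by
    intro s
    by_cases hs : s ∈ V
    · simpa [hs, abs_of_nonneg (hf01 s).1] using (hf01 s).2
    · simp [hs, hfV s hs]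
  have hVi : Integrable (V.indicator (1 : ℝ → ℝ)) volume :=
    (integrable_indicator_iff hV).2 (integrableOn_const (hVr.trans ENNReal.ofReal_lt_top).ne)
  calc ‖∫ s in a..b, f s‖
      ≤ ∫ s in Set.uIoc a b, ‖f s‖ := intervalIntegral.norm_integral_le_integral_norm_uIoc
    _ ≤ ∫ s in Set.uIoc a b, V.indicator 1 s :=
        setIntegral_mono (intervalIntegrable_iff.1 (hf.norm.intervalIntegrable a b))
          hVi.integrableOn hle
    _ ≤ ∫ s, V.indicator 1 s :=
        setIntegral_le_integral hVi (.of_forall fun s => indicator_nonneg (by simp) s)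
    _ = volume.real V := integral_indicator_one hV
    _ ≤ r := ENNReal.toReal_le_of_le_ofReal hr hVr.le

theorem exists_contDiff_deriv_eq_zero {F : Set ℝ} (hF : IsClosed F) {r : ℝ} (hr : 0 ≤ r)
    (hFr : volume F < ENNReal.ofReal r) :
    ∃ T : ℝ → ℝ, ContDiff ℝ (⊤ : ℕ∞) T ∧ (∀ s, |T s - s| ≤ r) ∧ (∀ s, deriv T s ∈ Icc 0 1) ∧
      ∀ s ∈ F, deriv T s = 0 := by
  obtain ⟨V, hFV, hVo, hVr⟩ := F.exists_isOpen_lt_of_lt _ hFr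
  obtain ⟨f, hf0, hf1, hf01⟩ := exists_contMDiffMap_zero_one_of_isClosed (n := (⊤ : ℕ∞))
    (modelWithCornersSelf ℝ ℝ) hVo.isClosed_compl hF (disjoint_compl_left_iff_subset.2 hFV)
  have hf : ContDiff ℝ (⊤ : ℕ∞) f := f.contMDiff.contDiff
  have hderiv : ∀ s, HasDerivAt (fun s => s - ∫ t in (0 : ℝ)..s, f t) (1 - f s) s := fun s =>
    (hasDerivAt_id s).sub (hf.continuous.integral_hasStrictDerivAt 0 s).hasDerivAt
  have hderiv_eq : deriv (fun s => s - ∫ t in (0 : ℝ)..s, f t) = fun s => 1 - f s :=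
    funext fun s => (hderiv s).deriv
  refine ⟨fun s => s - ∫ t in (0 : ℝ)..s, f t, ?_, fun s => ?_, fun s => ?_, fun s hs => ?_⟩
  · rw [contDiff_infty_iff_deriv, hderiv_eq]
    exact ⟨fun s => (hderiv s).differentiableAt, contDiff_const.sub hf⟩
  · rw [sub_sub_cancel_left, abs_neg]
    exact abs_intervalIntegral_le_of_volume_lt hf.continuous hVo.measurableSet hf01
      (fun t ht => hf0 ht) hr hVr 0 s
  · rw [hderiv_eq]
    exact ⟨by linarith [(hf01 s).2], by linarith [(hf01 s).1]⟩
  · rw [hderiv_eq]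
    simpa [sub_eq_zero] using (hf1 hs).symm

-- `T` is constant near the points around which `μ` concentrates; by Chebyshev's inequality
-- those form a set of length less than `r`.
theorem exists_contDiff_freezing (μ : Measure ℝ) {r ε c : ℝ} (hr : 0 < r) (hε : 0 < ε)
    (hc : 0 < c) (hμ : μ univ ≤ ENNReal.ofReal c) :
    ∃ T : ℝ → ℝ, ContDiff ℝ (⊤ : ℕ∞) T ∧ (∀ s, |T s - s| ≤ r) ∧ (∀ s, deriv T s ∈ Icc 0 1) ∧
      ∀ s, deriv T s ≠ 0 → μ (closedBall s ε) ≤ ENNReal.ofReal (8 / r * ε * c) := by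
  set bad : Set ℝ := {s | ENNReal.ofReal (8 / r * ε * c) ≤ μ (closedBall s (2 * ε))}
  have hsub : (thickening ε badᶜ)ᶜ ⊆ bad :=
    compl_subset_comm.1 (self_subset_thickening hε badᶜ)
  obtain ⟨T, hT, hTr, hT01, hT0⟩ := exists_contDiff_deriv_eq_zero
    isOpen_thickening.isClosed_compl hr.le
    ((measure_mono hsub).trans_lt (volume_setOf_le_measure_closedBall_lt μ hr hε hc hμ))
  refine ⟨T, hT, hTr, hT01, fun s hs => ?_⟩
  obtain ⟨t, ht, hst⟩ := mem_thickening_iff.1 (not_not.1 (mt (hT0 s) hs))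
  have hball : closedBall s ε ⊆ closedBall t (2 * ε) := closedBall_subset_closedBall' (by linarith)
  exact (measure_mono hball).trans (le_of_not_ge ht)

end FreezingMap

/-! ### Mollification -/

section Mollification

variable {d m : ℕ} {Ω : Set (Euc d)}

theorem continuous_smoothJac {φ : Euc d → Euc m} (hφ : ContDiff ℝ 1 φ) :
    Continuous (smoothJac φ) := by
  have := hφ.continuous_fderiv one_ne_zero
  unfold smoothJac
  fun_prop

namespace IsCcSmooth

variable {φ : Euc d → Euc m}

theorem contDiff_one (hφ : IsCcSmooth Ω φ) : ContDiff ℝ 1 φ :=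
  hφ.1.of_le (by exact_mod_cast le_top)

theorem eq_zero_of_notMem (hφ : IsCcSmooth Ω φ) {x : Euc d} (hx : x ∉ Ω) : φ x = 0 :=
  image_eq_zero_of_notMem_tsupport fun h => hx (hφ.2.2 h)

theorem smoothJac_eq_zero_of_notMem (hφ : IsCcSmooth Ω φ) {x : Euc d} (hx : x ∉ Ω) :
    smoothJac φ x = 0 := by
  have hfderiv : fderiv ℝ φ x = 0 := fderiv_of_notMem_tsupport ℝ fun h => hx (hφ.2.2 h)
  funext i j
  simp [smoothJac, hfderiv]

theorem hasCompactSupport_smoothJac (hφ : IsCcSmooth Ω φ) : HasCompactSupport (smoothJac φ) :=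
  (hφ.2.1.fderiv ℝ).mono' fun x hx => subset_tsupport _ fun h => hx <| by
    funext i j
    simp [smoothJac, h]

theorem integrable (hφ : IsCcSmooth Ω φ) : Integrable φ :=
  hφ.1.continuous.integrable_of_hasCompactSupport hφ.2.1

theorem integrable_smoothJac (hφ : IsCcSmooth Ω φ) : Integrable (smoothJac φ) :=
  (continuous_smoothJac hφ.contDiff_one).integrable_of_hasCompactSupport
    hφ.hasCompactSupport_smoothJac

end IsCcSmooth

/-- The `(i, j)` entry of a matrix, as a continuous linear functional. -/
def entryCLM (i : Fin m) (j : Fin d) : Mat m d →L[ℝ] ℝ :=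
  (ContinuousLinearMap.proj j).comp (ContinuousLinearMap.proj (R := ℝ) (φ := fun _ => Fin d → ℝ) i)

theorem tendsto_integral_clm_mul {α E : Type*} [MeasurableSpace α] {μ : Measure α}
    [NormedAddCommGroup E] [NormedSpace ℝ E] (L : E →L[ℝ] ℝ) {h : α → ℝ}
    (hh : AEStronglyMeasurable h μ) {B : ℝ} (hB : ∀ x, ‖h x‖ ≤ B) {f : ℕ → α → E} {g : α → E}
    (hf : ∀ n, Integrable (f n) μ) (hg : Integrable g μ)
    (hlim : Tendsto (fun n => eLpNorm (f n - g) 1 μ) atTop (𝓝 0)) :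
    Tendsto (fun n => ∫ x, L (f n x) * h x ∂μ) atTop (𝓝 (∫ x, L (g x) * h x ∂μ)) := by
  have hmul : ∀ u : α → E, Integrable u μ → Integrable (fun x => L (u x) * h x) μ := fun u hu =>
    (L.integrable_comp hu).mul_bdd hh (.of_forall hB)
  refine tendsto_integral_of_L1' _ (hmul g hg).aestronglyMeasurable
    (.of_forall fun n => hmul _ (hf n)) ?_
  set c : ℝ≥0 := (‖L‖ * B).toNNReal
  have hbound (n : ℕ) : eLpNorm ((fun x => L (f n x) * h x) - fun x => L (g x) * h x) 1 μ ≤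
      c * eLpNorm (f n - g) 1 μ := by
    refine eLpNorm_le_nnreal_smul_eLpNorm_of_ae_le_mul (.of_forall fun x => ?_) 1
    rw [← NNReal.coe_le_coe, NNReal.coe_mul, coe_nnnorm, coe_nnnorm, Pi.sub_apply, ← sub_mul,
      ← map_sub, norm_mul]
    calc ‖L (f n x - g x)‖ * ‖h x‖ ≤ ‖L‖ * ‖f n x - g x‖ * B :=
          mul_le_mul (L.le_opNorm _) (hB x) (norm_nonneg _) (by positivity)
      _ = ‖L‖ * B * ‖f n x - g x‖ := by ring
      _ ≤ c * ‖f n x - g x‖ := by gcongr; exact Real.le_coe_toNNReal _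
  have hzero : Tendsto (fun n => c * eLpNorm (f n - g) 1 μ) atTop (𝓝 0) := by
    simpa using ENNReal.Tendsto.const_mul hlim (.inr ENNReal.coe_ne_top)
  exact tendsto_of_tendsto_of_tendsto_of_le_of_le tendsto_const_nhds hzero (fun _ => zero_le) hbound

theorem IsCcSmooth.setIntegral_mul_fderiv_eq_neg {w : Euc d → Euc m} (hw : IsCcSmooth Ω w)
    {φ : Euc d → ℝ} (hφ : ContDiff ℝ 1 φ) (i : Fin m) (j : Fin d) :
    ∫ x in Ω, w x i * fderiv ℝ φ x (EuclideanSpace.single j 1) =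
      -∫ x in Ω, smoothJac w x i j * φ x := by
  set e : Euc d := EuclideanSpace.single j 1
  have hwi : ContDiff ℝ 1 fun x => w x i := contDiff_euclidean.1 hw.contDiff_one i
  have hderiv (x : Euc d) : fderiv ℝ (fun x => w x i) x e = smoothJac w x i j := by
    have hcomp := (EuclideanSpace.proj i : Euc m →L[ℝ] ℝ).hasFDerivAt.comp x
      (hw.contDiff_one.differentiable one_ne_zero x).hasFDerivAt
    exact congrArg (fun L => L e) hcomp.fderiv
  have hderiv_cont {u : Euc d → ℝ} (hu : ContDiff ℝ 1 u) : Continuous fun x => fderiv ℝ u x e :=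
    (hu.continuous_fderiv one_ne_zero).clm_apply continuous_const
  have hwc : HasCompactSupport fun x => w x i :=
    hw.2.1.comp_left (g := fun v : Euc m => v i) rfl
  have hint₁ : Integrable fun x => w x i * fderiv ℝ φ x e :=
    (hwi.continuous.mul (hderiv_cont hφ)).integrable_of_hasCompactSupport
      hwc.mul_right
  have hint₂ : Integrable fun x => fderiv ℝ (fun x => w x i) x e * φ x :=
    ((hderiv_cont hwi).mul hφ.continuous).integrable_of_hasCompactSupport
      (hwc.fderiv_apply ℝ e).mul_right
  have hint₃ : Integrable fun x => w x i * φ x :=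
    (hwi.continuous.mul hφ.continuous).integrable_of_hasCompactSupport hwc.mul_right
  rw [setIntegral_eq_integral_of_forall_compl_eq_zero fun x hx => by
      simp [hw.eq_zero_of_notMem hx],
    setIntegral_eq_integral_of_forall_compl_eq_zero fun x hx => by
      simp [hw.smoothJac_eq_zero_of_notMem hx],
    integral_mul_fderiv_eq_neg_fderiv_mul_of_integrable hint₂ hint₁ hint₃
      (fun x _ => hwi.differentiable one_ne_zero x) fun x _ => hφ.differentiable one_ne_zero x]
  simp only [hderiv]

-- The test function need not vanish near `∂Ω`: the extension of `v` by zero is weakly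
-- differentiable on the whole space.
theorem MemW1p0.setIntegral_mul_fderiv_eq_neg {v : Euc d → Euc m} {Dv : Euc d → Mat m d}
    (hv : MemW1p0 Ω 1 v Dv) {φ : Euc d → ℝ} (hφ : ContDiff ℝ 1 φ) (hφc : HasCompactSupport φ)
    (i : Fin m) (j : Fin d) :
    ∫ x in Ω, v x i * fderiv ℝ φ x (EuclideanSpace.single j 1) = -∫ x in Ω, Dv x i j * φ x := by
  obtain ⟨⟨hvL, hDvL, -⟩, w, hw, hwv, hwDv⟩ := hv
  set e : Euc d := EuclideanSpace.single j 1
  obtain ⟨B, hB⟩ := hφc.exists_bound_of_continuous hφ.continuous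
  have hcont : Continuous fun x => fderiv ℝ φ x e :=
    (hφ.continuous_fderiv one_ne_zero).clm_apply continuous_const
  obtain ⟨B', hB'⟩ := (hφc.fderiv_apply ℝ e).exists_bound_of_continuous hcont
  have hleft := tendsto_integral_clm_mul (EuclideanSpace.proj i : Euc m →L[ℝ] ℝ)
    hcont.aestronglyMeasurable hB' (fun n => (hw n).integrable.integrableOn)
    (memLp_one_iff_integrable.1 hvL) hwv
  have hright := tendsto_integral_clm_mul (entryCLM i j) hφ.continuous.aestronglyMeasurable hB
    (fun n => (hw n).integrable_smoothJac.integrableOn) (memLp_one_iff_integrable.1 hDvL) hwDv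
  exact tendsto_nhds_unique
    (hleft.congr fun n => (hw n).setIntegral_mul_fderiv_eq_neg hφ i j) hright.neg

/-- The convolution of `ρ` with the extension by zero of `f|_Ω`. -/
def mollify {E : Type*} [NormedAddCommGroup E] [NormedSpace ℝ E] (Ω : Set (Euc d)) (ρ : Euc d → ℝ)
    (f : Euc d → E) (y : Euc d) : E :=
  ∫ z in Ω, ρ (y - z) • f z

section

variable {E : Type*} [NormedAddCommGroup E] [NormedSpace ℝ E] {ρ : Euc d → ℝ} {f : Euc d → E}

theorem mollify_eq_convolution (hΩ : MeasurableSet Ω) (ρ : Euc d → ℝ) (f : Euc d → E) :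
    mollify Ω ρ f =
      MeasureTheory.convolution ρ (Ω.indicator f) (ContinuousLinearMap.lsmul ℝ ℝ) volume := by
  funext y
  rw [convolution_eq_swap, mollify, ← integral_indicator hΩ]
  simp only [indicator_smul, ContinuousLinearMap.lsmul_apply]

theorem contDiff_mollify (hΩ : MeasurableSet Ω) (hρ : ContDiff ℝ (⊤ : ℕ∞) ρ)
    (hρc : HasCompactSupport ρ) (hf : IntegrableOn f Ω) :
    ContDiff ℝ (⊤ : ℕ∞) (mollify Ω ρ f) := by
  rw [mollify_eq_convolution hΩ]
  exact hρc.contDiff_convolution_left _ hρ (hf.integrable_indicator hΩ).locallyIntegrable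

theorem fderiv_mollify [CompleteSpace E] (hΩ : MeasurableSet Ω) (hρ : ContDiff ℝ 1 ρ)
    (hρc : HasCompactSupport ρ) (hf : IntegrableOn f Ω) (y e : Euc d) :
    fderiv ℝ (mollify Ω ρ f) y e = mollify Ω (fun x => fderiv ℝ ρ x e) f y := by
  have hloc := (hf.integrable_indicator hΩ).locallyIntegrable
  have hconv := HasCompactSupport.convolutionExists_left
    ((ContinuousLinearMap.lsmul ℝ ℝ : ℝ →L[ℝ] E →L[ℝ] E).precompL (Euc d)) (hρc.fderiv ℝ)
    (hρ.continuous_fderiv one_ne_zero) hloc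
  rw [mollify_eq_convolution hΩ, mollify_eq_convolution hΩ,
    (hρc.hasFDerivAt_convolution_left (ContinuousLinearMap.lsmul ℝ ℝ) hρ hloc y).fderiv,
    convolution_eq_swap, convolution_eq_swap,
    ContinuousLinearMap.integral_apply (hconv y).integrable_swap]
  rfl

end

theorem MemW1p0.smoothJac_mollify (hΩ : MeasurableSet Ω) {ρ : Euc d → ℝ} (hρ : ContDiff ℝ 1 ρ)
    (hρc : HasCompactSupport ρ) {v : Euc d → Euc m} {Dv : Euc d → Mat m d}
    (hv : MemW1p0 Ω 1 v Dv) (y : Euc d) :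
    smoothJac (mollify Ω ρ v) y = mollify Ω ρ Dv y := by
  have hvi : IntegrableOn v Ω := memLp_one_iff_integrable.1 hv.1.1
  have hDvi : IntegrableOn Dv Ω := memLp_one_iff_integrable.1 hv.1.2.1
  funext i j
  set e : Euc d := EuclideanSpace.single j 1
  have hcont : Continuous fun x => fderiv ℝ ρ x e :=
    (hρ.continuous_fderiv one_ne_zero).clm_apply continuous_const
  obtain ⟨B', hB'⟩ := (hρc.fderiv_apply ℝ e).exists_bound_of_continuous hcont
  obtain ⟨B, hB⟩ := hρc.exists_bound_of_continuous hρ.continuous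
  have hint : IntegrableOn (fun z => fderiv ℝ ρ (y - z) e • v z) Ω :=
    hvi.bdd_smul B' (Continuous.aestronglyMeasurable (by fun_prop)) (.of_forall fun z => hB' _)
  have hDint : IntegrableOn (fun z => ρ (y - z) • Dv z) Ω :=
    hDvi.bdd_smul B (Continuous.aestronglyMeasurable (by have := hρ.continuous; fun_prop))
      (.of_forall fun z => hB _)
  have hrefl (z : Euc d) : fderiv ℝ (fun z => ρ (y - z)) z e = -fderiv ℝ ρ (y - z) e := by
    have hcomp : HasFDerivAt (fun z => ρ (y - z)) _ z :=
      (hρ.differentiable one_ne_zero (y - z)).hasFDerivAt.comp z ((hasFDerivAt_id z).const_sub y)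
    rw [hcomp.fderiv]
    simp
  have hparts := hv.setIntegral_mul_fderiv_eq_neg (φ := fun z => ρ (y - z)) (by fun_prop)
    (hρc.comp_homeomorph (Homeomorph.subLeft y)) i j
  calc smoothJac (mollify Ω ρ v) y i j
      = EuclideanSpace.proj i (∫ z in Ω, fderiv ℝ ρ (y - z) e • v z) :=
        congrArg (fun u : Euc m => u i) (fderiv_mollify hΩ hρ hρc hvi y e)
    _ = ∫ z in Ω, EuclideanSpace.proj i (fderiv ℝ ρ (y - z) e • v z) :=
        ((EuclideanSpace.proj i : Euc m →L[ℝ] ℝ).integral_comp_comm hint).symm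
    _ = -∫ z in Ω, v z i * fderiv ℝ (fun z => ρ (y - z)) z e := by
        rw [← integral_neg]
        congr 1
        funext z
        simp only [hrefl, EuclideanSpace.coe_proj, PiLp.smul_apply, smul_eq_mul]
        ring
    _ = ∫ z in Ω, entryCLM i j (ρ (y - z) • Dv z) := by
        rw [hparts, neg_neg]
        congr 1
        funext z
        exact mul_comm _ _
    _ = mollify Ω ρ Dv y i j := (entryCLM i j).integral_comp_comm hDint

theorem tendsto_eLpNorm_one_of_tendsto_eLpNorm {α E : Type*} [MeasurableSpace α] {μ : Measure α}
    [IsFiniteMeasure μ] [NormedAddCommGroup E] {p : ℝ≥0∞} (hp : 1 ≤ p) {f : ℕ → α → E}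
    (hf : ∀ n, AEStronglyMeasurable (f n) μ)
    (hlim : Tendsto (fun n => eLpNorm (f n) p μ) atTop (𝓝 0)) :
    Tendsto (fun n => eLpNorm (f n) 1 μ) atTop (𝓝 0) := by
  have hexp : 0 ≤ 1 / (1 : ℝ≥0∞).toReal - 1 / p.toReal := by
    rcases eq_or_ne p ⊤ with rfl | hp_top
    · simp
    · have hp1 : 1 ≤ p.toReal := by simpa using ENNReal.toReal_mono hp_top hp
      simpa using inv_le_one_of_one_le₀ hp1
  have hzero := ENNReal.Tendsto.mul_const hlim
    (.inr (ENNReal.rpow_ne_top_of_nonneg hexp (measure_ne_top μ univ)))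
  rw [zero_mul] at hzero
  exact tendsto_of_tendsto_of_tendsto_of_le_of_le tendsto_const_nhds hzero (fun _ => zero_le)
    fun n => eLpNorm_le_eLpNorm_mul_rpow_measure_univ hp (hf n)

theorem MemW1p0.mono_exponent (hΩ : volume Ω ≠ ⊤) {p : ℝ≥0∞} (hp : 1 ≤ p) {v : Euc d → Euc m}
    {Dv : Euc d → Mat m d} (hv : MemW1p0 Ω p v Dv) : MemW1p0 Ω 1 v Dv := by
  have : IsFiniteMeasure (volume.restrict Ω) := isFiniteMeasure_restrict.2 hΩ
  obtain ⟨⟨hvL, hDvL, hjac⟩, w, hw, hwv, hwDv⟩ := hv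
  refine ⟨⟨hvL.mono_exponent hp, hDvL.mono_exponent hp, hjac⟩, w, hw, ?_, ?_⟩
  · exact tendsto_eLpNorm_one_of_tendsto_eLpNorm hp
      (fun n => (hw n).integrable.aestronglyMeasurable.restrict.sub hvL.1) hwv
  · exact tendsto_eLpNorm_one_of_tendsto_eLpNorm hp
      (fun n => (hw n).integrable_smoothJac.aestronglyMeasurable.restrict.sub hDvL.1) hwDv

end Mollification

/-! ### Averages over balls -/

section BallKernel

variable {d : ℕ}

/-- The mean of `f` over the closed ball of radius `ε` about `x`. -/
def ballAvg (ε : ℝ) (f : Euc d → ℝ≥0∞) (x : Euc d) : ℝ≥0∞ :=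
  laverage (volume.restrict (closedBall x ε)) f

theorem ballAvg_eq (ε : ℝ) (f : Euc d → ℝ≥0∞) (x : Euc d) :
    ballAvg ε f x = (∫⁻ z in closedBall x ε, f z) / volume (closedBall (0 : Euc d) ε) := by
  rw [ballAvg, setLAverage_eq, Measure.addHaar_closedBall_center]

theorem ballAvg_eq_lintegral_indicator_div (ε : ℝ) (f : Euc d → ℝ≥0∞) (x : Euc d) :
    ballAvg ε f x =
      (∫⁻ z, {q : Euc d × Euc d | dist q.2 q.1 ≤ ε}.indicator (fun q => f q.2) (x, z)) /
        volume (closedBall (0 : Euc d) ε) := by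
  rw [ballAvg_eq, ← lintegral_indicator measurableSet_closedBall]
  rfl

theorem measurable_indicator_dist_le (ε : ℝ) {f : Euc d → ℝ≥0∞} (hf : Measurable f) :
    Measurable ({q : Euc d × Euc d | dist q.2 q.1 ≤ ε}.indicator fun q => f q.2) :=
  (hf.comp measurable_snd).indicator
    (isClosed_le (by fun_prop) continuous_const).measurableSet

theorem measurable_ballAvg (ε : ℝ) {f : Euc d → ℝ≥0∞} (hf : Measurable f) :
    Measurable (ballAvg ε f) := by
  simp only [funext (ballAvg_eq_lintegral_indicator_div ε f)]
  exact (measurable_indicator_dist_le ε hf).lintegral_prod_right'.div_const _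

theorem lintegral_ballAvg {ε : ℝ} (hε : 0 < ε) {f : Euc d → ℝ≥0∞} (hf : Measurable f) :
    ∫⁻ x, ballAvg ε f x = ∫⁻ x, f x := by
  have hslice (x z : Euc d) : {q : Euc d × Euc d | dist q.2 q.1 ≤ ε}.indicator
      (fun q => f q.2) (x, z) = (closedBall z ε).indicator (fun _ => f z) x := by
    simp only [indicator, mem_ofPred_eq, mem_closedBall, dist_comm]
  have hvol : volume (closedBall (0 : Euc d) ε) ≠ 0 := (measure_closedBall_pos _ _ hε).ne'
  simp only [ballAvg_eq_lintegral_indicator_div, ENNReal.div_eq_inv_mul]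
  rw [lintegral_const_mul' _ _ (ENNReal.inv_ne_top.2 hvol),
    lintegral_lintegral_swap (f := fun x z => {q : Euc d × Euc d | dist q.2 q.1 ≤ ε}.indicator
      (fun q => f q.2) (x, z)) (measurable_indicator_dist_le ε hf).aemeasurable,
    ← lintegral_const_mul' _ _ (ENNReal.inv_ne_top.2 hvol)]
  congr 1
  funext z
  simp only [hslice]
  rw [lintegral_indicator_const measurableSet_closedBall,
    Measure.addHaar_closedBall_center volume z, mul_left_comm,
    ENNReal.inv_mul_cancel hvol measure_closedBall_lt_top.ne, mul_one]

theorem ballAvg_mono {ε : ℝ} {f g : Euc d → ℝ≥0∞} (h : ∀ x, f x ≤ g x) (x : Euc d) :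
    ballAvg ε f x ≤ ballAvg ε g x :=
  lintegral_mono h

theorem ballAvg_le_add {ε : ℝ} (hε : 0 < ε) {f g : Euc d → ℝ≥0∞} {K : ℝ≥0∞}
    (h : ∀ x, f x ≤ K + g x) (x : Euc d) : ballAvg ε f x ≤ K + ballAvg ε g x := by
  have hvol : volume (closedBall (0 : Euc d) ε) ≠ 0 := (measure_closedBall_pos _ _ hε).ne'
  calc ballAvg ε f x ≤ ballAvg ε (fun z => K + g z) x := ballAvg_mono h x
    _ = K + ballAvg ε g x := by
      rw [ballAvg_eq, ballAvg_eq, lintegral_add_left measurable_const, setLIntegral_const,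
        Measure.addHaar_closedBall_center, ENNReal.add_div, mul_div_assoc,
        ENNReal.div_self hvol measure_closedBall_lt_top.ne, mul_one]

theorem ballAvg_rpow_le {ε : ℝ} (hε : 0 < ε) {f : Euc d → ℝ≥0∞} (hf : Measurable f) {p : ℝ}
    (hp : 1 ≤ p) (x : Euc d) : ballAvg ε f x ^ p ≤ ballAvg ε (fun z => f z ^ p) x := by
  have : NeZero (volume.restrict (closedBall x ε)) :=
    ⟨Measure.restrict_eq_zero.not.2 (measure_closedBall_pos _ _ hε).ne'⟩
  have : IsFiniteMeasure (volume.restrict (closedBall x ε)) :=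
    isFiniteMeasure_restrict.2 measure_closedBall_lt_top.ne
  have hJensen := eLpNorm'_le_eLpNorm'_of_exponent_le one_pos hp
    ((volume.restrict (closedBall x ε) univ)⁻¹ • volume.restrict (closedBall x ε))
    hf.aestronglyMeasurable
  simp only [eLpNorm', enorm_eq_self, ENNReal.rpow_one, div_one] at hJensen
  rwa [one_div, ENNReal.le_rpow_inv_iff (by linarith)] at hJensen

theorem lintegral_ballAvg_rpow_le {ε : ℝ} (hε : 0 < ε) {f : Euc d → ℝ≥0∞} (hf : Measurable f)
    {p : ℝ} (hp : 1 ≤ p) : ∫⁻ x, ballAvg ε f x ^ p ≤ ∫⁻ x, f x ^ p :=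
  (lintegral_mono fun x => ballAvg_rpow_le hε hf hp x).trans_eq
    (lintegral_ballAvg hε (hf.pow_const p))

/-- `k` is an averaging kernel on the ball of radius `ε` about `x`: a continuous probability
density supported there and bounded by `κ` times the uniform one. -/
structure IsBallKernel (κ : ℝ≥0) (x : Euc d) (ε : ℝ) (k : Euc d → ℝ) : Prop where
  continuous : Continuous k
  nonneg : ∀ z, 0 ≤ k z
  eq_zero : ∀ z ∉ closedBall x ε, k z = 0
  le : ∀ z, ENNReal.ofReal (k z) ≤ κ / volume (closedBall (0 : Euc d) ε)
  integral_eq_one : ∫ z, k z = 1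

namespace IsBallKernel

variable {E : Type*} [NormedAddCommGroup E] [NormedSpace ℝ E] {Ω : Set (Euc d)} {κ : ℝ≥0}
  {x : Euc d} {ε : ℝ} {k : Euc d → ℝ}

theorem hasCompactSupport (hk : IsBallKernel κ x ε k) : HasCompactSupport k :=
  .intro (isCompact_closedBall x ε) hk.eq_zero

theorem integrable (hk : IsBallKernel κ x ε k) : Integrable k :=
  hk.continuous.integrable_of_hasCompactSupport hk.hasCompactSupport

theorem setIntegral_le_one (hk : IsBallKernel κ x ε k) : ∫ z in Ω, k z ≤ 1 :=
  (setIntegral_le_integral hk.integrable (.of_forall hk.nonneg)).trans_eq hk.integral_eq_one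

theorem integrable_smul (hk : IsBallKernel κ x ε k) {μ : Measure (Euc d)} {f : Euc d → E}
    (hf : Integrable f μ) : Integrable (fun z => k z • f z) μ := by
  obtain ⟨B, hB⟩ := hk.hasCompactSupport.exists_bound_of_continuous hk.continuous
  exact hf.bdd_smul B hk.continuous.aestronglyMeasurable (.of_forall hB)

theorem setLIntegral_mul_le (hk : IsBallKernel κ x ε k) (hε : 0 < ε) (hΩ : MeasurableSet Ω)
    (f : Euc d → ℝ≥0∞) :
    ∫⁻ z in Ω, ENNReal.ofReal (k z) * f z ≤ κ * ballAvg ε (Ω.indicator f) x := by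
  have hvol : volume (closedBall (0 : Euc d) ε) ≠ 0 := (measure_closedBall_pos _ _ hε).ne'
  have hκ : κ / volume (closedBall (0 : Euc d) ε) ≠ ⊤ := ENNReal.div_ne_top ENNReal.coe_ne_top hvol
  rw [ballAvg_eq, ← mul_div_assoc, ENNReal.mul_div_right_comm, ← lintegral_indicator hΩ,
    ← lintegral_indicator measurableSet_closedBall, ← lintegral_const_mul' _ _ hκ]
  refine lintegral_mono fun z => ?_
  by_cases hz : z ∈ Ω
  · by_cases hzx : z ∈ closedBall x ε
    · simpa [hz, hzx] using mul_le_mul_left (hk.le z) (f z)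
    · simp [hz, hk.eq_zero z hzx]
  · simp [hz]

theorem enorm_setIntegral_smul_le (hk : IsBallKernel κ x ε k) (hε : 0 < ε) (hΩ : MeasurableSet Ω)
    (f : Euc d → E) :
    ‖∫ z in Ω, k z • f z‖ₑ ≤ κ * ballAvg ε (Ω.indicator fun z => ‖f z‖ₑ) x := by
  refine (enorm_integral_le_lintegral_enorm _).trans ?_
  simp only [enorm_smul, Real.enorm_eq_ofReal (hk.nonneg _)]
  exact hk.setLIntegral_mul_le hε hΩ _

theorem enorm_setIntegral_smul_sub_apply_le (hk : IsBallKernel κ x ε k) (hΩ : MeasurableSet Ω)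
    {b : Euc d → E} {τ : ℝ} (hτ0 : 0 ≤ τ) (hτ : ∀ z ∈ Ω, dist z x ≤ ε → ‖b z - b x‖ ≤ τ) :
    ‖∫ z in Ω, k z • (b z - b x)‖ₑ ≤ ENNReal.ofReal τ := by
  rw [← ofReal_norm]
  refine ENNReal.ofReal_le_ofReal ?_
  have hle : ∀ᵐ z ∂volume.restrict Ω, ‖k z • (b z - b x)‖ ≤ k z * τ := by
    filter_upwards [ae_restrict_mem hΩ] with z hzΩ
    rw [norm_smul, Real.norm_of_nonneg (hk.nonneg z)]
    by_cases hz : z ∈ closedBall x ε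
    · exact mul_le_mul_of_nonneg_left (hτ z hzΩ hz) (hk.nonneg z)
    · simp [hk.eq_zero z hz]
  calc ‖∫ z in Ω, k z • (b z - b x)‖ ≤ ∫ z in Ω, k z * τ :=
        norm_integral_le_of_norm_le (hk.integrable.integrableOn.mul_const τ) hle
    _ = (∫ z in Ω, k z) * τ := integral_mul_const ..
    _ ≤ τ := mul_le_of_le_one_left hτ0 hk.setIntegral_le_one

-- Compare `a` with a nearby compactly supported `b` that oscillates by at most `τ` on the ball.
theorem enorm_setIntegral_smul_sub_le [CompleteSpace E] (hk : IsBallKernel κ x ε k) (hε : 0 < ε)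
    (hΩ : MeasurableSet Ω) {a b : Euc d → E} (ha : IntegrableOn a Ω) (hb : Integrable b)
    (hb0 : ∀ z ∉ Ω, b z = 0) {τ : ℝ} (hτ : ∀ z, dist z x ≤ ε → ‖b z - b x‖ ≤ τ) :
    ‖(∫ z in Ω, k z • a z) - a x‖ₑ ≤
      κ * ballAvg ε (Ω.indicator fun z => ‖b z - a z‖ₑ) x + ENNReal.ofReal τ + ‖b x - a x‖ₑ := by
  have hsplit : (∫ z in Ω, k z • a z) - a x =
      -(∫ z in Ω, k z • (b z - a z)) + (∫ z, k z • (b z - b x)) + (b x - a x) := by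
    simp only [smul_sub]
    rw [integral_sub (hk.integrable_smul hb.integrableOn) (hk.integrable_smul ha),
      integral_sub (hk.integrable_smul hb) (hk.integrable.smul_const _), integral_smul_const,
      hk.integral_eq_one, one_smul, setIntegral_eq_integral_of_forall_compl_eq_zero (s := Ω)
        (f := fun z => k z • b z) fun z hz => by simp [hb0 z hz]]
    abel
  rw [hsplit]
  refine (enorm_add_le _ _).trans (add_le_add ((enorm_add_le _ _).trans (add_le_add ?_ ?_)) le_rfl)
  · rw [enorm_neg]
    exact hk.enorm_setIntegral_smul_le hε hΩ _
  · simpa using hk.enorm_setIntegral_smul_sub_apply_le .univ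
      ((norm_nonneg _).trans (hτ x (by simpa using hε.le))) fun z _ => hτ z

end IsBallKernel

/-- `ρ` is a smooth probability density supported in the ball of radius `r` about the origin and
bounded by `κ` times the uniform density on the ball of radius `ε`. -/
structure IsMollifier (κ : ℝ≥0) (ε r : ℝ) (ρ : Euc d → ℝ) : Prop where
  contDiff : ContDiff ℝ (⊤ : ℕ∞) ρ
  nonneg : ∀ y, 0 ≤ ρ y
  eq_zero : ∀ y, r ≤ ‖y‖ → ρ y = 0
  le : ∀ y, ENNReal.ofReal (ρ y) ≤ κ / volume (closedBall (0 : Euc d) ε)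
  integral_eq_one : ∫ y, ρ y = 1

namespace IsMollifier

variable {κ : ℝ≥0} {ε r : ℝ} {ρ : Euc d → ℝ}

theorem hasCompactSupport (hρ : IsMollifier κ ε r ρ) : HasCompactSupport ρ :=
  .intro (isCompact_closedBall 0 r) fun y hy => hρ.eq_zero y (by simpa using hy : r < ‖y‖).le

theorem isBallKernel (hρ : IsMollifier κ ε r ρ) {x y : Euc d} (hxy : dist x y + r ≤ ε) :
    IsBallKernel κ x ε fun z => ρ (y - z) where
  continuous := hρ.contDiff.continuous.comp (by fun_prop)
  nonneg z := hρ.nonneg _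
  eq_zero z hz := hρ.eq_zero _ <| by
    have htri := dist_triangle z y x
    rw [mem_closedBall, not_le] at hz
    rw [← dist_eq_norm, dist_comm y z]
    linarith [dist_comm x y]
  le z := hρ.le _
  integral_eq_one := (integral_sub_left_eq_self ρ volume y).trans hρ.integral_eq_one

end IsMollifier

theorem exists_isMollifier (d : ℕ) {r : ℝ} (hr : 0 < r) :
    ∃ κ : ℝ≥0, ∀ ε : ℝ, 0 < ε → ∃ ρ : Euc d → ℝ, IsMollifier κ ε (ε * r) ρ := by
  refine ⟨Real.toNNReal ((2 / r) ^ d), fun ε hε => ?_⟩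
  let b : ContDiffBump (0 : Euc d) :=
    ⟨ε * r / 2, ε * r, by positivity, half_lt_self (by positivity)⟩
  refine ⟨b.normed volume, b.contDiff_normed, b.nonneg_normed, fun y hy => ?_, fun y => ?_,
    b.integral_normed⟩
  · refine Function.notMem_support.1 ?_
    rw [b.support_normed_eq, mem_ball, dist_zero_right]
    exact not_lt.2 hy
  · have hrIn := b.normed_le_div_measure_closedBall_rIn volume y
    have hpos : 0 < volume.real (closedBall (0 : Euc d) b.rIn) :=
      ENNReal.toReal_pos (measure_closedBall_pos _ _ b.rIn_pos).ne' measure_closedBall_lt_top.ne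
    rw [le_div_iff₀ hpos] at hrIn
    have hscale : volume (closedBall (0 : Euc d) ε) =
        ENNReal.ofReal ((2 / r) ^ d) *
          ENNReal.ofReal (volume.real (closedBall (0 : Euc d) b.rIn)) := by
      rw [ofReal_measureReal measure_closedBall_lt_top.ne, Measure.addHaar_closedBall _ _ hε.le,
        Measure.addHaar_closedBall _ _ b.rIn_pos.le, ← mul_assoc,
        ← ENNReal.ofReal_mul (by positivity), finrank_euclideanSpace_fin, ← mul_pow]
      congr 3
      simp only [b]
      field_simp
    rw [ENNReal.le_div_iff_mul_le (.inl (measure_closedBall_pos _ _ hε).ne')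
      (.inl measure_closedBall_lt_top.ne), hscale, mul_left_comm,
      ← ENNReal.ofReal_mul (b.nonneg_normed y)]
    exact mul_le_of_le_one_right' (ENNReal.ofReal_le_one.2 hrIn)

end BallKernel

/-! ### Freezing off small slabs -/

section Freezing

variable {d : ℕ} {p ε τ r : ℝ}

theorem eLpNorm_ofReal_eq {α E : Type*} [MeasurableSpace α] {μ : Measure α} [TopologicalSpace E]
    [ContinuousENorm E] (hp : 0 < p) (f : α → E) :
    eLpNorm f (ENNReal.ofReal p) μ = (∫⁻ x, ‖f x‖ₑ ^ p ∂μ) ^ (1 / p) := by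
  rw [eLpNorm_eq_lintegral_rpow_enorm_toReal (ENNReal.ofReal_pos.2 hp).ne' ENNReal.ofReal_ne_top,
    ENNReal.toReal_ofReal hp.le]

theorem eLpNorm_ofReal_le_iff {α E : Type*} [MeasurableSpace α] {μ : Measure α}
    [TopologicalSpace E] [ContinuousENorm E] (hp : 0 < p) {f : α → E} {c : ℝ≥0∞} :
    eLpNorm f (ENNReal.ofReal p) μ ≤ c ↔ ∫⁻ x, ‖f x‖ₑ ^ p ∂μ ≤ c ^ p := by
  rw [eLpNorm_ofReal_eq hp, one_div, ENNReal.rpow_inv_le_iff hp]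

theorem eLpNorm_ballAvg_le (hε : 0 < ε) (hp : 1 ≤ p) {f : Euc d → ℝ≥0∞} (hf : Measurable f) :
    eLpNorm (ballAvg ε f) (ENNReal.ofReal p) volume ≤ eLpNorm f (ENNReal.ofReal p) volume := by
  simp only [eLpNorm_ofReal_eq (one_pos.trans_le hp), enorm_eq_self]
  exact ENNReal.rpow_le_rpow (lintegral_ballAvg_rpow_le hε hf hp) (by positivity)

theorem eLpNorm_le_of_enorm_le_ballAvg {E : Type*} [NormedAddCommGroup E] {Ω : Set (Euc d)}
    (hΩ : MeasurableSet Ω) (hε : 0 < ε) (hp : 1 ≤ p) {κ : ℝ≥0} {c : ℝ≥0∞} {q f : Euc d → E}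
    (hq : Measurable fun z => ‖q z‖ₑ)
    (hf : ∀ x, ‖f x‖ₑ ≤ κ * ballAvg ε (Ω.indicator fun z => ‖q z‖ₑ) x + c + ‖q x‖ₑ)
    (hqc : eLpNorm q (ENNReal.ofReal p) (volume.restrict Ω) ≤ c) :
    eLpNorm f (ENNReal.ofReal p) (volume.restrict Ω) ≤ (κ + volume Ω ^ (1 / p) + 1) * c := by
  have hp1 : 1 ≤ ENNReal.ofReal p := by simpa using hp
  have hqΩ := hq.indicator hΩ
  have havg := measurable_ballAvg ε hqΩ
  have hconst : eLpNorm (fun _ : Euc d => c) (ENNReal.ofReal p) (volume.restrict Ω) =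
      volume Ω ^ (1 / p) * c := by
    rw [eLpNorm_const' c (ENNReal.ofReal_pos.2 (one_pos.trans_le hp)).ne' ENNReal.ofReal_ne_top,
      ENNReal.toReal_ofReal (by linarith), Measure.restrict_apply_univ, enorm_eq_self, mul_comm]
  calc eLpNorm f (ENNReal.ofReal p) (volume.restrict Ω)
      ≤ eLpNorm (fun x => κ * ballAvg ε (Ω.indicator fun z => ‖q z‖ₑ) x + c + ‖q x‖ₑ)
          (ENNReal.ofReal p) (volume.restrict Ω) := eLpNorm_mono_enorm hf
    _ ≤ eLpNorm (fun x => κ * ballAvg ε (Ω.indicator fun z => ‖q z‖ₑ) x) (ENNReal.ofReal p)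
          (volume.restrict Ω) + eLpNorm (fun _ => c) (ENNReal.ofReal p) (volume.restrict Ω) +
          eLpNorm (fun x => ‖q x‖ₑ) (ENNReal.ofReal p) (volume.restrict Ω) :=
        (eLpNorm_add_le ((havg.const_mul _).add_const _).aestronglyMeasurable
          hq.aestronglyMeasurable hp1).trans (add_le_add_left (eLpNorm_add_le
            (havg.const_mul _).aestronglyMeasurable aestronglyMeasurable_const hp1) _)
    _ ≤ κ * c + volume Ω ^ (1 / p) * c + c := by
        gcongr
        · calc eLpNorm (fun x => κ * ballAvg ε (Ω.indicator fun z => ‖q z‖ₑ) x)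
                (ENNReal.ofReal p) (volume.restrict Ω)
              ≤ κ • eLpNorm (ballAvg ε (Ω.indicator fun z => ‖q z‖ₑ)) (ENNReal.ofReal p)
                (volume.restrict Ω) :=
                eLpNorm_le_nnreal_smul_eLpNorm_of_ae_le_mul' (.of_forall fun x => by simp) _
            _ ≤ κ * eLpNorm (Ω.indicator fun z => ‖q z‖ₑ) (ENNReal.ofReal p) volume := by
                rw [ENNReal.smul_def, smul_eq_mul]
                gcongr
                exact (eLpNorm_restrict_le _ _ _ _).trans (eLpNorm_ballAvg_le hε hp hqΩ)
            _ ≤ κ * c := by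
                gcongr
                rwa [eLpNorm_indicator_eq_eLpNorm_restrict hΩ, eLpNorm_enorm]
        · exact hconst.le
        · rwa [eLpNorm_enorm]
    _ = (κ + volume Ω ^ (1 / p) + 1) * c := by ring

/-- A family `T` of maps, one for each coordinate, moving the coordinates by at most `r`. Freezing
refers to the places where some `deriv (T k)` vanishes: the `k`-th coordinate is locally constant
there. -/
structure IsFreezing (r : ℝ) (T : Fin d → ℝ → ℝ) : Prop where
  contDiff : ∀ k, ContDiff ℝ (⊤ : ℕ∞) (T k)
  abs_sub_le : ∀ k s, |T k s - s| ≤ r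
  deriv_mem : ∀ k s, deriv (T k) s ∈ Icc 0 1

/-- The points at which `T` does not freeze all coordinates. -/
def movingSet (T : Fin d → ℝ → ℝ) : Set (Euc d) :=
  {x | ∃ k, deriv (T k) (x k) ≠ 0}

theorem measurableSet_movingSet (T : Fin d → ℝ → ℝ) : MeasurableSet (movingSet T) := by
  have hunion : movingSet T = ⋃ k, (fun x : Euc d => deriv (T k) (x k)) ⁻¹' {0}ᶜ := by
    ext x
    simp [movingSet]
  rw [hunion]
  exact .iUnion fun k => (measurable_deriv (T k)).comp
    (by fun_prop : Measurable fun x : Euc d => x k) (measurableSet_singleton 0).compl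

-- Apply the one-dimensional construction to the coordinate marginals of the measure `h dx`.
theorem exists_isFreezing_lintegral_closedBall_le {h : Euc d → ℝ≥0∞} (hr : 0 < r) (hε : 0 < ε)
    {c : ℝ} (hc : 0 < c) (hh : ∫⁻ z, h z ≤ ENNReal.ofReal c) :
    ∃ T : Fin d → ℝ → ℝ, IsFreezing r T ∧
      ∀ x ∈ movingSet T, ∫⁻ z in closedBall x ε, h z ≤ ENNReal.ofReal (8 / r * ε * c) := by
  have hcoord (k : Fin d) : Measurable fun z : Euc d => z k := by fun_prop
  have hmass (k : Fin d) :
      (volume.withDensity h).map (fun z => z k) univ ≤ ENNReal.ofReal c := by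
    rw [Measure.map_apply (hcoord k) .univ, preimage_univ, withDensity_apply _ .univ,
      Measure.restrict_univ]
    exact hh
  choose T hT hTr hT01 hTslab using fun k => exists_contDiff_freezing _ hr hε hc (hmass k)
  refine ⟨T, ⟨hT, hTr, hT01⟩, fun x ⟨k, hk⟩ => le_trans ?_ (hTslab k _ hk)⟩
  rw [Measure.map_apply (hcoord k) measurableSet_closedBall,
    withDensity_apply _ (hcoord k measurableSet_closedBall)]
  exact lintegral_mono_set fun z hz => (PiLp.dist_apply_le z x k).trans hz

/-- The contribution of `f` to the gradient error of a transport at scale `ε` with coordinates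
frozen by `T`. -/
def slabError (T : Fin d → ℝ → ℝ) (ε : ℝ) (f : Euc d → ℝ≥0∞) (x : Euc d) : ℝ≥0∞ :=
  ENNReal.ofReal ε * (movingSet T).indicator (ballAvg ε f) x

theorem lintegral_slabError_rpow_le (T : Fin d → ℝ → ℝ) {f : Euc d → ℝ≥0∞} (hf : Measurable f)
    (hp : 1 ≤ p) (hε : 0 < ε) :
    ∫⁻ x, slabError T ε f x ^ p ≤ ENNReal.ofReal (ε ^ p) * ∫⁻ x, f x ^ p := by
  have hp0 : 0 ≤ p := by linarith
  calc ∫⁻ x, slabError T ε f x ^ p ≤ ∫⁻ x, ENNReal.ofReal (ε ^ p) * ballAvg ε f x ^ p := by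
        refine lintegral_mono fun x => ?_
        rw [← ENNReal.ofReal_rpow_of_pos hε, ← ENNReal.mul_rpow_of_nonneg _ _ hp0, slabError]
        gcongr
        exact indicator_le_self _ _ x
    _ ≤ ENNReal.ofReal (ε ^ p) * ∫⁻ x, f x ^ p := by
        rw [lintegral_const_mul' _ _ ENNReal.ofReal_ne_top]
        exact mul_le_mul_right (lintegral_ballAvg_rpow_le hε hf hp) _

theorem ofReal_mul_ballAvg_le {f : Euc d → ℝ≥0∞} (hf : Measurable f) (hp : 1 ≤ p) (hε : 0 < ε)
    (hτ : 0 ≤ τ) (hr : 0 < r) {x : Euc d}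
    (hx : ∫⁻ z in closedBall x ε, f z ^ p ≤ ENNReal.ofReal (r * ε * τ ^ p)) :
    ENNReal.ofReal ε * ballAvg ε f x ≤
      (ENNReal.ofReal r / volume (ball (0 : Euc d) 1)) ^ (1 / p) *
        ENNReal.ofReal (ε ^ (1 - ((d : ℝ) - 1) / p) * τ) := by
  have hp0 : 0 < p := by linarith
  have hpow : ε ^ p * (r * ε * τ ^ p) = r * ε ^ d * (ε ^ (1 - ((d : ℝ) - 1) / p) * τ) ^ p := by
    rw [Real.mul_rpow (by positivity) hτ, ← Real.rpow_mul hε.le, sub_mul, one_mul,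
      div_mul_cancel₀ _ hp0.ne', ← Real.rpow_natCast]
    have hexp : ε ^ p * ε = ε ^ (d : ℝ) * ε ^ (p - ((d : ℝ) - 1)) := by
      rw [← Real.rpow_add hε, ← Real.rpow_add_one hε.ne']
      congr 1
      ring
    linear_combination (r * τ ^ p) * hexp
  rw [← ENNReal.rpow_le_rpow_iff hp0, ENNReal.mul_rpow_of_nonneg _ _ hp0.le,
    ENNReal.mul_rpow_of_nonneg _ _ hp0.le, ← ENNReal.rpow_mul, one_div_mul_cancel hp0.ne',
    ENNReal.rpow_one, ENNReal.ofReal_rpow_of_pos hε,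
    ENNReal.ofReal_rpow_of_nonneg (by positivity) hp0.le]
  calc ENNReal.ofReal (ε ^ p) * ballAvg ε f x ^ p
      ≤ ENNReal.ofReal (ε ^ p) * (ENNReal.ofReal (r * ε * τ ^ p) /
          volume (closedBall (0 : Euc d) ε)) := by
        gcongr
        refine (ballAvg_rpow_le hε hf hp x).trans ?_
        rw [ballAvg_eq]
        gcongr
    _ = ENNReal.ofReal r * ENNReal.ofReal ((ε ^ (1 - ((d : ℝ) - 1) / p) * τ) ^ p) *
          ENNReal.ofReal (ε ^ d) / (ENNReal.ofReal (ε ^ d) * volume (ball (0 : Euc d) 1)) := by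
        rw [← mul_div_assoc, ← ENNReal.ofReal_mul (by positivity), hpow, mul_right_comm r,
          ENNReal.ofReal_mul (by positivity), ENNReal.ofReal_mul hr.le,
          Measure.addHaar_closedBall _ _ hε.le, finrank_euclideanSpace_fin]
    _ = ENNReal.ofReal r / volume (ball (0 : Euc d) 1) *
          ENNReal.ofReal ((ε ^ (1 - ((d : ℝ) - 1) / p) * τ) ^ p) := by
        rw [mul_comm (ENNReal.ofReal (ε ^ d)), ENNReal.mul_div_mul_right _ _ (by positivity)
          ENNReal.ofReal_ne_top, ENNReal.mul_div_right_comm]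

theorem exists_isFreezing_isSlabError (d : ℕ) (hp : 1 ≤ p) (hr : 0 < r) :
    ∃ C : ℝ≥0, ∀ ε τ : ℝ, 0 < ε → 0 < τ → ∀ f : Euc d → ℝ≥0∞, Measurable f →
      ∫⁻ z, f z ^ p ≤ ENNReal.ofReal (τ ^ p) →
      ∃ T : Fin d → ℝ → ℝ, IsFreezing r T ∧ IsSlabError p C ε τ (slabError T ε f) := by
  set c : ℝ≥0∞ := (ENNReal.ofReal (8 / r) / volume (ball (0 : Euc d) 1)) ^ (1 / p)
  have hc : c ≠ ⊤ := ENNReal.rpow_ne_top_of_nonneg (by positivity)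
    (ENNReal.div_ne_top ENNReal.ofReal_ne_top (measure_ball_pos _ _ one_pos).ne')
  refine ⟨max 1 c.toNNReal, fun ε τ hε hτ f hf hfτ => ?_⟩
  have hcmax : c ≤ (max 1 c.toNNReal : ℝ≥0) := by
    rw [← ENNReal.coe_toNNReal hc]
    exact_mod_cast le_max_right _ _
  obtain ⟨T, hT, hslab⟩ := exists_isFreezing_lintegral_closedBall_le hr hε
    (show 0 < τ ^ p by positivity) hfτ
  refine ⟨T, hT, ((measurable_ballAvg ε hf).indicator (measurableSet_movingSet T)).const_mul _,
    fun x => ?_, ?_⟩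
  · by_cases hx : x ∈ movingSet T
    · rw [slabError, indicator_of_mem hx]
      exact (ofReal_mul_ballAvg_le hf hp hε hτ.le (by positivity) (hslab x hx)).trans (by gcongr)
    · simp [slabError, hx]
  · refine (lintegral_slabError_rpow_le T hf hp hε).trans ?_
    rw [ENNReal.ofReal_mul (by positivity)]
    refine (mul_le_mul_right hfτ _).trans (le_mul_of_one_le_left' ?_)
    exact_mod_cast le_max_left 1 c.toNNReal

end Freezing

/-! ### Transport -/

section Transport

variable {d m : ℕ} {Ω : Set (Euc d)} {ε r : ℝ} {X : Euc d → Euc d} {T : Fin d → ℝ → ℝ}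

/-- The map acting on the `k`-th coordinate by `T k`. -/
def coordMap (T : Fin d → ℝ → ℝ) (x : Euc d) : Euc d :=
  WithLp.toLp 2 fun k => T k (x k)

/-- The displacement of `x` by `-ε` along the field `X`, evaluated at the frozen point
`coordMap T x`. -/
def transport (ε : ℝ) (X : Euc d → Euc d) (T : Fin d → ℝ → ℝ) (x : Euc d) : Euc d :=
  x - ε • X (coordMap T x)

theorem IsFreezing.contDiff_coordMap (hT : IsFreezing r T) :
    ContDiff ℝ (⊤ : ℕ∞) (coordMap T) :=
  contDiff_euclidean.2 fun k =>
    (hT.contDiff k).comp (EuclideanSpace.proj k : Euc d →L[ℝ] ℝ).contDiff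

theorem IsFreezing.contDiff_transport (hT : IsFreezing r T) (hX : ContDiff ℝ (⊤ : ℕ∞) X) :
    ContDiff ℝ (⊤ : ℕ∞) (transport ε X T) :=
  contDiff_id.sub ((hX.comp hT.contDiff_coordMap).const_smul ε)

theorem IsFreezing.fderiv_coordMap_single (hT : IsFreezing r T) (x : Euc d) (k : Fin d) :
    fderiv ℝ (coordMap T) x (EuclideanSpace.single k 1) =
      deriv (T k) (x k) • EuclideanSpace.single k (1 : ℝ) := by
  have hcoord (i : Fin d) : HasFDerivAt (fun y : Euc d => coordMap T y i)
      (deriv (T i) (x i) • (EuclideanSpace.proj i : Euc d →L[ℝ] ℝ)) x :=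
    (((hT.contDiff i).differentiable (by simp) (x i)).hasDerivAt).comp_hasFDerivAt x
      (EuclideanSpace.proj i : Euc d →L[ℝ] ℝ).hasFDerivAt
  ext i
  have hproj : HasFDerivAt (fun y : Euc d => coordMap T y i) _ x :=
    (EuclideanSpace.proj i : Euc d →L[ℝ] ℝ).hasFDerivAt.comp x
      (hT.contDiff_coordMap.differentiable (by simp) x).hasFDerivAt
  have happly := DFunLike.congr_fun (hproj.unique (hcoord i)) (EuclideanSpace.single k (1 : ℝ))
  rcases eq_or_ne i k with rfl | hik
  · simpa using happly
  · simpa [hik] using happly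

theorem IsFreezing.norm_coordMap_sub_le (hT : IsFreezing r T) (hr : 0 ≤ r) (x : Euc d) :
    ‖coordMap T x - x‖ ≤ (d + 1) * r := by
  have hsq : ‖coordMap T x - x‖ ^ 2 ≤ ((d + 1) * r) ^ 2 := by
    calc ‖coordMap T x - x‖ ^ 2 = ∑ k, (T k (x k) - x k) ^ 2 := by
          simp [EuclideanSpace.real_norm_sq_eq, coordMap]
      _ ≤ ∑ _k : Fin d, r ^ 2 :=
          Finset.sum_le_sum fun k _ => sq_le_sq' (abs_le.1 (hT.abs_sub_le k _)).1
            (abs_le.1 (hT.abs_sub_le k _)).2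
      _ = d * r ^ 2 := by simp
      _ ≤ ((d + 1) * r) ^ 2 := by
          rw [mul_pow]
          gcongr
          nlinarith [Nat.cast_nonneg (α := ℝ) d]
  exact le_of_sq_le_sq hsq (by positivity)

theorem dist_transport_le (hε : 0 ≤ ε) (hX : ∀ x, ‖X x‖ ≤ 1 / 2) (x : Euc d) :
    dist x (transport ε X T x) ≤ ε / 2 := by
  rw [dist_eq_norm, transport, sub_sub_cancel, norm_smul, Real.norm_of_nonneg hε]
  linarith [mul_le_mul_of_nonneg_left (hX (coordMap T x)) hε]

theorem norm_fderiv_apply_le (V : Euc d → Euc m) (y a : Euc d) (i : Fin m) :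
    ‖fderiv ℝ V y a i‖ ≤ d * ‖smoothJac V y‖ * ‖a‖ := by
  have hexpand : fderiv ℝ V y a i = ∑ j, a j * smoothJac V y i j := by
    conv_lhs => rw [← (EuclideanSpace.basisFun (Fin d) ℝ).sum_repr a]
    simp [map_sum, smoothJac]
  calc ‖fderiv ℝ V y a i‖ ≤ ∑ _j : Fin d, ‖a‖ * ‖smoothJac V y‖ := by
        rw [hexpand]
        refine norm_sum_le_of_le _ fun j _ => ?_
        rw [norm_mul]
        exact mul_le_mul (PiLp.norm_apply_le a j)
          ((norm_le_pi_norm (smoothJac V y i) j).trans (norm_le_pi_norm (smoothJac V y) i))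
          (norm_nonneg _) (norm_nonneg _)
    _ = d * ‖smoothJac V y‖ * ‖a‖ := by
        rw [Finset.sum_const, Finset.card_univ, Fintype.card_fin, nsmul_eq_mul]
        ring

theorem IsFreezing.smoothJac_comp_transport (hT : IsFreezing r T) (hX : ContDiff ℝ (⊤ : ℕ∞) X)
    {V : Euc d → Euc m} (hV : ContDiff ℝ (⊤ : ℕ∞) V) (x : Euc d) (i : Fin m) (k : Fin d) :
    smoothJac (V ∘ transport ε X T) x i k = smoothJac V (transport ε X T x) i k -
      ε * deriv (T k) (x k) * fderiv ℝ V (transport ε X T x)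
        (fderiv ℝ X (coordMap T x) (EuclideanSpace.single k 1)) i := by
  have hXT : HasFDerivAt (X ∘ coordMap T) _ x :=
    (hX.differentiable (by simp) _).hasFDerivAt.comp x
      (hT.contDiff_coordMap.differentiable (by simp) x).hasFDerivAt
  have hP : HasFDerivAt (transport ε X T) _ x := (hasFDerivAt_id x).sub (hXT.const_smul ε)
  have hVP : HasFDerivAt (V ∘ transport ε X T) _ x :=
    (hV.differentiable (by simp) _).hasFDerivAt.comp x hP
  rw [smoothJac, hVP.fderiv]
  simp [hT.fderiv_coordMap_single, smoothJac, mul_assoc]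

theorem IsFreezing.norm_smoothJac_comp_transport_sub_le (hT : IsFreezing r T) (hε : 0 ≤ ε)
    (hX : ContDiff ℝ (⊤ : ℕ∞) X) {B : ℝ} (hB : ∀ x, ‖fderiv ℝ X x‖ ≤ B) {V : Euc d → Euc m}
    (hV : ContDiff ℝ (⊤ : ℕ∞) V) (x : Euc d) :
    ‖smoothJac (V ∘ transport ε X T) x - smoothJac V (transport ε X T x)‖ ≤
      (movingSet T).indicator (fun x => ε * (d * B * ‖smoothJac V (transport ε X T x)‖)) x := by
  by_cases hx : x ∈ movingSet T
  · have hB0 : 0 ≤ B := (norm_nonneg _).trans (hB 0)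
    rw [indicator_of_mem hx]
    refine (pi_norm_le_iff_of_nonneg (by positivity)).2 fun i =>
      (pi_norm_le_iff_of_nonneg (by positivity)).2 fun k => ?_
    obtain ⟨hT0, hT1⟩ := hT.deriv_mem k (x k)
    have hDX : ‖fderiv ℝ X (coordMap T x) (EuclideanSpace.single k 1)‖ ≤ B := by
      simpa using ((fderiv ℝ X (coordMap T x)).le_opNorm (EuclideanSpace.single k 1)).trans
        (mul_le_mul_of_nonneg_right (hB _) (norm_nonneg _))
    rw [Pi.sub_apply, Pi.sub_apply, hT.smoothJac_comp_transport hX hV, sub_sub_cancel_left,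
      norm_neg, norm_mul, norm_mul, Real.norm_of_nonneg hε, Real.norm_of_nonneg hT0, mul_assoc]
    refine mul_le_mul_of_nonneg_left ?_ hε
    calc deriv (T k) (x k) * ‖fderiv ℝ V (transport ε X T x)
          (fderiv ℝ X (coordMap T x) (EuclideanSpace.single k 1)) i‖
        ≤ 1 * (d * ‖smoothJac V (transport ε X T x)‖ * B) := by
          gcongr
          exact (norm_fderiv_apply_le _ _ _ _).trans (by gcongr)
      _ = d * B * ‖smoothJac V (transport ε X T x)‖ := by ring
  · rw [indicator_of_notMem hx, norm_le_zero_iff]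
    ext i k
    have hk : deriv (T k) (x k) = 0 := not_not.1 fun hne => hx ⟨k, hne⟩
    simp [hT.smoothJac_comp_transport hX hV, hk]

theorem dist_le_of_mollify_ne_zero {E : Type*} [NormedAddCommGroup E] [NormedSpace ℝ E]
    {κ : ℝ≥0} {δ : ℝ} {ρ : Euc d → ℝ} (hρ : IsMollifier κ ε δ ρ) {f : Euc d → E} {y : Euc d}
    (hy : mollify Ω ρ f y ≠ 0) : ∃ z ∈ Ω, dist y z < δ := by
  contrapose! hy
  refine setIntegral_eq_zero_of_forall_eq_zero fun z hz => ?_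
  rw [hρ.eq_zero _ (dist_eq_norm y z ▸ hy z hz), zero_smul]

theorem IsUniformlyInward.mem_of_dist_transport_le {s δ : ℝ} (hX : IsUniformlyInward Ω r X)
    (hX2 : ∀ x, ‖X x‖ ≤ 1 / 2) (hT : IsFreezing s T) (hs : 0 ≤ s) (hsr : (d + 1) * s ≤ r / 4)
    (hε : 0 < ε) (hεr : ε < r / 4) (hδr : δ < r) (hδ : δ ≤ 1 / 2) {x z : Euc d}
    (hz : z ∈ closure Ω) (hxz : dist (transport ε X T x) z ≤ ε * δ) : x ∈ Ω := by
  have hball : dist (coordMap T x) z < r := by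
    have hcoord : dist (coordMap T x) x ≤ r / 4 := by
      rw [dist_eq_norm]
      exact (hT.norm_coordMap_sub_le hs x).trans hsr
    have htri := dist_triangle4 (coordMap T x) x (transport ε X T x) z
    nlinarith [dist_transport_le (T := T) hε.le hX2 x]
  have hsmall : ‖ε⁻¹ • (transport ε X T x - z)‖ < r := by
    rw [norm_smul, norm_inv, Real.norm_of_nonneg hε.le, inv_mul_lt_iff₀ hε, ← dist_eq_norm]
    nlinarith
  convert hX z hz (coordMap T x) hball ε hε (by linarith) _ hsmall using 1
  rw [smul_add, smul_inv_smul₀ hε.ne', transport]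
  abel

theorem IsUniformlyInward.isCcSmooth_mollify_comp_transport {s δ : ℝ} {κ : ℝ≥0} {ρ : Euc d → ℝ}
    {v : Euc d → Euc m} (hX : IsUniformlyInward Ω r X) (hXs : ContDiff ℝ (⊤ : ℕ∞) X)
    (hX2 : ∀ x, ‖X x‖ ≤ 1 / 2) (hT : IsFreezing s T) (hs : 0 ≤ s) (hsr : (d + 1) * s ≤ r / 4)
    (hε : 0 < ε) (hεr : ε < r / 4) (hδ0 : 0 ≤ δ) (hδr : δ < r) (hδ : δ ≤ 1 / 2)
    (hρ : IsMollifier κ ε (ε * δ) ρ) (hΩb : Bornology.IsBounded Ω) (hΩ : MeasurableSet Ω)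
    (hv : IntegrableOn v Ω) : IsCcSmooth Ω (mollify Ω ρ v ∘ transport ε X T) := by
  have hP : ContDiff ℝ (⊤ : ℕ∞) (transport ε X T) := hT.contDiff_transport hXs
  set K : Set (Euc d) := transport ε X T ⁻¹' cthickening (ε * δ) Ω
  have hKcl : IsClosed K := isClosed_cthickening.preimage hP.continuous
  have hsupp : tsupport (mollify Ω ρ v ∘ transport ε X T) ⊆ K := by
    refine closure_minimal (fun x hx => ?_) hKcl
    obtain ⟨z, hz, hdist⟩ := dist_le_of_mollify_ne_zero hρ hx
    exact mem_cthickening_of_dist_le _ z _ _ hz hdist.le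
  have hKΩ : K ⊆ Ω := by
    intro x hx
    have hx' : transport ε X T x ∈ cthickening (ε * δ) (closure Ω) := by
      rwa [cthickening_closure]
    rw [hΩb.isCompact_closure.cthickening_eq_biUnion_closedBall (by positivity)] at hx'
    obtain ⟨z, hz, hdist⟩ := mem_iUnion₂.1 hx'
    exact hX.mem_of_dist_transport_le hX2 hT hs hsr hε hεr hδr hδ hz hdist
  exact ⟨(contDiff_mollify hΩ hρ.contDiff hρ.hasCompactSupport hv).comp hP,
    (isCompact_of_isClosed_isBounded hKcl (hΩb.subset hKΩ)).of_isClosed_subset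
      (isClosed_tsupport _) hsupp, hsupp.trans hKΩ⟩

end Transport

/-! ### Approximation by compactly supported maps -/

section Approximation

variable {d m : ℕ} {Ω : Set (Euc d)} {p ε τ : ℝ} {κ C : ℝ≥0}

theorem IsBallKernel.mono {κ' : ℝ≥0} {x : Euc d} {k : Euc d → ℝ} (hk : IsBallKernel κ x ε k)
    (hκ : κ ≤ κ') : IsBallKernel κ' x ε k where
  __ := hk
  le z := (hk.le z).trans (by gcongr)

theorem IsSlabError.mono {C' : ℝ≥0} {Y : Euc d → ℝ≥0∞} (hY : IsSlabError p C ε τ Y)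
    (hC : C ≤ C') : IsSlabError p C' ε τ Y where
  measurable := hY.measurable
  le x := (hY.le x).trans (by gcongr)
  lintegral_rpow_le := hY.lintegral_rpow_le.trans (by gcongr)

theorem IsSlabError.eLpNorm_le {E : Type*} [NormedAddCommGroup E] {Y : Euc d → ℝ≥0∞}
    (hY : IsSlabError p C ε τ Y) (hp : 1 ≤ p) (hε : ε ∈ Ioc 0 1) (hτ : 0 ≤ τ) {c : ℝ≥0}
    {f : Euc d → E} (hf : ∀ x, ‖f x‖ₑ ≤ c * (ENNReal.ofReal τ + Y x)) :
    eLpNorm f (ENNReal.ofReal p) (volume.restrict Ω) ≤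
      c * ((volume Ω ^ (1 / p) + C ^ (1 / p)) * ENNReal.ofReal τ) := by
  have hp0 : 0 < p := by linarith
  have hYp : eLpNorm Y (ENNReal.ofReal p) (volume.restrict Ω) ≤ C ^ (1 / p) * ENNReal.ofReal τ := by
    rw [eLpNorm_ofReal_le_iff hp0, ENNReal.mul_rpow_of_nonneg _ _ hp0.le, ← ENNReal.rpow_mul,
      one_div_mul_cancel hp0.ne', ENNReal.rpow_one, ENNReal.ofReal_rpow_of_nonneg hτ hp0.le]
    simp only [enorm_eq_self]
    refine (setLIntegral_le_lintegral _ _).trans (hY.lintegral_rpow_le.trans ?_)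
    gcongr
    exact mul_le_of_le_one_left (by positivity) (Real.rpow_le_one hε.1.le hε.2 hp0.le)
  calc eLpNorm f (ENNReal.ofReal p) (volume.restrict Ω)
      ≤ c • eLpNorm (fun x => ENNReal.ofReal τ + Y x) (ENNReal.ofReal p) (volume.restrict Ω) :=
        eLpNorm_le_nnreal_smul_eLpNorm_of_ae_le_mul' (.of_forall fun x => by simpa using hf x) _
    _ ≤ c * (volume Ω ^ (1 / p) * ENNReal.ofReal τ + C ^ (1 / p) * ENNReal.ofReal τ) := by
        rw [ENNReal.smul_def, smul_eq_mul]
        refine mul_le_mul_right ((eLpNorm_add_le aestronglyMeasurable_const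
          hY.measurable.aestronglyMeasurable (by simpa using hp)).trans
            (add_le_add (le_of_eq ?_) hYp)) _
        rw [eLpNorm_const' _ (ENNReal.ofReal_pos.2 hp0).ne' ENNReal.ofReal_ne_top,
          ENNReal.toReal_ofReal hp0.le, Measure.restrict_apply_univ, enorm_eq_self, mul_comm]
    _ = c * ((volume Ω ^ (1 / p) + C ^ (1 / p)) * ENNReal.ofReal τ) := by ring

theorem IsFreezing.enorm_smoothJac_mollify_comp_transport_sub_le {r δ : ℝ} {X : Euc d → Euc d}
    {T : Fin d → ℝ → ℝ} {ρ : Euc d → ℝ} {v : Euc d → Euc m} {Dv : Euc d → Mat m d} {B CX : ℝ≥0}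
    (hT : IsFreezing r T) (hε : 0 < ε) (hX : ContDiff ℝ (⊤ : ℕ∞) X) (hCX : ∀ x, ‖fderiv ℝ X x‖ ≤ CX)
    (hρ : IsMollifier κ ε δ ρ) (hk : ∀ x, IsBallKernel κ x ε fun z => ρ (transport ε X T x - z))
    (hΩ : MeasurableSet Ω) (hv : MemW1p0 Ω 1 v Dv) {f : Euc d → ℝ≥0∞}
    (hf : ∀ z ∈ Ω, ‖Dv z‖ₑ ≤ B + f z) (x : Euc d) :
    ‖smoothJac (mollify Ω ρ v ∘ transport ε X T) x - mollify Ω ρ Dv (transport ε X T x)‖ₑ ≤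
      (d * CX * κ : ℝ≥0) * (ENNReal.ofReal ε * B + slabError T ε (Ω.indicator f) x) := by
  have hV : ContDiff ℝ (⊤ : ℕ∞) (mollify Ω ρ v) :=
    contDiff_mollify hΩ hρ.contDiff hρ.hasCompactSupport (memLp_one_iff_integrable.1 hv.1.1)
  have hchain := hT.norm_smoothJac_comp_transport_sub_le hε.le hX hCX hV x
  simp only [hv.smoothJac_mollify hΩ (hρ.contDiff.of_le (by simp)) hρ.hasCompactSupport] at hchain
  rw [← ofReal_norm]
  refine (ENNReal.ofReal_le_ofReal hchain).trans ?_
  by_cases hx : x ∈ movingSet T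
  · have havg : ‖mollify Ω ρ Dv (transport ε X T x)‖ₑ ≤ κ * (B + ballAvg ε (Ω.indicator f) x) := by
      refine ((hk x).enorm_setIntegral_smul_le hε hΩ Dv).trans
        (mul_le_mul_right (ballAvg_le_add hε (fun z => ?_) x) _)
      by_cases hz : z ∈ Ω
      · simpa [hz] using hf z hz
      · simp [hz]
    simp only [indicator_of_mem hx, slabError]
    rw [ENNReal.ofReal_mul hε.le, ENNReal.ofReal_mul (by positivity), ofReal_norm]
    calc ENNReal.ofReal ε * (ENNReal.ofReal (d * CX) * ‖mollify Ω ρ Dv (transport ε X T x)‖ₑ)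
        ≤ ENNReal.ofReal ε *
            (ENNReal.ofReal (d * CX) * (κ * (B + ballAvg ε (Ω.indicator f) x))) := by gcongr
      _ = (d * CX * κ : ℝ≥0) * (ENNReal.ofReal ε * B +
            ENNReal.ofReal ε * ballAvg ε (Ω.indicator f) x) := by
          rw [ENNReal.ofReal_mul (by positivity), ENNReal.ofReal_natCast, ENNReal.ofReal_coe_nnreal]
          push_cast
          ring
  · simp [hx]

theorem eLpNorm_setIntegral_smul_sub_le {E : Type*} [NormedAddCommGroup E] [NormedSpace ℝ E]
    [CompleteSpace E] {k : Euc d → Euc d → ℝ} (hk : ∀ x, IsBallKernel κ x ε (k x)) (hε : 0 < ε)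
    (hΩ : MeasurableSet Ω) (hp : 1 ≤ p) {a b : Euc d → E} (ha : IntegrableOn a Ω)
    (hb : Integrable b) (hb0 : ∀ z ∉ Ω, b z = 0)
    (hτ : ∀ x z, dist z x ≤ ε → ‖b z - b x‖ ≤ τ) (hba : Measurable fun z => ‖b z - a z‖ₑ)
    (hbaτ : eLpNorm (b - a) (ENNReal.ofReal p) (volume.restrict Ω) ≤ ENNReal.ofReal τ) :
    eLpNorm (fun x => (∫ z in Ω, k x z • a z) - a x) (ENNReal.ofReal p) (volume.restrict Ω) ≤
      (κ + volume Ω ^ (1 / p) + 1) * ENNReal.ofReal τ :=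
  eLpNorm_le_of_enorm_le_ballAvg hΩ hε hp (q := b - a) hba
    (fun x => (hk x).enorm_setIntegral_smul_sub_le hε hΩ ha hb hb0 (hτ x)) hbaτ

theorem IsCcSmooth.exists_scale {w : Euc d → Euc m} (hw : IsCcSmooth Ω w) (hτ : 0 < τ) {ε₀ : ℝ}
    (hε₀ : 0 < ε₀) :
    ∃ B : ℝ≥0, (∀ z, ‖smoothJac w z‖ₑ ≤ B) ∧ ∃ ε ∈ Ioo 0 ε₀,
      ENNReal.ofReal ε * B ≤ ENNReal.ofReal τ ∧ (∀ x z, dist z x ≤ ε → ‖w z - w x‖ ≤ τ) ∧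
      ∀ x z, dist z x ≤ ε → ‖smoothJac w z - smoothJac w x‖ ≤ τ := by
  have hJ : Continuous (smoothJac w) := continuous_smoothJac hw.contDiff_one
  obtain ⟨B, hB⟩ := hw.hasCompactSupport_smoothJac.exists_bound_of_continuous hJ
  have hosc {F : Type _} [NormedAddCommGroup F] {f : Euc d → F} (hf : Continuous f)
      (hfc : HasCompactSupport f) :
      ∀ᶠ ε in 𝓝[>] (0 : ℝ), ∀ x z, dist z x ≤ ε → ‖f z - f x‖ ≤ τ := by
    obtain ⟨δ, hδ, hunif⟩ :=
      Metric.uniformContinuous_iff.1 (hfc.uniformContinuous_of_continuous hf) τ hτ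
    filter_upwards [Ioo_mem_nhdsGT hδ] with ε hε x z hzx
    exact (dist_eq_norm (f z) (f x) ▸ hunif (hzx.trans_lt hε.2)).le
  have hsmall : ∀ᶠ ε in 𝓝[>] (0 : ℝ), ENNReal.ofReal ε * B.toNNReal ≤ ENNReal.ofReal τ := by
    have hlim : Tendsto (fun ε : ℝ => ε * B.toNNReal) (𝓝[>] 0) (𝓝 0) := by
      have hcont : Continuous fun ε : ℝ => ε * B.toNNReal := by fun_prop
      exact (hcont.tendsto' 0 0 (zero_mul _)).mono_left nhdsWithin_le_nhds
    filter_upwards [hlim.eventually_lt_const hτ] with ε hε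
    rw [← ENNReal.ofReal_coe_nnreal, ← ENNReal.ofReal_mul' NNReal.zero_le_coe]
    exact ENNReal.ofReal_le_ofReal hε.le
  refine ⟨B.toNNReal, fun z => ?_, ?_⟩
  · rw [← ofReal_norm]
    exact ENNReal.ofReal_le_ofReal (hB z)
  · have hpos : ∀ᶠ ε in 𝓝[>] 0, ε ∈ Ioo 0 ε₀ := Ioo_mem_nhdsGT hε₀
    exact (hpos.and (hsmall.and ((hosc hw.1.continuous hw.2.1).and
      (hosc hJ hw.hasCompactSupport_smoothJac)))).exists

/-- `U ∈ C_c^∞(Ω)^m` approximates `v` with amplitude `τ` at the length scale `ε`: up to an error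
controlled by `τ + Y`, the Jacobian of `U` at `x` is the average of `Dv` against `k x`. -/
structure IsAveragedApprox (Ω : Set (Euc d)) (p : ℝ) (C : ℝ≥0) (ε τ : ℝ) (v : Euc d → Euc m)
    (Dv : Euc d → Mat m d) (U : Euc d → Euc m) (k : Euc d → Euc d → ℝ) (Y : Euc d → ℝ≥0∞) :
    Prop where
  isCcSmooth : IsCcSmooth Ω U
  eLpNorm_sub_le : eLpNorm (U - v) (ENNReal.ofReal p) (volume.restrict Ω) ≤ C * ENNReal.ofReal τ
  eLpNorm_smoothJac_sub_le :
    eLpNorm (smoothJac U - Dv) (ENNReal.ofReal p) (volume.restrict Ω) ≤ C * ENNReal.ofReal τ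
  isBallKernel : ∀ x, IsBallKernel C x ε (k x)
  isSlabError : IsSlabError p C ε τ Y
  enorm_smoothJac_sub_le :
    ∀ x, ‖smoothJac U x - ∫ z in Ω, k x z • Dv z‖ₑ ≤ C * (ENNReal.ofReal τ + Y x)

theorem IsSlabError.isAveragedApprox {v w U : Euc d → Euc m} {Dv : Euc d → Mat m d}
    {k : Euc d → Euc d → ℝ} {Y : Euc d → ℝ≥0∞} {c V : ℝ≥0} (hY : IsSlabError p C ε τ Y)
    (hp : 1 ≤ p) (hε : ε ∈ Ioc 0 1) (hτ : 0 ≤ τ) (hΩ : MeasurableSet Ω)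
    (hV : volume Ω ^ (1 / p) ≤ V) (hv : Measurable v) (hDv : Measurable Dv)
    (hvi : IntegrableOn v Ω) (hDvi : IntegrableOn Dv Ω) (hw : IsCcSmooth Ω w)
    (hwv : eLpNorm (w - v) (ENNReal.ofReal p) (volume.restrict Ω) ≤ ENNReal.ofReal τ)
    (hwDv : eLpNorm (smoothJac w - Dv) (ENNReal.ofReal p) (volume.restrict Ω) ≤ ENNReal.ofReal τ)
    (hwτ : ∀ x z, dist z x ≤ ε → ‖w z - w x‖ ≤ τ)
    (hDwτ : ∀ x z, dist z x ≤ ε → ‖smoothJac w z - smoothJac w x‖ ≤ τ)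
    (hk : ∀ x, IsBallKernel κ x ε (k x)) (hU : IsCcSmooth Ω U)
    (hUk : ∀ x, U x = ∫ z in Ω, k x z • v z) (hkDv : Measurable fun x => ∫ z in Ω, k x z • Dv z)
    (hDU : ∀ x, ‖smoothJac U x - ∫ z in Ω, k x z • Dv z‖ₑ ≤ c * (ENNReal.ofReal τ + Y x)) :
    IsAveragedApprox Ω p (κ + V + 1 + C + c * (1 + V + C ^ (1 / p))) ε τ v Dv U k Y := by
  have hJw : Continuous (smoothJac w) := continuous_smoothJac hw.contDiff_one
  have hJU : Continuous (smoothJac U) := continuous_smoothJac hU.contDiff_one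
  have hUsub : U - v = fun x => (∫ z in Ω, k x z • v z) - v x := by
    funext x
    rw [Pi.sub_apply, hUk]
  have hJsub : smoothJac U - Dv = (fun x => smoothJac U x - ∫ z in Ω, k x z • Dv z) +
      fun x => (∫ z in Ω, k x z • Dv z) - Dv x := by
    funext x
    simp
  have hone : κ + volume Ω ^ (1 / p) + 1 ≤ (κ + V + 1 + C : ℝ≥0) := by
    push_cast
    exact (add_le_add_left (add_le_add_right hV _) _).trans le_self_add
  have htwo : c * (volume Ω ^ (1 / p) + C ^ (1 / p)) ≤ (c * (1 + V + C ^ (1 / p)) : ℝ≥0) := by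
    rw [ENNReal.coe_mul, ENNReal.coe_add, ENNReal.coe_add,
      ENNReal.coe_rpow_of_nonneg _ (by positivity)]
    gcongr
    exact hV.trans le_add_self
  refine ⟨hU, ?_, ?_, fun x => (hk x).mono ?_, hY.mono ?_, fun x => (hDU x).trans ?_⟩
  · rw [hUsub]
    refine (eLpNorm_setIntegral_smul_sub_le hk hε.1 hΩ hp hvi hw.integrable
      (fun _ => hw.eq_zero_of_notMem) hwτ (hw.1.continuous.measurable.sub hv).enorm hwv).trans ?_
    rw [ENNReal.coe_add]
    exact mul_le_mul_left (hone.trans le_self_add) _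
  · rw [hJsub]
    refine (eLpNorm_add_le (hJU.measurable.sub hkDv).aestronglyMeasurable
      (hkDv.sub hDv).aestronglyMeasurable (by simpa using hp)).trans
      ((add_le_add (hY.eLpNorm_le hp hε hτ hDU) (eLpNorm_setIntegral_smul_sub_le hk hε.1 hΩ hp hDvi
        hw.integrable_smoothJac (fun _ => hw.smoothJac_eq_zero_of_notMem) hDwτ
        (hJw.measurable.sub hDv).enorm hwDv)).trans ?_)
    rw [← mul_assoc, ← add_mul, ENNReal.coe_add]
    exact mul_le_mul_left ((add_le_add htwo hone).trans_eq (add_comm _ _)) _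
  · rw [add_assoc, add_assoc, add_assoc]
    exact le_self_add
  · exact le_add_self.trans le_self_add
  · refine mul_le_mul_left (ENNReal.coe_le_coe.2 (le_trans ?_ le_add_self)) _
    rw [add_assoc]
    exact le_mul_of_one_le_right' le_self_add

theorem lintegral_indicator_enorm_rpow_le {E : Type*} [NormedAddCommGroup E] {q : Euc d → E}
    (hΩ : MeasurableSet Ω) (hp : 0 < p) (hτ : 0 < τ)
    (hq : eLpNorm q (ENNReal.ofReal p) (volume.restrict Ω) ≤ ENNReal.ofReal τ) :
    ∫⁻ z, Ω.indicator (fun z => ‖q z‖ₑ) z ^ p ≤ ENNReal.ofReal (τ ^ p) := by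
  have hΩq : eLpNorm (Ω.indicator fun z => ‖q z‖ₑ) (ENNReal.ofReal p) volume ≤
      ENNReal.ofReal τ := by
    rwa [eLpNorm_indicator_eq_eLpNorm_restrict hΩ, eLpNorm_enorm]
  simpa only [eLpNorm_ofReal_le_iff hp, enorm_eq_self, ENNReal.ofReal_rpow_of_pos hτ] using hΩq

theorem MemW1p0.exists_isAveragedApprox (hΩ : IsOpen Ω) (hΩb : Bornology.IsBounded Ω)
    (hΩl : HasLipschitzBoundary Ω) (hp : 1 ≤ p) {v : Euc d → Euc m} {Dv : Euc d → Mat m d}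
    (hv : Measurable v) (hDv : Measurable Dv) (h : MemW1p0 Ω (ENNReal.ofReal p) v Dv) :
    ∃ C : ℝ≥0, ∀ τ > 0, ∀ ε₀ ∈ Ioc (0 : ℝ) 1, ∃ ε ∈ Ioo 0 ε₀, ∃ U k Y,
      IsAveragedApprox Ω p C ε τ v Dv U k Y := by
  have hΩm := hΩ.measurableSet
  have hΩv : volume Ω ≠ ⊤ := hΩb.measure_lt_top.ne
  have h₁ : MemW1p0 Ω 1 v Dv := h.mono_exponent hΩv (by simpa using hp)
  have hvi : IntegrableOn v Ω := memLp_one_iff_integrable.1 h₁.1.1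
  have hDvi : IntegrableOn Dv Ω := memLp_one_iff_integrable.1 h₁.1.2.1
  obtain ⟨-, w, hw, hwv, hwDv⟩ := h
  obtain ⟨X, hXs, hXc, hX2, hXΩ⟩ := exists_contDiff_isInward hΩ hΩb hΩl
  obtain ⟨r, hr, hXr⟩ := exists_isUniformlyInward hΩb hXs.continuous hXΩ
  obtain ⟨CX, hCX⟩ := (hXc.fderiv ℝ).exists_bound_of_continuous (hXs.continuous_fderiv (by simp))
  obtain ⟨κ, hκ⟩ := exists_isMollifier d (show 0 < min r 1 / 2 by positivity)
  obtain ⟨C, hC⟩ := exists_isFreezing_isSlabError d hp (show 0 < r / (4 * (d + 1)) by positivity)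
  lift volume Ω ^ (1 / p) to ℝ≥0 using by finiteness with V hV
  refine ⟨κ + V + 1 + C + (d * CX.toNNReal * κ : ℝ≥0) * (1 + V + C ^ (1 / p)),
    fun τ hτ ε₀ hε₀ => ?_⟩
  have hτ' : 0 < ENNReal.ofReal τ := ENNReal.ofReal_pos.2 hτ
  obtain ⟨n, hnv, hnDv⟩ :=
    ((hwv.eventually_lt_const hτ').and (hwDv.eventually_lt_const hτ')).exists
  obtain ⟨B, hB, ε, hε, hεB, hwτ, hDwτ⟩ :=
    (hw n).exists_scale hτ (show 0 < min ε₀ (r / 4) from lt_min hε₀.1 (by positivity))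
  obtain ⟨hεε₀, hεr⟩ := lt_min_iff.1 hε.2
  have hJDv := (continuous_smoothJac (hw n).contDiff_one).measurable.sub hDv
  obtain ⟨T, hT, hY⟩ := hC ε τ hε.1 hτ _ (hJDv.enorm.indicator hΩm)
    (lintegral_indicator_enorm_rpow_le hΩm (by linarith) hτ hnDv.le)
  have hDvB (z : Euc d) : ‖Dv z‖ₑ ≤ B + ‖(smoothJac (w n) - Dv) z‖ₑ := by
    rw [← sub_sub_cancel (smoothJac (w n) z) (Dv z)]
    exact enorm_sub_le.trans (add_le_add_left (hB z) _)
  obtain ⟨ρ, hρ⟩ := hκ ε hε.1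
  have hk (x : Euc d) : IsBallKernel κ x ε fun z => ρ (transport ε X T x - z) := hρ.isBallKernel
    (by nlinarith [dist_transport_le (T := T) hε.1.le hX2 x, hε.1, min_le_right r 1])
  refine ⟨ε, ⟨hε.1, hεε₀⟩, mollify Ω ρ v ∘ transport ε X T, _, _,
    hY.isAveragedApprox hp ⟨hε.1, hεε₀.le.trans hε₀.2⟩ hτ.le hΩm hV.ge hv hDv hvi hDvi (hw n)
      hnv.le hnDv.le hwτ hDwτ hk ?_ (fun _ => rfl) ?_ fun x => ?_⟩
  · exact hXr.isCcSmooth_mollify_comp_transport hXs hX2 hT (by positivity) (by field_simp; rfl)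
      hε.1 hεr (by positivity) (by linarith [min_le_left r 1]) (by linarith [min_le_right r 1]) hρ
      hΩb hΩm hvi
  · exact ((contDiff_mollify hΩm hρ.contDiff hρ.hasCompactSupport hDvi).continuous.comp
      (hT.contDiff_transport hXs).continuous).measurable
  · refine (hT.enorm_smoothJac_mollify_comp_transport_sub_le hε.1 hXs
      (fun x => (hCX x).trans (Real.le_coe_toNNReal _)) hρ hk hΩm h₁ (fun z _ => hDvB z) x).trans ?_
    gcongr

end Approximation

/-! ### Convergence of the energies -/

section ReverseFatou

variable {α : Type*} [MeasurableSpace α] {μ : Measure α}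

theorem limsup_lintegral_le_of_le_add_small {f : ℕ → α → ℝ≥0∞} (hf : ∀ n, Measurable (f n))
    (hdom : ∀ η : ℝ≥0, 0 < η → ∃ (D : α → ℝ≥0∞) (R : ℕ → α → ℝ≥0∞), ∫⁻ x, D x ∂μ ≠ ⊤ ∧
      (∀ n, Measurable (R n)) ∧
      ∀ᶠ n in atTop, ∫⁻ x, R n x ∂μ ≤ η ∧ ∀ᵐ x ∂μ, f n x ≤ D x + R n x) :
    limsup (fun n => ∫⁻ x, f n x ∂μ) atTop ≤ ∫⁻ x, limsup (fun n => f n x) atTop ∂μ := by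
  refine ENNReal.le_of_forall_pos_le_add fun η hη _ => ?_
  obtain ⟨D, R, hD, hR, hev⟩ := hdom η hη
  obtain ⟨N, hN⟩ := eventually_atTop.1 hev
  -- `D` may fail to be measurable: pass to the least function that works in its place.
  set D' : α → ℝ≥0∞ := fun x => ⨆ n, (f (n + N) x - R (n + N) x)
  have hD'm : Measurable D' := .iSup fun n => (hf _).sub (hR _)
  have hD'D : D' ≤ᵐ[μ] D := by
    filter_upwards [ae_all_iff.2 fun n => (hN (n + N) (Nat.le_add_left N n)).2] with x hx
    exact iSup_le fun n => tsub_le_iff_right.2 (hx n)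
  have hfatou : limsup (fun n => ∫⁻ x, min (f (n + N) x) (D' x) ∂μ) atTop ≤
      ∫⁻ x, limsup (fun n => f n x) atTop ∂μ := by
    refine (limsup_lintegral_le D' (fun n => (hf _).min hD'm)
      (fun n => .of_forall fun x => min_le_right _ _)
      ((lintegral_mono_ae hD'D).trans_lt hD.lt_top).ne).trans (lintegral_mono fun x => ?_)
    rw [← limsup_nat_add (fun n => f n x) N]
    exact limsup_le_limsup (.of_forall fun n => min_le_left _ _)
  have hsplit (n : ℕ) :
      ∫⁻ x, f (n + N) x ∂μ ≤ (∫⁻ x, min (f (n + N) x) (D' x) ∂μ) + η := by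
    refine le_trans (lintegral_mono fun x => ?_)
      ((lintegral_add_left ((hf _).min hD'm) (R (n + N))).trans_le
        (add_le_add_right (hN _ (Nat.le_add_left N n)).1 _))
    rw [← min_add_add_right]
    exact le_min le_self_add
      (tsub_le_iff_right.1 (le_iSup (fun n => f (n + N) x - R (n + N) x) n))
  rw [← limsup_nat_add _ N]
  calc limsup (fun n => ∫⁻ x, f (n + N) x ∂μ) atTop
      ≤ limsup (fun n => (∫⁻ x, min (f (n + N) x) (D' x) ∂μ) + η) atTop :=
        limsup_le_limsup (.of_forall hsplit)
    _ = limsup (fun n => ∫⁻ x, min (f (n + N) x) (D' x) ∂μ) atTop + η :=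
        limsup_add_const _ _ _ (by isBoundedDefault) (by isBoundedDefault)
    _ ≤ (∫⁻ x, limsup (fun n => f n x) atTop ∂μ) + η := add_le_add_left hfatou _

theorem exists_lintegral_tsub_le {G : α → ℝ≥0∞} (hG : Measurable G) (hGi : ∫⁻ x, G x ∂μ ≠ ⊤)
    {η : ℝ≥0∞} (hη : 0 < η) : ∃ K : ℝ≥0, ∫⁻ x, (G x - K) ∂μ ≤ η := by
  have hlim : Tendsto (fun n : ℕ => ∫⁻ x, (G x - n) ∂μ) atTop (𝓝 (∫⁻ _, 0 ∂μ)) := by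
    refine tendsto_lintegral_of_dominated_convergence G (fun n => hG.sub measurable_const)
      (fun n => .of_forall fun x => tsub_le_self) hGi ?_
    filter_upwards [ae_lt_top hG hGi] with x hx
    obtain ⟨n, hn⟩ := ENNReal.exists_nat_gt hx.ne
    refine tendsto_const_nhds.congr' ?_
    filter_upwards [eventually_ge_atTop n] with k hk
    exact (tsub_eq_zero_of_le (hn.le.trans (Nat.cast_le.2 hk))).symm
  rw [lintegral_zero] at hlim
  obtain ⟨n, hn⟩ := (hlim.eventually_lt_const hη).exists
  exact ⟨n, by simpa using hn.le⟩

theorem exists_mul_ballAvg_le_add {d : ℕ} {Ω : Set (Euc d)} (hΩ : MeasurableSet Ω)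
    {G : Euc d → ℝ≥0∞} (hG : Measurable G) (hGi : ∫⁻ x in Ω, G x ≠ ⊤) (c : ℝ≥0) {η : ℝ≥0∞}
    (hη : 0 < η) :
    ∃ (K : ℝ≥0) (R : ℝ → Euc d → ℝ≥0∞), (∀ ε, Measurable (R ε)) ∧ ∀ ε > 0,
      ∫⁻ x, R ε x ≤ η ∧ ∀ x, c * ballAvg ε (Ω.indicator G) x ≤ K + R ε x := by
  obtain ⟨K, hK⟩ := exists_lintegral_tsub_le (μ := volume.restrict Ω) (hG.const_mul c)
    (by rw [lintegral_const_mul _ hG]; exact ENNReal.mul_ne_top ENNReal.coe_ne_top hGi) hη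
  have hm : Measurable (Ω.indicator fun z => c * G z - K) :=
    ((hG.const_mul c).sub measurable_const).indicator hΩ
  refine ⟨K, fun ε => ballAvg ε (Ω.indicator fun z => c * G z - K),
    fun ε => measurable_ballAvg ε hm, fun ε hε => ⟨?_, fun x => ?_⟩⟩
  · rwa [lintegral_ballAvg hε hm, lintegral_indicator hΩ]
  · have hmul : c * ballAvg ε (Ω.indicator G) x = ballAvg ε (fun z => c * Ω.indicator G z) x := by
      rw [ballAvg, ballAvg, laverage, laverage, lintegral_const_mul _ (hG.indicator hΩ)]
    rw [hmul]
    refine ballAvg_le_add hε (fun z => ?_) x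
    by_cases hz : z ∈ Ω
    · simpa [hz] using le_add_tsub
    · simp [hz]

end ReverseFatou

section KernelMean

variable {d m : ℕ} {Ω : Set (Euc d)} {p : ℝ}

theorem ballAvg_le_rpow {ε : ℝ} (hε : 0 < ε) {f : Euc d → ℝ≥0∞} (hf : Measurable f) (hp : 1 ≤ p)
    (x : Euc d) :
    ballAvg ε f x ≤ ((∫⁻ z, f z ^ p) / volume (ball (0 : Euc d) 1)) ^ (1 / p) *
      ENNReal.ofReal (ε ^ (-(d : ℝ) / p)) := by
  have hp0 : 0 < p := by linarith
  have hscale : ENNReal.ofReal (ε ^ (-(d : ℝ) / p)) = (ENNReal.ofReal (ε ^ d))⁻¹ ^ (1 / p) := by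
    rw [← ENNReal.ofReal_inv_of_pos (by positivity), ENNReal.ofReal_rpow_of_pos (by positivity),
      ← Real.rpow_natCast, ← Real.rpow_neg hε.le, ← Real.rpow_mul hε.le, mul_one_div]
  rw [hscale, ← ENNReal.mul_rpow_of_nonneg _ _ (by positivity), one_div,
    ENNReal.le_rpow_inv_iff hp0]
  calc ballAvg ε f x ^ p ≤ (∫⁻ z in closedBall x ε, f z ^ p) / volume (closedBall (0 : Euc d) ε) :=
        (ballAvg_rpow_le hε hf hp x).trans_eq (ballAvg_eq ..)
    _ ≤ (∫⁻ z, f z ^ p) / volume (closedBall (0 : Euc d) ε) :=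
        ENNReal.div_le_div_right (setLIntegral_le_lintegral _ _) _
    _ = (∫⁻ z, f z ^ p) / volume (ball (0 : Euc d) 1) * (ENNReal.ofReal (ε ^ d))⁻¹ := by
        rw [Measure.addHaar_closedBall _ _ hε.le, finrank_euclideanSpace_fin, div_eq_mul_inv,
          div_eq_mul_inv, ENNReal.mul_inv (.inr measure_ball_lt_top.ne)
          (.inl ENNReal.ofReal_ne_top), mul_assoc, mul_comm (ENNReal.ofReal _)⁻¹]

namespace IsBallKernel

variable {κ : ℝ≥0} {x : Euc d} {ε : ℝ} {k : Euc d → ℝ}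

theorem exists_norm_setIntegral_smul_le (κ : ℝ≥0) (hΩ : MeasurableSet Ω) (hp : 1 ≤ p)
    {V : Euc d → Mat m d} (hV : Measurable V) (hVp : ∫⁻ z in Ω, ‖V z‖ₑ ^ p ≠ ⊤) :
    ∃ Q : ℝ≥0, ∀ {ε}, 0 < ε → ∀ {x k}, IsBallKernel κ x ε k →
      ‖∫ z in Ω, k z • V z‖ ≤ Q * ε ^ (-(d : ℝ) / p) := by
  have hp0 : 0 < p := by linarith
  set N := ∫⁻ z, Ω.indicator (fun z => ‖V z‖ₑ) z ^ p
  have hN : N ≠ ⊤ := by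
    have hpow : (fun z => Ω.indicator (fun z => ‖V z‖ₑ) z ^ p) =
        Ω.indicator fun z => ‖V z‖ₑ ^ p := by
      ext z; by_cases hz : z ∈ Ω <;> simp [hz, hp0]
    rwa [show N = _ from congrArg _ hpow, lintegral_indicator hΩ]
  lift (N / volume (ball (0 : Euc d) 1)) ^ (1 / p) to ℝ≥0 using
    ENNReal.rpow_ne_top_of_nonneg (by positivity)
      (ENNReal.div_ne_top hN (measure_ball_pos _ _ one_pos).ne') with Q hQ
  refine ⟨κ * Q, fun {ε} hε {x k} hk => ?_⟩
  have hle := (hk.enorm_setIntegral_smul_le hε hΩ V).trans (mul_le_mul_right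
    (ballAvg_le_rpow hε (hV.enorm.indicator hΩ) hp x) _)
  rw [← hQ, ← mul_assoc, ← ENNReal.coe_mul, ← ENNReal.ofReal_coe_nnreal,
    ← ENNReal.ofReal_mul (by positivity), ← ofReal_norm] at hle
  exact (ENNReal.ofReal_le_ofReal_iff (by positivity)).1 hle

theorem exists_frobNorm_kernelMean_le (κ : ℝ≥0) (hΩ : MeasurableSet Ω) (hp : 1 ≤ p)
    {V : Euc d → Mat m d} (hV : Measurable V) (hVp : ∫⁻ z in Ω, ‖V z‖ₑ ^ p ≠ ⊤) (G : ℝ≥0) :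
    ∃ M > 1, ∀ {ε}, ε ∈ Ioc (0 : ℝ) 1 → ∀ {x k}, IsBallKernel κ x ε k → ∀ {ζ : Mat m d}, ‖ζ‖ ≤ G →
      frobNorm (kernelMean Ω k V ζ) ≤ M * ε ^ (-(d : ℝ) / p) := by
  obtain ⟨Q, hQ⟩ := exists_norm_setIntegral_smul_le κ hΩ hp hV hVp
  refine ⟨(m * d + 1) * (Q + G) + 2, lt_add_of_nonneg_of_lt (by positivity) one_lt_two,
    fun {ε} hε {x k} hk {ζ} hζ => ?_⟩
  have hone : 1 ≤ ε ^ (-(d : ℝ) / p) := Real.one_le_rpow_of_pos_of_le_one_of_nonpos hε.1 hε.2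
    (div_nonpos_of_nonpos_of_nonneg (by simp) (by linarith))
  have hmass : ‖1 - ∫ z in Ω, k z‖ ≤ 1 := by
    rw [Real.norm_of_nonneg (sub_nonneg.2 hk.setIntegral_le_one)]
    exact sub_le_self _ (setIntegral_nonneg hΩ fun z _ => hk.nonneg z)
  have hζ' : ‖(1 - ∫ z in Ω, k z) • ζ‖ ≤ G * ε ^ (-(d : ℝ) / p) := by
    rw [norm_smul]
    calc ‖1 - ∫ z in Ω, k z‖ * ‖ζ‖ ≤ 1 * G := mul_le_mul hmass hζ (norm_nonneg _) zero_le_one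
      _ ≤ G * ε ^ (-(d : ℝ) / p) := by rw [one_mul]; exact le_mul_of_one_le_right G.2 hone
  calc frobNorm (kernelMean Ω k V ζ) ≤ (m * d + 1) * ‖kernelMean Ω k V ζ‖ :=
        frobNorm_le_mul_norm _
    _ ≤ (m * d + 1) * (Q * ε ^ (-(d : ℝ) / p) + G * ε ^ (-(d : ℝ) / p)) := by
        gcongr
        exact norm_add_le_of_le (hQ hε.1 hk) hζ'
    _ ≤ ((m * d + 1) * (Q + G) + 2) * ε ^ (-(d : ℝ) / p) := by linarith

theorem enorm_add_sub_kernelMean_le (hk : IsBallKernel κ x ε k) (hΩ : MeasurableSet Ω)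
    {H V : Euc d → Mat m d} (hH : IntegrableOn H Ω) (hV : IntegrableOn V Ω) {τ : ℝ} (hτ0 : 0 ≤ τ)
    (hτ : ∀ z ∈ Ω, dist z x ≤ ε → ‖H z - H x‖ ≤ τ) (ξ : Mat m d) :
    ‖H x + ξ - kernelMean Ω k (H + V) (H x)‖ₑ ≤
      ENNReal.ofReal τ + ‖ξ - ∫ z in Ω, k z • V z‖ₑ := by
  have hsplit : H x + ξ - kernelMean Ω k (H + V) (H x) =
      -(∫ z in Ω, k z • (H z - H x)) + (ξ - ∫ z in Ω, k z • V z) := by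
    simp only [kernelMean, Pi.add_apply, smul_add, smul_sub]
    rw [integral_add (hk.integrable_smul hH) (hk.integrable_smul hV),
      integral_sub (hk.integrable_smul hH) (hk.integrable.integrableOn.smul_const _),
      integral_smul_const]
    module
  rw [hsplit]
  refine (enorm_add_le _ _).trans (add_le_add_left ?_ _)
  rw [enorm_neg]
  exact hk.enorm_setIntegral_smul_sub_apply_le hΩ hτ0 hτ

end IsBallKernel

end KernelMean

/-- An integrand satisfying Assumption 1 except possibly the coercivity (a2). -/
structure IsStableIntegrand {d m : ℕ} (Ω : Set (Euc d)) (p : ℝ) (W : Euc d → Mat m d → ℝ≥0∞) :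
    Prop where
  measurable : Measurable (Function.uncurry W)
  ae_convex_lsc : ∀ᵐ x ∂volume.restrict Ω, ConvexENNReal (W x) ∧ LowerSemicontinuous (W x)
  upperGrowth : UpperGrowth Ω p W
  stability : StabilityEstimate Ω p W

theorem Assumption1.isStableIntegrand {d m : ℕ} {Ω : Set (Euc d)} {p : ℝ}
    {W : Euc d → Mat m d → ℝ≥0∞} (hW : Assumption1 Ω p W) : IsStableIntegrand Ω p W :=
  ⟨hW.1, hW.2.1, hW.2.2.2.1, hW.2.2.2.2⟩

namespace IsStableIntegrand

variable {d m : ℕ} {Ω : Set (Euc d)} {p s t : ℝ} {W : Euc d → Mat m d → ℝ≥0∞}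
  {H V : Euc d → Mat m d}

theorem measurable_comp (hW : IsStableIntegrand Ω p W) (hV : Measurable V) :
    Measurable fun x => W x (V x) :=
  hW.measurable.comp (measurable_id.prodMk hV)

theorem exists_eventually_le (hW : IsStableIntegrand Ω p W) (hp : 1 ≤ p) (hΩ : volume Ω ≠ ⊤) :
    ∃ S : Euc d → ℝ≥0∞, Measurable S ∧ ∫⁻ x in Ω, S x ≠ ⊤ ∧
      ∀ᵐ x ∂volume.restrict Ω, ∀ᶠ ξ in 𝓝 (0 : Mat m d), W x ξ ≤ S x := by
  obtain ⟨θ, hθ, S, hS, hSi, hWS⟩ := hW.upperGrowth.exists_near_zero_bound (by linarith) hΩ.lt_top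
    hW.measurable (hW.ae_convex_lsc.mono fun _ => And.right)
  exact ⟨S, hS, hSi.ne, hWS.mono fun x hx => eventually_of_mem (ball_mem_nhds 0 hθ) hx⟩

theorem ae_exists_eventually_le (hW : IsStableIntegrand Ω p W) (hp : 1 ≤ p) (hΩ : volume Ω ≠ ⊤) :
    ∀ᵐ x ∂volume.restrict Ω, ∃ B : ℝ≥0, ∀ᶠ ξ in 𝓝 (0 : Mat m d), W x ξ ≤ B := by
  obtain ⟨S, hS, hSi, hWS⟩ := hW.exists_eventually_le hp hΩ
  filter_upwards [hWS, ae_lt_top hS hSi] with x hx hSx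
  exact ⟨(S x).toNNReal, by simpa [hSx.ne] using hx⟩

theorem lintegral_ne_top_of_smul (hW : IsStableIntegrand Ω p W) (hp : 1 ≤ p) (hΩ : volume Ω ≠ ⊤)
    (hs : 1 < s) (hH : ∫⁻ x in Ω, W x (s • H x) ≠ ⊤) : ∫⁻ x in Ω, W x (H x) ≠ ⊤ := by
  obtain ⟨S, hS, hSi, hWS⟩ := hW.exists_eventually_le hp hΩ
  refine ne_top_of_le_ne_top (ENNReal.add_ne_top.2 ⟨hH, hSi⟩) ?_
  rw [← lintegral_add_right _ hS]
  refine lintegral_mono_ae ?_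
  filter_upwards [hW.ae_convex_lsc, hWS] with x hx hSx
  exact (hx.1.le_smul_add (H x) hs).trans (add_le_add_right hSx.self_of_nhds _)

theorem lintegral_add_smul_le (hW : IsStableIntegrand Ω p W) (hH : Measurable H) (hV : Measurable V)
    (ht0 : 0 ≤ t) (ht1 : t ≤ 1) :
    ∫⁻ x in Ω, W x (H x + t • V x) ≤
      (∫⁻ x in Ω, W x (H x + V x)) + ENNReal.ofReal (1 - t) * ∫⁻ x in Ω, W x (H x) := by
  have hHV : Measurable fun x => H x + V x := hH.add hV
  rw [← lintegral_const_mul _ (hW.measurable_comp hH),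
    ← lintegral_add_left (hW.measurable_comp hHV)]
  refine lintegral_mono_ae ?_
  filter_upwards [hW.ae_convex_lsc] with x hx
  calc W x (H x + t • V x) = W x (t • (H x + V x) + (1 - t) • H x) := by congr 1; module
    _ ≤ ENNReal.ofReal t * W x (H x + V x) + ENNReal.ofReal (1 - t) * W x (H x) :=
        hx.1 _ _ t ht0 ht1
    _ ≤ W x (H x + V x) + ENNReal.ofReal (1 - t) * W x (H x) :=
        add_le_add_left (mul_le_of_le_one_left' (ENNReal.ofReal_le_one.2 ht1)) _

-- Jensen's inequality for the biconjugate, then (a4), which applies because `V ∈ L^p` makes its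
-- means over balls of radius `ε` of size `ε^(-d/p)`.
theorem exists_apply_kernelMean_le (hW : IsStableIntegrand Ω p W) (κ : ℝ≥0) (hp : 1 ≤ p)
    (hΩ : MeasurableSet Ω) (hΩv : volume Ω ≠ ⊤) (hV : Measurable V)
    (hVp : MemLp V (ENNReal.ofReal p) (volume.restrict Ω)) {G : ℝ≥0} (hG : ∀ x ∈ Ω, ‖H x‖ ≤ G) :
    ∃ c : ℝ≥0, ∃ δ > 0, ∃ α : Euc d → ℝ≥0∞, ∫⁻ x in Ω, α x ≠ ⊤ ∧
      ∀ ε, ε ∈ Ioc 0 1 → ε < δ → ∀ᵐ x ∂volume.restrict Ω, ∀ k, IsBallKernel κ x ε k →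
        W x (kernelMean Ω k V (H x)) ≤
          c * (κ * ballAvg ε (Ω.indicator fun z => W z (V z)) x + W x (H x)) + α x := by
  have : IsFiniteMeasure (volume.restrict Ω) := isFiniteMeasure_restrict.2 hΩv
  have hp0 : 0 < p := by linarith
  have hVi : IntegrableOn V Ω := hVp.integrable (by simpa using hp)
  have hVp' : ∫⁻ z in Ω, ‖V z‖ₑ ^ p ≠ ⊤ := by
    simpa [hp0.le] using (lintegral_rpow_enorm_lt_top_of_eLpNorm_lt_top (by simpa using hp0)
      ENNReal.ofReal_ne_top hVp.2).ne
  obtain ⟨M, hM1, hM⟩ := IsBallKernel.exists_frobNorm_kernelMean_le κ hΩ hp hV hVp' G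
  obtain ⟨c, δ, α, -, hδ, hα, hWα⟩ := hW.stability M hM1
  refine ⟨c.toNNReal, δ, hδ, α, hα.ne, fun ε hε hεδ => ?_⟩
  filter_upwards [ae_restrict_mem hΩ, ae_biconj_kernelMean_le
    (hW.ae_convex_lsc.mono fun _ => And.left) (hW.ae_exists_eventually_le hp hΩv) hε.1]
    with x hx hJensen k hk
  calc W x (kernelMean Ω k V (H x))
      ≤ c.toNNReal * biconj (localEssInf Ω W x ε) (kernelMean Ω k V (H x)) + α x :=
        hWα ε hε.1 hεδ x hx _ (hM hε hk (hG x hx))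
    _ ≤ c.toNNReal * ((∫⁻ z in Ω, ENNReal.ofReal (k z) * W z (V z)) + W x (H x)) + α x :=
        add_le_add_left (mul_le_mul_right (hJensen k V hk.nonneg hk.eq_zero
          hk.integrable.integrableOn hk.setIntegral_le_one (hk.integrable_smul hVi) _) _) _
    _ ≤ c.toNNReal * (κ * ballAvg ε (Ω.indicator fun z => W z (V z)) x + W x (H x)) + α x :=
        add_le_add_left (mul_le_mul_right (add_le_add_left
          (hk.setLIntegral_mul_le hε.1 hΩ _) _) _) _

end IsStableIntegrand

section UpperBound

variable {d m : ℕ} {Ω : Set (Euc d)} {p s t : ℝ} {W : Euc d → Mat m d → ℝ≥0∞}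
  {H Dv : Euc d → Mat m d} {v : Euc d → Euc m}

theorem IsAveragedApprox.enorm_smul_add_sub_kernelMean_le {C : ℝ≥0} {ε τ : ℝ} {U : Euc d → Euc m}
    {k : Euc d → Euc d → ℝ} {Y : Euc d → ℝ≥0∞} (h : IsAveragedApprox Ω p C ε τ v Dv U k Y)
    (hΩ : MeasurableSet Ω) (hH : IntegrableOn H Ω) (hDv : IntegrableOn Dv Ω) (hτ0 : 0 ≤ τ)
    {x : Euc d} (hτ : ∀ z ∈ Ω, dist z x ≤ ε → ‖H z - H x‖ ≤ τ) (r : ℝ) :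
    ‖r • (H x + smoothJac U x - kernelMean Ω (k x) (H + Dv) (H x))‖ₑ ≤
      (‖r‖₊ * (1 + C) : ℝ≥0) * (ENNReal.ofReal τ + Y x) := by
  rw [enorm_smul, ENNReal.coe_mul, mul_assoc]
  refine mul_le_mul_right ?_ _
  calc ‖H x + smoothJac U x - kernelMean Ω (k x) (H + Dv) (H x)‖ₑ
      ≤ ENNReal.ofReal τ + ‖smoothJac U x - ∫ z in Ω, k x z • Dv z‖ₑ :=
        (h.isBallKernel x).enorm_add_sub_kernelMean_le hΩ hH hDv hτ0 hτ _
    _ ≤ (ENNReal.ofReal τ + Y x) + C * (ENNReal.ofReal τ + Y x) :=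
        add_le_add le_self_add (h.enorm_smoothJac_sub_le x)
    _ = (1 + C : ℝ≥0) * (ENNReal.ofReal τ + Y x) := by push_cast; ring

/-- A sequence of averaged approximations of `v` whose scales and tolerances tend to zero, whose
tolerances also bound the oscillation of the boundary gradient `H` at the respective scale, and
whose gradients converge almost everywhere. -/
structure IsApproxSeq (Ω : Set (Euc d)) (p : ℝ) (C : ℝ≥0) (H : Euc d → Mat m d) (v : Euc d → Euc m)
    (Dv : Euc d → Mat m d) (ε τ : ℕ → ℝ) (U : ℕ → Euc d → Euc m) (k : ℕ → Euc d → Euc d → ℝ)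
    (Y : ℕ → Euc d → ℝ≥0∞) : Prop where
  isAveragedApprox : ∀ n, IsAveragedApprox Ω p C (ε n) (τ n) v Dv (U n) (k n) (Y n)
  scale_mem : ∀ n, ε n ∈ Ioc 0 1
  tendsto_scale : Tendsto ε atTop (𝓝 0)
  tolerance_pos : ∀ n, 0 < τ n
  tendsto_tolerance : Tendsto τ atTop (𝓝 0)
  norm_sub_le : ∀ n, ∀ x ∈ Ω, ∀ z ∈ Ω, dist z x ≤ ε n → ‖H z - H x‖ ≤ τ n
  ae_tendsto : ∀ᵐ x ∂volume.restrict Ω, Tendsto (fun n => smoothJac (U n) x) atTop (𝓝 (Dv x))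

theorem exists_pos_forall_norm_sub_le (hΩb : Bornology.IsBounded Ω) (hH : Continuous H) {τ : ℝ}
    (hτ : 0 < τ) : ∃ δ > 0, ∀ x ∈ Ω, ∀ z ∈ Ω, dist z x < δ → ‖H z - H x‖ ≤ τ := by
  obtain ⟨δ, hδ, h⟩ := Metric.uniformContinuousOn_iff_le.1
    (hΩb.isCompact_closure.uniformContinuousOn_of_continuous hH.continuousOn) τ hτ
  refine ⟨δ, hδ, fun x hx z hz hzx => ?_⟩
  rw [← dist_eq_norm]
  exact h z (subset_closure hz) x (subset_closure hx) hzx.le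

theorem tendsto_zero_of_le_mul_ofReal {f : ℕ → ℝ≥0∞} {C : ℝ≥0} {τ : ℕ → ℝ}
    (hτ : Tendsto τ atTop (𝓝 0)) (h : ∀ n, f n ≤ C * ENNReal.ofReal (τ n)) :
    Tendsto f atTop (𝓝 0) := by
  refine tendsto_of_tendsto_of_tendsto_of_le_of_le tendsto_const_nhds ?_ (fun _ => zero_le) h
  simpa using ENNReal.Tendsto.const_mul (ENNReal.tendsto_ofReal hτ) (.inr ENNReal.coe_ne_top)

theorem MemW1p0.exists_isApproxSeq (hΩ : IsOpen Ω) (hΩb : Bornology.IsBounded Ω)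
    (hΩl : HasLipschitzBoundary Ω) (hp : 1 ≤ p) (hH : Continuous H) (hv : Measurable v)
    (hDv : Measurable Dv) (h : MemW1p0 Ω (ENNReal.ofReal p) v Dv) :
    ∃ C ε τ U k Y, IsApproxSeq Ω p C H v Dv ε τ U k Y := by
  obtain ⟨C, hC⟩ := h.exists_isAveragedApprox hΩ hΩb hΩl hp hv hDv
  set τ : ℕ → ℝ := fun n => 1 / (n + 1)
  have hτ0 (n : ℕ) : 0 < τ n := by positivity
  have hτ1 (n : ℕ) : τ n ≤ 1 := div_le_one_of_le₀ (by simp) (by positivity)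
  have hτ : Tendsto τ atTop (𝓝 0) := tendsto_one_div_add_atTop_nhds_zero_nat
  choose δ hδ0 hδ using fun n => exists_pos_forall_norm_sub_le hΩb hH (hτ0 n)
  choose ε hε U k Y hU using fun n => hC (τ n) (hτ0 n) (min (τ n) (δ n))
    ⟨lt_min (hτ0 n) (hδ0 n), (min_le_left _ _).trans (hτ1 n)⟩
  have hετ (n : ℕ) : ε n ≤ τ n := (hε n).2.le.trans (min_le_left _ _)
  have hlim := tendsto_zero_of_le_mul_ofReal hτ fun n => (hU n).eLpNorm_smoothJac_sub_le
  obtain ⟨φ, hφ, hae⟩ := (tendstoInMeasure_of_tendsto_eLpNorm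
    (ENNReal.ofReal_pos.2 (by linarith)).ne' (fun n =>
      (continuous_smoothJac (hU n).isCcSmooth.contDiff_one).aestronglyMeasurable)
    hDv.aestronglyMeasurable hlim).exists_seq_tendsto_ae
  exact ⟨C, ε ∘ φ, τ ∘ φ, U ∘ φ, k ∘ φ, Y ∘ φ, fun n => hU _,
    fun n => ⟨(hε _).1, (hετ _).trans (hτ1 _)⟩,
    (squeeze_zero (fun n => (hε n).1.le) hετ hτ).comp hφ.tendsto_atTop, fun n => hτ0 _,
    hτ.comp hφ.tendsto_atTop, fun n x hx z hz hzx => hδ _ x hx z hz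
      (hzx.trans_lt ((hε _).2.trans_le (min_le_right _ _))), hae⟩

namespace IsApproxSeq

variable {C : ℝ≥0} {ε τ : ℕ → ℝ} {U : ℕ → Euc d → Euc m} {k : ℕ → Euc d → Euc d → ℝ}
  {Y : ℕ → Euc d → ℝ≥0∞}

-- `H + t Du` is a convex combination of a mean of `H + Dv` over a small ball, of `s H` and of a
-- large multiple of the error made by that mean.
theorem exists_apply_add_smul_le (hU : IsApproxSeq Ω p C H v Dv ε τ U k Y)
    (hW : IsStableIntegrand Ω p W) (hp : 1 ≤ p) (hΩ : MeasurableSet Ω) (hΩv : volume Ω ≠ ⊤)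
    (hH : Measurable H) {G : ℝ≥0} (hG : ∀ x ∈ Ω, ‖H x‖ ≤ G) (hs : 1 < s)
    (hWH : ∫⁻ x in Ω, W x (s • H x) ≠ ⊤) (hDv : Measurable Dv)
    (hDvp : MemLp Dv (ENNReal.ofReal p) (volume.restrict Ω)) (ht0 : 0 ≤ t) (ht1 : t < 1) :
    ∃ (c : ℝ≥0) (D : Euc d → ℝ≥0∞) (R : ℕ → Euc d → ℝ≥0∞), ∫⁻ x in Ω, D x ≠ ⊤ ∧
      (∀ n, Measurable (R n)) ∧ Tendsto (fun n => ∫⁻ x in Ω, R n x) atTop (𝓝 0) ∧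
      ∀ᶠ n in atTop, ∀ᵐ x ∂volume.restrict Ω, W x (H x + t • smoothJac (U n) x) ≤
        c * ballAvg (ε n) (Ω.indicator fun z => W z (H z + Dv z)) x + D x + R n x := by
  have : IsFiniteMeasure (volume.restrict Ω) := isFiniteMeasure_restrict.2 hΩv
  have hp' : 1 ≤ ENNReal.ofReal p := by simpa using hp
  have hHp : MemLp H (ENNReal.ofReal p) (volume.restrict Ω) :=
    .of_bound hH.aestronglyMeasurable G ((ae_restrict_mem hΩ).mono hG)
  set r := t / ((1 - t) * (1 - s⁻¹))
  obtain ⟨c, δ, hδ, α, hα, hmean⟩ :=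
    hW.exists_apply_kernelMean_le C hp hΩ hΩv (hH.add hDv) (hHp.add hDvp) hG
  obtain ⟨S, hS, hSi, R, hR, hRlim, herr⟩ := hW.upperGrowth.exists_slabError_bound hp hΩv
    hW.measurable (hW.ae_convex_lsc.mono fun _ => And.right) (‖r‖₊ * (1 + C)) hU.scale_mem
    hU.tolerance_pos hU.tendsto_tolerance fun n => (hU.isAveragedApprox n).isSlabError
  have hWHm := hW.measurable_comp hH
  have hWsHm : Measurable fun x => W x (s • H x) := hW.measurable_comp (hH.const_smul s)
  refine ⟨c * C, fun x => c * W x (H x) + W x (s • H x) + S x + α x, R, ?_, hR, hRlim, ?_⟩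
  · have hD₀ : Measurable fun x => c * W x (H x) + W x (s • H x) + S x :=
      ((hWHm.const_mul _).add hWsHm).add hS
    have hWH' := hW.lintegral_ne_top_of_smul hp hΩv hs hWH
    rw [lintegral_add_left hD₀, lintegral_add_right _ hS, lintegral_add_right _ hWsHm,
      lintegral_const_mul _ hWHm]
    finiteness
  filter_upwards [herr, hU.tendsto_scale.eventually_lt_const hδ] with n herr_n hn
  filter_upwards [herr_n, hmean (ε n) (hU.scale_mem n) hn, hW.ae_convex_lsc, ae_restrict_mem hΩ]
    with x herr_x hmean_x hconv hx
  refine (hconv.1.apply_add_smul_le hs ht0 ht1 (H x) _ _).trans ((add_le_add (add_le_add_left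
    (hmean_x _ ((hU.isAveragedApprox n).isBallKernel x)) _) (herr_x _
      ((hU.isAveragedApprox n).enorm_smul_add_sub_kernelMean_le hΩ (hHp.integrable hp')
        (hDvp.integrable hp') (hU.tolerance_pos n).le (hU.norm_sub_le n x hx) r))).trans_eq ?_)
  simp only [Pi.add_apply, ENNReal.coe_mul]
  ring

end IsApproxSeq

end UpperBound

section Recovery

variable {d m : ℕ} {Ω : Set (Euc d)} {p s t : ℝ} {W : Euc d → Mat m d → ℝ≥0∞}
  {H Dv : Euc d → Mat m d} {v : Euc d → Euc m}

namespace IsApproxSeq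

variable {C : ℝ≥0} {ε τ : ℕ → ℝ} {U : ℕ → Euc d → Euc m} {k : ℕ → Euc d → Euc d → ℝ}
  {Y : ℕ → Euc d → ℝ≥0∞}

theorem ae_limsup_apply_add_smul_le (hU : IsApproxSeq Ω p C H v Dv ε τ U k Y)
    (hW : IsStableIntegrand Ω p W) (hp : 1 ≤ p) (hΩv : volume Ω ≠ ⊤) (hH : Measurable H)
    (hs : 1 < s) (hWH : ∫⁻ x in Ω, W x (s • H x) ≠ ⊤) (hDv : Measurable Dv)
    (hWv : ∫⁻ x in Ω, W x (H x + Dv x) ≠ ⊤) (ht0 : 0 ≤ t) (ht1 : t < 1) :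
    ∀ᵐ x ∂volume.restrict Ω, limsup (fun n => W x (H x + t • smoothJac (U n) x)) atTop ≤
      W x (H x + t • Dv x) := by
  filter_upwards [hW.ae_convex_lsc, hW.ae_exists_eventually_le hp hΩv, hU.ae_tendsto,
    ae_lt_top (hW.measurable_comp (hH.const_smul s)) hWH,
    ae_lt_top (hW.measurable_comp (hH.add hDv)) hWv] with x hconv ⟨B, hB⟩ hlim hsH hHv
  have husc := hconv.1.upperSemicontinuousAt_add_smul hs ht0 ht1 ENNReal.coe_ne_top hB hsH.ne hHv.ne
  exact ((hlim.const_smul t).const_add (H x)).limsup_comp_le_limsup.trans husc.limsup_le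

theorem limsup_lintegral_add_smul_le (hU : IsApproxSeq Ω p C H v Dv ε τ U k Y)
    (hW : IsStableIntegrand Ω p W) (hp : 1 ≤ p) (hΩ : MeasurableSet Ω) (hΩv : volume Ω ≠ ⊤)
    (hH : Measurable H) {G : ℝ≥0} (hG : ∀ x ∈ Ω, ‖H x‖ ≤ G) (hs : 1 < s)
    (hWH : ∫⁻ x in Ω, W x (s • H x) ≠ ⊤) (hDv : Measurable Dv)
    (hDvp : MemLp Dv (ENNReal.ofReal p) (volume.restrict Ω))
    (hWv : ∫⁻ x in Ω, W x (H x + Dv x) ≠ ⊤) (ht0 : 0 ≤ t) (ht1 : t < 1) :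
    limsup (fun n => ∫⁻ x in Ω, W x (H x + t • smoothJac (U n) x)) atTop ≤
      ∫⁻ x in Ω, W x (H x + t • Dv x) := by
  obtain ⟨c, D, R, hD, hR, hRlim, hle⟩ :=
    hU.exists_apply_add_smul_le hW hp hΩ hΩv hH hG hs hWH hDv hDvp ht0 ht1
  refine (limsup_lintegral_le_of_le_add_small (fun n => hW.measurable_comp (hH.add
    ((continuous_smoothJac (hU.isAveragedApprox n).isCcSmooth.contDiff_one).measurable.const_smul
      t))) fun η hη => ?_).trans (lintegral_mono_ae
        (hU.ae_limsup_apply_add_smul_le hW hp hΩv hH hs hWH hDv hWv ht0 ht1))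
  have hη2 : (0 : ℝ≥0∞) < η / 2 := ENNReal.half_pos (by exact_mod_cast hη.ne')
  obtain ⟨K, A, hA, hKA⟩ :=
    exists_mul_ballAvg_le_add hΩ (hW.measurable_comp (hH.add hDv)) hWv c hη2
  refine ⟨fun x => K + D x, fun n x => A (ε n) x + R n x, ?_, fun n => (hA _).add (hR n), ?_⟩
  · rw [lintegral_add_left measurable_const, setLIntegral_const]
    finiteness
  filter_upwards [hle, hRlim.eventually_lt_const hη2] with n hn hRn
  obtain ⟨hAn, hKAn⟩ := hKA (ε n) (hU.scale_mem n).1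
  refine ⟨?_, hn.mono fun x hx => hx.trans ?_⟩
  · rw [lintegral_add_left (hA _), ← ENNReal.add_halves (η : ℝ≥0∞)]
    exact add_le_add ((setLIntegral_le_lintegral _ _).trans hAn) hRn.le
  · calc _ ≤ K + A (ε n) x + D x + R n x := by gcongr; exact hKAn x
      _ = K + D x + (A (ε n) x + R n x) := by ring

end IsApproxSeq

theorem MemW1p0.exists_lintegral_add_smul_le (h : MemW1p0 Ω (ENNReal.ofReal p) v Dv)
    (hΩ : IsOpen Ω) (hΩb : Bornology.IsBounded Ω) (hΩl : HasLipschitzBoundary Ω) (hp : 1 ≤ p)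
    (hW : IsStableIntegrand Ω p W) (hH : Continuous H) (hs : 1 < s)
    (hWH : ∫⁻ x in Ω, W x (s • H x) ≠ ⊤) (hv : Measurable v) (hDv : Measurable Dv)
    (hWv : ∫⁻ x in Ω, W x (H x + Dv x) ≠ ⊤) (ht0 : 0 ≤ t) (ht1 : t < 1) {η : ℝ≥0∞} (hη : 0 < η) :
    ∃ U, IsCcSmooth Ω U ∧
      eLpNorm (U - v) (ENNReal.ofReal p) (volume.restrict Ω) ≤ η ∧
      eLpNorm (smoothJac U - Dv) (ENNReal.ofReal p) (volume.restrict Ω) ≤ η ∧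
      ∫⁻ x in Ω, W x (H x + t • smoothJac U x) ≤ (∫⁻ x in Ω, W x (H x + t • Dv x)) + η := by
  have hΩv : volume Ω ≠ ⊤ := hΩb.measure_lt_top.ne
  obtain ⟨C, ε, τ, U, k, Y, hU⟩ := h.exists_isApproxSeq hΩ hΩb hΩl hp hH hv hDv
  obtain ⟨G, hG⟩ := hΩb.isCompact_closure.exists_bound_of_continuousOn hH.continuousOn
  have hlimsup := hU.limsup_lintegral_add_smul_le hW hp hΩ.measurableSet hΩv hH.measurable
    (G := G.toNNReal) (fun x hx => (hG x (subset_closure hx)).trans (Real.le_coe_toNNReal G)) hs hWH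
    hDv h.1.2.1 hWv ht0 ht1
  have hfin : ∫⁻ x in Ω, W x (H x + t • Dv x) ≠ ⊤ := by
    have hWH' := hW.lintegral_ne_top_of_smul hp hΩv hs hWH
    exact ne_top_of_le_ne_top (by finiteness)
      (hW.lintegral_add_smul_le hH.measurable hDv ht0 ht1.le)
  have hsmall {f : ℕ → ℝ≥0∞} (hf : ∀ n, f n ≤ C * ENNReal.ofReal (τ n)) : ∀ᶠ n in atTop, f n < η :=
    (tendsto_zero_of_le_mul_ofReal hU.tendsto_tolerance hf).eventually_lt_const hη
  obtain ⟨n, hWn, hvn, hDvn⟩ := ((eventually_lt_of_limsup_lt (hlimsup.trans_lt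
    (ENNReal.lt_add_right hfin hη.ne'))).and ((hsmall fun n =>
      (hU.isAveragedApprox n).eLpNorm_sub_le).and (hsmall fun n =>
        (hU.isAveragedApprox n).eLpNorm_smoothJac_sub_le))).exists
  exact ⟨U n, (hU.isAveragedApprox n).isCcSmooth, hvn.le, hDvn.le, hWn.le⟩

end Recovery

section Convergence

variable {d m : ℕ} {Ω : Set (Euc d)} {p s t : ℝ} {W : Euc d → Mat m d → ℝ≥0∞}
  {H Dv : Euc d → Mat m d} {v : Euc d → Euc m}

theorem smoothJac_const_smul {U : Euc d → Euc m} (hU : Differentiable ℝ U) (t : ℝ) :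
    smoothJac (t • U) = t • smoothJac U := by
  ext x i j
  simp only [smoothJac, Pi.smul_apply]
  rw [fderiv_const_smul (hU x)]
  simp

theorem IsCcSmooth.const_smul {U : Euc d → Euc m} (hU : IsCcSmooth Ω U) (t : ℝ) :
    IsCcSmooth Ω (t • U) := by
  have htsupp : tsupport (t • U) ⊆ tsupport U :=
    closure_mono (Function.support_const_smul_subset t U)
  exact ⟨hU.1.const_smul t, hU.2.1.mono (Function.support_const_smul_subset t U),
    htsupp.trans hU.2.2⟩

theorem eLpNorm_smul_sub_le {α E : Type*} [MeasurableSpace α] [NormedAddCommGroup E]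
    [NormedSpace ℝ E] {μ : Measure α} {p : ℝ≥0∞} (hp : 1 ≤ p) {t : ℝ} (ht0 : 0 ≤ t) (ht1 : t ≤ 1)
    {f g : α → E} (hf : AEStronglyMeasurable f μ) (hg : AEStronglyMeasurable g μ) :
    eLpNorm (t • f - g) p μ ≤ eLpNorm (f - g) p μ + ENNReal.ofReal (1 - t) * eLpNorm g p μ := by
  have ht : ‖t‖ₑ ≤ 1 := by rwa [Real.enorm_of_nonneg ht0, ENNReal.ofReal_le_one]
  calc eLpNorm (t • f - g) p μ = eLpNorm (t • (f - g) - (1 - t) • g) p μ := by congr 1; module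
    _ ≤ eLpNorm (t • (f - g)) p μ + eLpNorm ((1 - t) • g) p μ :=
        eLpNorm_sub_le ((hf.sub hg).const_smul t) (hg.const_smul _) hp
    _ = ‖t‖ₑ * eLpNorm (f - g) p μ + ENNReal.ofReal (1 - t) * eLpNorm g p μ := by
        rw [eLpNorm_const_smul, eLpNorm_const_smul, Real.enorm_of_nonneg (sub_nonneg.2 ht1)]
    _ ≤ eLpNorm (f - g) p μ + ENNReal.ofReal (1 - t) * eLpNorm g p μ :=
        add_le_add_left (mul_le_of_le_one_left' ht) _

theorem exists_mem_Ioo_ofReal_one_sub_mul_le {Q η : ℝ≥0∞} (hQ : Q ≠ ⊤) (hη : 0 < η) :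
    ∃ t ∈ Ioo (0 : ℝ) 1, ENNReal.ofReal (1 - t) * Q ≤ η := by
  have hcont : Continuous fun t : ℝ => ENNReal.ofReal (1 - t) * Q :=
    (ENNReal.continuous_mul_const hQ).comp (ENNReal.continuous_ofReal.comp (by fun_prop))
  have hlim : Tendsto (fun t : ℝ => ENNReal.ofReal (1 - t) * Q) (𝓝[<] 1) (𝓝 0) := by
    simpa using (hcont.tendsto 1).mono_left nhdsWithin_le_nhds
  obtain ⟨t, ht, hle⟩ :=
    (Eventually.and (Ioo_mem_nhdsLT one_pos) (hlim.eventually_lt_const hη)).exists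
  exact ⟨t, ht, hle.le⟩

theorem MemW1p0.exists_lintegral_add_le (h : MemW1p0 Ω (ENNReal.ofReal p) v Dv)
    (hΩ : IsOpen Ω) (hΩb : Bornology.IsBounded Ω) (hΩl : HasLipschitzBoundary Ω) (hp : 1 ≤ p)
    (hW : IsStableIntegrand Ω p W) (hH : Continuous H) (hs : 1 < s)
    (hWH : ∫⁻ x in Ω, W x (s • H x) ≠ ⊤) (hv : Measurable v) (hDv : Measurable Dv)
    (hWv : ∫⁻ x in Ω, W x (H x + Dv x) ≠ ⊤) {η : ℝ≥0∞} (hη : 0 < η) :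
    ∃ U, IsCcSmooth Ω U ∧
      eLpNorm (U - v) (ENNReal.ofReal p) (volume.restrict Ω) ≤ η ∧
      eLpNorm (smoothJac U - Dv) (ENNReal.ofReal p) (volume.restrict Ω) ≤ η ∧
      ∫⁻ x in Ω, W x (H x + smoothJac U x) ≤ (∫⁻ x in Ω, W x (H x + Dv x)) + η := by
  have hp' : 1 ≤ ENNReal.ofReal p := by simpa using hp
  have hη2 : 0 < η / 2 := ENNReal.half_pos hη.ne'
  have hWH' := hW.lintegral_ne_top_of_smul hp hΩb.measure_lt_top.ne hs hWH
  obtain ⟨t, ⟨ht0, ht1⟩, htQ⟩ := exists_mem_Ioo_ofReal_one_sub_mul_le (ENNReal.add_ne_top.2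
    ⟨ENNReal.add_ne_top.2 ⟨h.1.1.eLpNorm_ne_top, h.1.2.1.eLpNorm_ne_top⟩, hWH'⟩) hη2
  rw [mul_add, mul_add] at htQ
  obtain ⟨U, hU, hUv, hUDv, hWU⟩ := h.exists_lintegral_add_smul_le hΩ hΩb hΩl hp hW hH hs hWH hv hDv
    hWv ht0.le ht1 hη2
  have hUc := hU.contDiff_one
  refine ⟨t • U, hU.const_smul t, ?_, ?_, ?_⟩
  · rw [← ENNReal.add_halves η]
    exact (eLpNorm_smul_sub_le hp' ht0.le ht1.le hUc.continuous.aestronglyMeasurable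
      hv.aestronglyMeasurable).trans
      (add_le_add hUv ((le_self_add.trans le_self_add).trans htQ))
  · rw [← ENNReal.add_halves η, smoothJac_const_smul (hUc.differentiable one_ne_zero)]
    exact (eLpNorm_smul_sub_le hp' ht0.le ht1.le (continuous_smoothJac hUc).aestronglyMeasurable
      hDv.aestronglyMeasurable).trans
      (add_le_add hUDv ((le_add_self.trans le_self_add).trans htQ))
  · rw [smoothJac_const_smul (hUc.differentiable one_ne_zero), ← ENNReal.add_halves η, ← add_assoc]
    exact hWU.trans (add_le_add_left ((hW.lintegral_add_smul_le hH.measurable hDv ht0.le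
      ht1.le).trans (add_le_add_right (le_add_self.trans htQ) _)) _)

theorem lintegral_le_liminf_of_tendstoInMeasure {α E : Type*} [MeasurableSpace α] {μ : Measure α}
    [PseudoEMetricSpace E] {F : α → E → ℝ≥0∞} (hF : ∀ᵐ x ∂μ, LowerSemicontinuous (F x))
    {f : ℕ → α → E} (hFf : ∀ n, Measurable fun x => F x (f n x)) {g : α → E}
    (hfg : TendstoInMeasure μ f atTop g) :
    ∫⁻ x, F x (g x) ∂μ ≤ liminf (fun n => ∫⁻ x, F x (f n x) ∂μ) atTop := by
  obtain ⟨φ, hlim, hφ⟩ := exists_seq_tendsto_liminf (f := atTop)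
    (u := fun n => ∫⁻ x, F x (f n x) ∂μ)
  obtain ⟨ψ, hψ, hae⟩ := (hfg.comp hφ).exists_seq_tendsto_ae
  calc ∫⁻ x, F x (g x) ∂μ ≤ ∫⁻ x, liminf (fun n => F x (f (φ (ψ n)) x)) atTop ∂μ := by
        refine lintegral_mono_ae ?_
        filter_upwards [hF, hae] with x hFx hx
        exact (LowerSemicontinuousAt.le_liminf (hFx (g x))).trans (hx.liminf_le_liminf_comp)
    _ ≤ liminf (fun n => ∫⁻ x, F x (f (φ (ψ n)) x) ∂μ) atTop := lintegral_liminf_le fun n => hFf _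
    _ = liminf (fun n => ∫⁻ x, F x (f n x) ∂μ) atTop :=
        (hlim.comp hψ.tendsto_atTop).liminf_eq

theorem IsStableIntegrand.tendsto_lintegral_of_limsup_le (hW : IsStableIntegrand Ω p W)
    (hp : 1 ≤ p) (hH : Measurable H) (hDv : Measurable Dv) {φ : ℕ → Euc d → Euc m}
    (hφ : ∀ n, IsCcSmooth Ω (φ n))
    (hφv : TendstoW1p Ω (ENNReal.ofReal p) φ (fun n => smoothJac (φ n)) v Dv)
    (hlimsup : limsup (fun n => ∫⁻ x in Ω, W x (H x + smoothJac (φ n) x)) atTop ≤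
      ∫⁻ x in Ω, W x (H x + Dv x)) :
    Tendsto (fun n => ∫⁻ x in Ω, W x (H x + smoothJac (φ n) x)) atTop
      (𝓝 (∫⁻ x in Ω, W x (H x + Dv x))) := by
  have hφm (n : ℕ) : Measurable (smoothJac (φ n)) :=
    (continuous_smoothJac (hφ n).contDiff_one).measurable
  have hmeas := tendstoInMeasure_of_tendsto_eLpNorm (ENNReal.ofReal_pos.2 (by linarith)).ne'
    (fun n => (hφm n).aestronglyMeasurable) hDv.aestronglyMeasurable hφv.2
  exact tendsto_of_le_liminf_of_limsup_le
    (lintegral_le_liminf_of_tendstoInMeasure (F := fun x ξ => W x (H x + ξ))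
      (hW.ae_convex_lsc.mono fun x hx => LowerSemicontinuous.comp hx.2 (continuous_const_add _))
      (fun n => hW.measurable_comp (hH.add (hφm n))) hmeas) hlimsup

theorem MemW1p0.exists_tendsto_lintegral (h : MemW1p0 Ω (ENNReal.ofReal p) v Dv)
    (hΩ : IsOpen Ω) (hΩb : Bornology.IsBounded Ω) (hΩl : HasLipschitzBoundary Ω) (hp : 1 ≤ p)
    (hW : IsStableIntegrand Ω p W) (hH : Continuous H) (hs : 1 < s)
    (hWH : ∫⁻ x in Ω, W x (s • H x) ≠ ⊤) (hv : Measurable v) (hDv : Measurable Dv) :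
    ∃ φ : ℕ → Euc d → Euc m, (∀ n, IsCcSmooth Ω (φ n)) ∧
      TendstoW1p Ω (ENNReal.ofReal p) φ (fun n => smoothJac (φ n)) v Dv ∧
      Tendsto (fun n => ∫⁻ x in Ω, W x (H x + smoothJac (φ n) x)) atTop
        (𝓝 (∫⁻ x in Ω, W x (H x + Dv x))) := by
  by_cases hWv : ∫⁻ x in Ω, W x (H x + Dv x) = ⊤
  · obtain ⟨-, w, hw, hwv⟩ := h
    exact ⟨w, hw, hwv, hW.tendsto_lintegral_of_limsup_le hp hH.measurable hDv hw hwv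
      (hWv ▸ le_top)⟩
  set η : ℕ → ℝ≥0∞ := fun n => (n + 1 : ℝ≥0∞)⁻¹
  have hη : Tendsto η atTop (𝓝 0) := by
    simpa [η] using (tendsto_add_atTop_iff_nat 1).2 ENNReal.tendsto_inv_nat_nhds_zero
  choose φ hφ hφv hφDv hWφ using fun n =>
    h.exists_lintegral_add_le hΩ hΩb hΩl hp hW hH hs hWH hv hDv hWv (η := η n) (by simp [η])
  have hφlim : TendstoW1p Ω (ENNReal.ofReal p) φ (fun n => smoothJac (φ n)) v Dv :=
    ⟨tendsto_of_tendsto_of_tendsto_of_le_of_le tendsto_const_nhds hη (fun _ => zero_le) hφv,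
      tendsto_of_tendsto_of_tendsto_of_le_of_le tendsto_const_nhds hη (fun _ => zero_le) hφDv⟩
  refine ⟨φ, hφ, hφlim, hW.tendsto_lintegral_of_limsup_le hp hH.measurable hDv hφ hφlim ?_⟩
  refine (limsup_le_limsup (Eventually.of_forall hWφ)).trans_eq ?_
  simpa using (hη.const_add (∫⁻ x in Ω, W x (H x + Dv x))).limsup_eq

theorem MemW1p.congr_ae {q : ℝ≥0∞} {u u' : Euc d → Euc m} {Du Du' : Euc d → Mat m d}
    (h : MemW1p Ω q u Du) (hu : u =ᵐ[volume.restrict Ω] u') (hDu : Du =ᵐ[volume.restrict Ω] Du') :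
    MemW1p Ω q u' Du' := by
  refine ⟨(memLp_congr_ae hu).1 h.1, (memLp_congr_ae hDu).1 h.2.1, fun φ hφ hφc hφΩ i j => ?_⟩
  refine ((integral_congr_ae ?_).trans (h.2.2 φ hφ hφc hφΩ i j)).trans
    (congrArg _ (integral_congr_ae ?_))
  · exact hu.mono fun x hx => by simp only [hx]
  · exact hDu.mono fun x hx => by simp only [hx]

theorem TendstoW1p.congr_ae {q : ℝ≥0∞} {w : ℕ → Euc d → Euc m} {Dw : ℕ → Euc d → Mat m d}
    {u u' : Euc d → Euc m} {Du Du' : Euc d → Mat m d} (h : TendstoW1p Ω q w Dw u Du)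
    (hu : u =ᵐ[volume.restrict Ω] u') (hDu : Du =ᵐ[volume.restrict Ω] Du') :
    TendstoW1p Ω q w Dw u' Du' :=
  ⟨h.1.congr fun _ => eLpNorm_congr_ae ((EventuallyEq.refl _ _).sub hu),
    h.2.congr fun _ => eLpNorm_congr_ae ((EventuallyEq.refl _ _).sub hDu)⟩

end Convergence

theorem approximation_compact_support_general {d m : ℕ} {Ω : Set (Euc d)} (hΩ : IsOpen Ω)
    (hΩb : Bornology.IsBounded Ω) (hΩl : HasLipschitzBoundary Ω) {p : ℝ} (hp : 1 ≤ p)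
    {W : Euc d → Mat m d → ℝ≥0∞} (hW : IsStableIntegrand Ω p W) {H : Euc d → Mat m d}
    (hH : Continuous H) {s : ℝ} (hs : 1 < s) (hWH : ∫⁻ x in Ω, W x (s • H x) ≠ ⊤)
    {v : Euc d → Euc m} {Dv : Euc d → Mat m d} (h : MemW1p0 Ω (ENNReal.ofReal p) v Dv) :
    ∃ φ : ℕ → Euc d → Euc m, (∀ n, IsCcSmooth Ω (φ n)) ∧
      TendstoW1p Ω (ENNReal.ofReal p) φ (fun n => smoothJac (φ n)) v Dv ∧
      Tendsto (fun n => ∫⁻ x in Ω, W x (H x + smoothJac (φ n) x)) atTop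
        (𝓝 (∫⁻ x in Ω, W x (H x + Dv x))) := by
  obtain ⟨hmem, w, hw, hwv⟩ := h
  obtain ⟨hv, hDv, -⟩ := id hmem
  have hae := hv.1.ae_eq_mk
  have hDae := hDv.1.ae_eq_mk
  have hmk : MemW1p0 Ω (ENNReal.ofReal p) (hv.1.mk v) (hDv.1.mk Dv) :=
    ⟨hmem.congr_ae hae hDae, w, hw, hwv.congr_ae hae hDae⟩
  obtain ⟨φ, hφ, hφv, hWφ⟩ := hmk.exists_tendsto_lintegral hΩ hΩb hΩl hp hW hH hs hWH
    hv.1.stronglyMeasurable_mk.measurable hDv.1.stronglyMeasurable_mk.measurable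
  refine ⟨φ, hφ, hφv.congr_ae hae.symm hDae.symm, ?_⟩
  rwa [lintegral_congr_ae (hDae.mono fun x hx => by rw [hx])]

/-- **Lemma 3.4.** Let `Ω ⊂ ℝ^d` be a bounded open set with Lipschitz
boundary, let `W : Ω × ℝ^{m×d} → [0,+∞]` satisfy Assumption 1, and let `g ∈ C_c^1(ℝ^d)^m`
be such that `∫_Ω W(x, s Dg) dx < ∞` for some `s > 1`. Then for any
`u = g + v ∈ g + W_0^{1,p}(Ω)^m` there is a sequence `u_n = g + φ_n ∈ g + C_c^∞(Ω)^m`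
with `u_n → u` strongly in `W^{1,p}(Ω)^m` and `∫_Ω W(x, Du_n) dx → ∫_Ω W(x, Du) dx`. -/
theorem approximation_compact_support
    (d m : ℕ) (Ω : Set (Euc d)) (hΩo : IsOpen Ω) (hΩb : Bornology.IsBounded Ω)
    (hΩl : HasLipschitzBoundary Ω)
    (p : ℝ) (hp1 : 1 ≤ p)
    (W : Euc d → Mat m d → ℝ≥0∞)
    (hW : Assumption1 Ω p W)
    (g : Euc d → Euc m) (hg1 : ContDiff ℝ 1 g) (hgc : HasCompactSupport g)
    (hgW : ∃ s : ℝ, 1 < s ∧ (∫⁻ x in Ω, W x (s • smoothJac g x)) < ⊤) :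
    ∀ (v : Euc d → Euc m) (Dv : Euc d → Mat m d),
      MemW1p0 Ω (ENNReal.ofReal p) v Dv →
      ∃ φ : ℕ → Euc d → Euc m, (∀ n, IsCcSmooth Ω (φ n)) ∧
        TendstoW1p Ω (ENNReal.ofReal p) φ (fun n => smoothJac (φ n)) v Dv ∧
        Tendsto (fun n => ∫⁻ x in Ω, W x (smoothJac g x + smoothJac (φ n) x)) atTop
          (𝓝 (∫⁻ x in Ω, W x (smoothJac g x + Dv x))) := by
  intro v Dv h
  obtain ⟨s, hs, hWs⟩ := hgW
  exact approximation_compact_support_general hΩo hΩb hΩl hp1 hW.isStableIntegrand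
    (continuous_smoothJac hg1) hs hWs.ne h

end
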